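/- arXiv:1606.07850 — 11 statements merged into one kernel-verified Lean document; each statement's English description precedes it below -/
import Mathlib

section
/- Let b > 0, let l ≥ -1/2 be real, and let f ∈ C²([0,b]). Define g(x) = x^{-l}/(2^{l+1/2} Γ(l+3/2)) · ∫₀ˣ (x² - s²)^l (f(s) - f'(0)·s) ds. Then for every x ∈ (0,b], g is twice differentiable at x and g''(x) - (l(l+1)/x²)·g(x) = x^{-l}/(2^{l+1/2} Γ(l+3/2)) · ∫₀ˣ (x² - s²)^l f''(s) ds. -/
theorem aux_w (l : ℝ) (hl : -1 < l) :
    IntervalIntegrable (fun t : ℝ => (1 - t ^ 2) ^ l) MeasureTheory.volume 0 1 := by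
  have h1 : IntervalIntegrable (fun t : ℝ => (1 - t) ^ l) MeasureTheory.volume 0 1 := by
    have := (intervalIntegral.intervalIntegrable_rpow' (a := 1) (b := 0) hl).comp_sub_left 1
    simpa using this
  have h2 : ContinuousOn (fun t : ℝ => (1 + t) ^ l) (Set.uIcc 0 1) := by
    intro t ht
    rw [Set.uIcc_of_le zero_le_one] at ht
    apply ContinuousAt.continuousWithinAt
    apply ContinuousAt.rpow_const
    · fun_prop
    · left; have := ht.1; positivity
  refine (h1.mul_continuousOn h2).congr ?_
  intro t ht
  rw [Set.uIoc_of_le zero_le_one] at ht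
  simp only
  rw [← Real.mul_rpow (by linarith [ht.2]) (by linarith [ht.1])]
  congr 1; ring

theorem aux_diff (w φ φ' : ℝ → ℝ) (hw : IntervalIntegrable w MeasureTheory.volume 0 1)
    (hφ : ∀ x, HasDerivAt φ (φ' x) x) (hc : Continuous φ') (x : ℝ) :
    HasDerivAt (fun x => ∫ t in (0:ℝ)..1, w t * φ (x * t))
      (∫ t in (0:ℝ)..1, w t * t * φ' (x * t)) x := by
  have hφc : Continuous φ := continuous_iff_continuousAt.2 fun y => (hφ y).continuousAt
  obtain ⟨M, hM⟩ := (isCompact_Icc (a := -(|x|+1)) (b := |x|+1)).exists_bound_of_continuousOn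
    hc.continuousOn
  have hInt : ∀ y, IntervalIntegrable (fun t => w t * φ (y * t)) MeasureTheory.volume 0 1 :=
    fun y => hw.mul_continuousOn (by fun_prop)
  have hInt' : IntervalIntegrable (fun t => w t * t * φ' (x * t)) MeasureTheory.volume 0 1 :=
    (hw.mul_continuousOn (by fun_prop)).mul_continuousOn (by fun_prop)
  refine (intervalIntegral.hasDerivAt_integral_of_dominated_loc_of_deriv_le
    (F := fun x t => w t * φ (x * t)) (F' := fun x t => w t * t * φ' (x * t))
    (bound := fun t => |w t| * M) (s := Metric.ball x 1)
    (Metric.ball_mem_nhds x one_pos) ?_ (hInt x) ?_ ?_ ?_ ?_).2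
  · refine Filter.Eventually.of_forall fun y => ?_
    rw [Set.uIoc_of_le zero_le_one]
    exact (hInt y).1.aestronglyMeasurable
  · rw [Set.uIoc_of_le zero_le_one]
    exact hInt'.1.aestronglyMeasurable
  · refine Filter.Eventually.of_forall fun t ht y hy => ?_
    rw [Set.uIoc_of_le zero_le_one] at ht
    have hy' : |y| ≤ |x| + 1 := by
      rw [Metric.mem_ball, Real.dist_eq] at hy
      have := abs_sub_abs_le_abs_sub y x
      linarith
    have hyt : |y * t| ≤ |x| + 1 := by
      rw [abs_mul, abs_of_pos ht.1]
      nlinarith [abs_nonneg y, ht.2, ht.1]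
    have hb := hM (y * t) (abs_le.1 hyt)
    rw [norm_mul, norm_mul, Real.norm_eq_abs, Real.norm_eq_abs, abs_of_pos ht.1]
    have : |w t| * t ≤ |w t| := by nlinarith [abs_nonneg (w t), ht.2]
    exact mul_le_mul this hb (norm_nonneg _) (abs_nonneg _)
  · exact hw.abs.mul_const M
  · refine Filter.Eventually.of_forall fun t ht y hy => ?_
    have h1 : HasDerivAt (fun y : ℝ => y * t) t y := by
      simpa using (hasDerivAt_id y).mul_const t
    have h2 := ((hφ (y * t)).comp y h1).const_mul (w t)
    refine h2.congr_deriv ?_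
    ring

theorem aux_subst (l x : ℝ) (hx : 0 < x) (h : ℝ → ℝ) :
    ∫ s in (0:ℝ)..x, (x ^ 2 - s ^ 2) ^ l * h s =
      x ^ (2 * l + 1) * ∫ t in (0:ℝ)..1, (1 - t ^ 2) ^ l * h (x * t) := by
  have h1 := intervalIntegral.mul_integral_comp_mul_left (a := 0) (b := 1)
    (f := fun s => (x ^ 2 - s ^ 2) ^ l * h s) (c := x)
  rw [mul_zero, mul_one] at h1
  rw [← h1, Real.rpow_add hx, Real.rpow_one, mul_comm (x ^ (2 * l)) x, mul_assoc]
  congr 1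
  rw [← intervalIntegral.integral_const_mul]
  apply intervalIntegral.integral_congr
  intro t ht
  rw [Set.uIcc_of_le zero_le_one] at ht
  simp only
  rw [show x ^ 2 - (x * t) ^ 2 = x ^ 2 * (1 - t ^ 2) by ring,
    Real.mul_rpow (by positivity) (by nlinarith [ht.1, ht.2]), Real.rpow_mul hx.le]
  norm_num [mul_assoc]

theorem aux_ftc (b : ℝ) (F F' : ℝ → ℝ)
    (hF : ∀ x ∈ Set.Icc (0:ℝ) b, HasDerivWithinAt F (F' x) (Set.Icc 0 b) x)
    (hc : ContinuousOn F' (Set.Icc 0 b)) (s : ℝ) (hs : s ∈ Set.Icc (0:ℝ) b) :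
    ∫ t in (0:ℝ)..s, F' t = F s - F 0 := by
  have hsub : Set.Icc 0 s ⊆ Set.Icc 0 b := Set.Icc_subset_Icc_right hs.2
  apply intervalIntegral.integral_eq_sub_of_hasDerivAt_of_le hs.1
  · exact fun t ht => ((hF t (hsub ht)).continuousWithinAt).mono hsub
  · intro t ht
    exact (hF t (hsub (Set.Ioo_subset_Icc_self ht))).hasDerivAt
      (Icc_mem_nhds ht.1 (lt_of_lt_of_le ht.2 hs.2))
  · apply ContinuousOn.intervalIntegrable
    rw [Set.uIcc_of_le hs.1]
    exact hc.mono hsub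

theorem aux_parts (l : ℝ) (hl : -1 < l) (φ φ' : ℝ → ℝ)
    (hφ : ∀ x, HasDerivAt φ (φ' x) x) (hc : Continuous φ') (h0 : φ 0 = 0) (x : ℝ) :
    2 * (l + 1) * (∫ t in (0:ℝ)..1, (1 - t ^ 2) ^ l * t * φ (x * t)) +
      x * (∫ t in (0:ℝ)..1, (1 - t ^ 2) ^ l * t * t * φ' (x * t)) =
      x * ∫ t in (0:ℝ)..1, (1 - t ^ 2) ^ l * φ' (x * t) := by
  have hφc : Continuous φ := continuous_iff_continuousAt.2 fun y => (hφ y).continuousAt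
  have hw := aux_w l hl
  have i1 : IntervalIntegrable (fun t => (1 - t ^ 2) ^ l * t * φ (x * t))
      MeasureTheory.volume 0 1 :=
    (hw.mul_continuousOn (by fun_prop)).mul_continuousOn (by fun_prop)
  have i2 : IntervalIntegrable (fun t => (1 - t ^ 2) ^ l * t * t * φ' (x * t))
      MeasureTheory.volume 0 1 :=
    ((hw.mul_continuousOn (by fun_prop)).mul_continuousOn (by fun_prop)).mul_continuousOn
      (by fun_prop)
  have i3 : IntervalIntegrable (fun t => (1 - t ^ 2) ^ l * φ' (x * t))
      MeasureTheory.volume 0 1 := hw.mul_continuousOn (by fun_prop)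
  have key := intervalIntegral.integral_eq_sub_of_hasDerivAt_of_le (a := 0) (b := 1) zero_le_one
    (f := fun t : ℝ => (1 - t ^ 2) ^ (l + 1) * φ (x * t))
    (f' := fun t : ℝ => x * ((1 - t ^ 2) ^ l * φ' (x * t))
      - (2 * (l + 1) * ((1 - t ^ 2) ^ l * t * φ (x * t)) +
        x * ((1 - t ^ 2) ^ l * t * t * φ' (x * t)))) ?_ ?_ ?_
  · rw [intervalIntegral.integral_sub (i3.const_mul _)
      ((i1.const_mul _).add (i2.const_mul _)),
      intervalIntegral.integral_add (i1.const_mul _) (i2.const_mul _)] at key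
    simp only [intervalIntegral.integral_const_mul] at key
    have z : (0:ℝ) ^ (l + 1) = 0 := Real.zero_rpow (by linarith)
    simp only [mul_zero, h0, one_pow, sub_self, z, zero_mul] at key
    linarith
  · apply Continuous.continuousOn
    apply Continuous.mul _ (by fun_prop)
    exact Continuous.rpow_const (by fun_prop) (fun _ => Or.inr (by linarith))
  · intro t ht
    have hp : 0 < 1 - t ^ 2 := by nlinarith [ht.1, ht.2]
    have h1 : HasDerivAt (fun y : ℝ => x * y) x t := by
      simpa using (hasDerivAt_id t).const_mul x
    have h2 : HasDerivAt (fun y : ℝ => 1 - y ^ 2) (-(2 * t)) t := by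
      simpa using (hasDerivAt_pow 2 t).const_sub 1
    have h3 := (h2.rpow_const (p := l + 1) (Or.inl hp.ne')).mul ((hφ (x * t)).comp t h1)
    refine h3.congr_deriv ?_
    simp only [Function.comp]
    rw [add_sub_cancel_right, Real.rpow_add hp, Real.rpow_one]
    ring
  · exact (i3.const_mul _).sub ((i1.const_mul _).add (i2.const_mul _))

/-- The operator `Y_l` intertwines `d²/dx²` with the singular
operator `d²/dx² - l(l+1)/x²` on `C²([0,b])` functions with the linear part
`f'(0)·x` removed. -/
theorem stmt_0 (b l : ℝ) (hb : 0 < b) (hl : -(1/2) ≤ l)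
    (f f' f'' : ℝ → ℝ)
    (hf1 : ∀ x ∈ Set.Icc (0:ℝ) b, HasDerivWithinAt f (f' x) (Set.Icc 0 b) x)
    (hf2 : ∀ x ∈ Set.Icc (0:ℝ) b, HasDerivWithinAt f' (f'' x) (Set.Icc 0 b) x)
    (hf3 : ContinuousOn f'' (Set.Icc 0 b))
    (g : ℝ → ℝ)
    (hg : ∀ x : ℝ, g x = x ^ (-l) / (2 ^ (l + 1/2) * Real.Gamma (l + 3/2)) *
        ∫ s in (0:ℝ)..x, (x ^ 2 - s ^ 2) ^ l * (f s - f' 0 * s)) :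
    ∃ g' g'' : ℝ → ℝ,
      (∀ x ∈ Set.Ioc (0:ℝ) b, HasDerivWithinAt g (g' x) (Set.Ioc 0 b) x) ∧
      (∀ x ∈ Set.Ioc (0:ℝ) b, HasDerivWithinAt g' (g'' x) (Set.Ioc 0 b) x) ∧
      ∀ x ∈ Set.Ioc (0:ℝ) b,
        g'' x - l * (l + 1) / x ^ 2 * g x =
          x ^ (-l) / (2 ^ (l + 1/2) * Real.Gamma (l + 3/2)) *
            ∫ s in (0:ℝ)..x, (x ^ 2 - s ^ 2) ^ l * f'' s := by
  have hl1 : -1 < l := by linarith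
  obtain ⟨k, hk, hkf⟩ : ∃ k : ℝ → ℝ, Continuous k ∧ ∀ s ∈ Set.Icc (0:ℝ) b, k s = f'' s := by
    refine ⟨Set.IccExtend hb.le ((Set.Icc 0 b).domRestrict f''), ?_, ?_⟩
    · exact (continuousOn_iff_continuous_domRestrict.1 hf3).Icc_extend'
    · intro s hs
      rw [Set.IccExtend_of_mem hb.le _ hs]; rfl
  obtain ⟨K1, hK1, hK10, hK1f⟩ : ∃ K1 : ℝ → ℝ, (∀ x, HasDerivAt K1 (k x) x) ∧ K1 0 = 0 ∧
      ∀ s ∈ Set.Icc (0:ℝ) b, K1 s = f' s - f' 0 := by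
    refine ⟨fun s => ∫ t in (0:ℝ)..s, k t, fun x => hk.integral_hasStrictDerivAt 0 x |>.hasDerivAt,
      by simp, ?_⟩
    intro s hs
    rw [← aux_ftc b f' f'' hf2 hf3 s hs]
    apply intervalIntegral.integral_congr
    intro t ht
    rw [Set.uIcc_of_le hs.1] at ht
    exact hkf t ⟨ht.1, ht.2.trans hs.2⟩
  have hK1c : Continuous K1 := continuous_iff_continuousAt.2 fun y => (hK1 y).continuousAt
  obtain ⟨K0, hK0, hK0f⟩ : ∃ K0 : ℝ → ℝ, (∀ x, HasDerivAt K0 (K1 x) x) ∧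
      ∀ s ∈ Set.Icc (0:ℝ) b, K0 s = f s - f' 0 * s := by
    refine ⟨fun s => f 0 + ∫ t in (0:ℝ)..s, K1 t,
      fun x => (hK1c.integral_hasStrictDerivAt 0 x |>.hasDerivAt).const_add _, ?_⟩
    intro s hs
    have h := aux_ftc b (fun s => f s - f' 0 * s) (fun s => f' s - f' 0) ?_ ?_ s hs
    · have h' : ∫ t in (0:ℝ)..s, K1 t = ∫ t in (0:ℝ)..s, (f' t - f' 0) := by
        apply intervalIntegral.integral_congr
        intro t ht
        rw [Set.uIcc_of_le hs.1] at ht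
        exact hK1f t ⟨ht.1, ht.2.trans hs.2⟩
      simp only
      rw [h', h]; ring
    · intro x hx
      have := (hf1 x hx).sub ((hasDerivWithinAt_id x (Set.Icc 0 b)).const_mul (f' 0))
      exact this.congr_deriv (by simp)
    · intro x hx
      exact (hf2 x hx).continuousWithinAt.sub continuousWithinAt_const
  set D : ℝ := 2 ^ (l + 1/2) * Real.Gamma (l + 3/2) with hD
  have hw := aux_w l hl1
  have hH0 := aux_diff (fun t => (1 - t ^ 2) ^ l) K0 K1 hw hK0 hK1c
  have hH1 := aux_diff (fun t => (1 - t ^ 2) ^ l * t) K1 k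
    (hw.mul_continuousOn (by fun_prop)) hK1 hk
  have hP := aux_parts l hl1 K1 k hK1 hk hK10
  set H0 : ℝ → ℝ := fun x => ∫ t in (0:ℝ)..1, (1 - t ^ 2) ^ l * K0 (x * t) with hH0d
  set H1 : ℝ → ℝ := fun x => ∫ t in (0:ℝ)..1, (1 - t ^ 2) ^ l * t * K1 (x * t) with hH1d
  set H2 : ℝ → ℝ := fun x => ∫ t in (0:ℝ)..1, (1 - t ^ 2) ^ l * t * t * k (x * t) with hH2d
  replace hH0 : ∀ x, HasDerivAt H0 (H1 x) x := hH0
  replace hH1 : ∀ x, HasDerivAt H1 (H2 x) x := hH1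
  have hpow : ∀ x : ℝ, 0 < x → ∀ I : ℝ, x ^ (-l) / D * (x ^ (2 * l + 1) * I) =
      x ^ (l + 1) * I / D := by
    intro x hx I
    have : x ^ (l + 1) = x ^ (-l) * x ^ (2 * l + 1) := by
      rw [← Real.rpow_add hx]; congr 1; ring
    rw [this]; ring
  have hcong : ∀ x ∈ Set.Ioc (0:ℝ) b, ∀ u v : ℝ → ℝ, (∀ s ∈ Set.Icc (0:ℝ) b, u s = v s) →
      ∫ s in (0:ℝ)..x, (x ^ 2 - s ^ 2) ^ l * u s = ∫ s in (0:ℝ)..x, (x ^ 2 - s ^ 2) ^ l * v s := by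
    intro x hx u v huv
    apply intervalIntegral.integral_congr
    intro t ht
    rw [Set.uIcc_of_le hx.1.le] at ht
    simp only
    rw [huv t ⟨ht.1, ht.2.trans hx.2⟩]
  have hgH : ∀ x ∈ Set.Ioc (0:ℝ) b, g x = x ^ (l + 1) * H0 x / D := by
    intro x hx
    rw [hg, ← hcong x hx _ _ hK0f, aux_subst l x hx.1, hpow x hx.1]
  have hd : ∀ p x : ℝ, 0 < x → HasDerivAt (fun x : ℝ => x ^ p) (p * x ^ (p - 1)) x :=
    fun p x hx => Real.hasDerivAt_rpow_const (Or.inl hx.ne')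
  refine ⟨fun x => ((l + 1) * x ^ l * H0 x + x ^ (l + 1) * H1 x) / D,
    fun x => ((l + 1) * (l * x ^ (l - 1)) * H0 x + (l + 1) * x ^ l * H1 x +
      ((l + 1) * x ^ l * H1 x + x ^ (l + 1) * H2 x)) / D, ?_, ?_, ?_⟩
  · intro x hx
    have h := ((hd (l + 1) x hx.1).mul (hH0 x)).div_const D
    rw [add_sub_cancel_right] at h
    exact h.hasDerivWithinAt.congr hgH (hgH x hx)
  · intro x hx
    have h := ((((hd l x hx.1).const_mul (l + 1)).mul (hH0 x)).add
      ((hd (l + 1) x hx.1).mul (hH1 x))).div_const D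
    rw [add_sub_cancel_right] at h
    exact h.hasDerivWithinAt
  · intro x hx
    have hx0 := hx.1
    beta_reduce
    rw [hgH x hx, ← hcong x hx _ _ hkf, aux_subst l x hx.1, hpow x hx.1]
    have hPx : 2 * (l + 1) * H1 x + x * H2 x = x * _ := hP x
    have e1 : x ^ (l + 1) = x ^ l * x := by rw [Real.rpow_add hx0, Real.rpow_one]
    have e2 : x ^ (l - 1) = x ^ l / x := by rw [Real.rpow_sub hx0, Real.rpow_one]
    rw [e1, e2, mul_assoc (x ^ l) x (∫ t in (0:ℝ)..1, (1 - t ^ 2) ^ l * k (x * t)), ← hPx]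
    have e3 : l * (l + 1) / x ^ 2 * (x ^ l * x * H0 x / D) =
        (l + 1) * (l * (x ^ l / x)) * H0 x / D := by
      field_simp
    rw [e3]
    ring
end

section
/- Let b > 0, let l ≥ -1/2 be real, and let f be continuous on [0,b]. Then: (i) lim_{x→0⁺} (Y_l f)(x) = 0 for every l ≥ -1/2; (ii) if l > 0, then lim_{x→0⁺} (Y_l f)'(x) = 0; (iii) if l = 0, then lim_{x→0⁺} (Y_0 f)'(x) = √(2/π) · f(0). -/
lemma aux_int (l x : ℝ) (hl : -1 < l) (hx : 0 < x) :
    IntervalIntegrable (fun s : ℝ => (x ^ 2 - s ^ 2) ^ l) MeasureTheory.volume 0 x := by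
  have h1 : IntervalIntegrable (fun s : ℝ => (x - s) ^ l) MeasureTheory.volume 0 x := by
    have := (intervalIntegral.intervalIntegrable_rpow' (a := 0) (b := x) hl).comp_sub_left x
    simpa using this.symm
  have h2 : ContinuousOn (fun s : ℝ => (x + s) ^ l) (Set.uIcc 0 x) := by
    rw [Set.uIcc_of_le hx.le]
    apply ContinuousOn.rpow_const (by fun_prop)
    intro s hs
    left
    have := hs.1
    linarith
  refine (h1.mul_continuousOn h2).congr ?_
  intro s hs
  rw [Set.uIoc_of_le hx.le] at hs
  have h3 := hs.1
  have h4 := hs.2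
  simp only
  rw [← Real.mul_rpow (by linarith) (by linarith)]
  congr 1
  ring

lemma aux_J (l x : ℝ) (hx : 0 < x) :
    ∫ s in (0:ℝ)..x, (x ^ 2 - s ^ 2) ^ l =
      (∫ s in (0:ℝ)..1, (1 - s ^ 2) ^ l) * x ^ (2 * l + 1) := by
  have h := intervalIntegral.mul_integral_comp_mul_left (a := 0) (b := 1)
    (f := fun s : ℝ => (x ^ 2 - s ^ 2) ^ l) x
  simp only [mul_zero, mul_one] at h
  rw [← h]
  have h2 : ∫ s in (0:ℝ)..1, (x ^ 2 - (x * s) ^ 2) ^ l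
      = ∫ s in (0:ℝ)..1, x ^ (2 * l) * (1 - s ^ 2) ^ l := by
    apply intervalIntegral.integral_congr
    intro s hs
    rw [Set.uIcc_of_le zero_le_one] at hs
    have h3 := hs.1
    have h4 := hs.2
    simp only
    rw [Real.rpow_mul hx.le, ← Real.mul_rpow (by positivity) (by nlinarith)]
    norm_num
    congr 1
    ring
  rw [h2, intervalIntegral.integral_const_mul, Real.rpow_add hx, Real.rpow_one]
  ring

lemma aux_bound (b l M x : ℝ) (hl : -1 < l) (f : ℝ → ℝ)
    (hM : ∀ s ∈ Set.Icc 0 b, |f s| ≤ M) (hx : 0 < x) (hxb : x ≤ b) :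
    |∫ s in (0:ℝ)..x, (x ^ 2 - s ^ 2) ^ l * f s| ≤
      M * ((∫ s in (0:ℝ)..1, (1 - s ^ 2) ^ l) * x ^ (2 * l + 1)) := by
  rw [← aux_J l x hx, ← intervalIntegral.integral_const_mul, ← Real.norm_eq_abs]
  apply intervalIntegral.norm_integral_le_of_norm_le hx.le
  · refine Filter.Eventually.of_forall fun s hs => ?_
    have h1 := hs.1
    have h2 := hs.2
    have h3 : 0 ≤ (x ^ 2 - s ^ 2) ^ l := Real.rpow_nonneg (by nlinarith) _
    rw [norm_mul, Real.norm_eq_abs, abs_of_nonneg h3, mul_comm]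
    exact mul_le_mul_of_nonneg_right (hM s ⟨h1.le, h2.trans hxb⟩) h3
  · exact (aux_int l x hl hx).const_mul M

lemma aux_lip (b l M x y : ℝ) (hl : 0 < l) (f : ℝ → ℝ) (hf : ContinuousOn f (Set.Icc 0 b))
    (hM : ∀ s ∈ Set.Icc 0 b, |f s| ≤ M) (hx : 0 < x) (hxy : x ≤ y) (hyb : y ≤ b) :
    |(∫ s in (0:ℝ)..y, (y ^ 2 - s ^ 2) ^ l * f s) - ∫ s in (0:ℝ)..x, (x ^ 2 - s ^ 2) ^ l * f s| ≤
      M * ((∫ s in (0:ℝ)..1, (1 - s ^ 2) ^ l) * (y ^ (2 * l + 1) - x ^ (2 * l + 1))) := by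
  have hc : ∀ z : ℝ, Continuous fun s : ℝ => (z ^ 2 - s ^ 2) ^ l := fun z =>
    Continuous.rpow_const (by fun_prop) (fun _ => Or.inr hl.le)
  have hi : ∀ z u v : ℝ, 0 ≤ u → u ≤ v → v ≤ b →
      IntervalIntegrable (fun s : ℝ => (z ^ 2 - s ^ 2) ^ l * f s) MeasureTheory.volume u v := by
    intro z u v hu huv hv
    apply ContinuousOn.intervalIntegrable
    rw [Set.uIcc_of_le huv]
    exact (hc z).continuousOn.mul (hf.mono (Set.Icc_subset_Icc hu hv))
  have hi' : ∀ z u v : ℝ,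
      IntervalIntegrable (fun s : ℝ => (z ^ 2 - s ^ 2) ^ l) MeasureTheory.volume u v :=
    fun z u v => (hc z).intervalIntegrable u v
  rw [mul_sub, ← aux_J l x hx, ← aux_J l y (by linarith)]
  rw [← intervalIntegral.integral_add_adjacent_intervals
    (hi y 0 x le_rfl hx.le (by linarith)) (hi y x y hx.le hxy hyb),
    ← intervalIntegral.integral_add_adjacent_intervals (hi' y 0 x) (hi' y x y)]
  have e1 : |(∫ s in (0:ℝ)..x, (y ^ 2 - s ^ 2) ^ l * f s)
      - ∫ s in (0:ℝ)..x, (x ^ 2 - s ^ 2) ^ l * f s| ≤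
      M * ((∫ s in (0:ℝ)..x, (y ^ 2 - s ^ 2) ^ l) - ∫ s in (0:ℝ)..x, (x ^ 2 - s ^ 2) ^ l) := by
    rw [← intervalIntegral.integral_sub (hi y 0 x le_rfl hx.le (by linarith))
      (hi x 0 x le_rfl hx.le (by linarith)), ← intervalIntegral.integral_sub (hi' _ _ _) (hi' _ _ _),
      ← intervalIntegral.integral_const_mul, ← Real.norm_eq_abs]
    apply intervalIntegral.norm_integral_le_of_norm_le hx.le
    · refine Filter.Eventually.of_forall fun s hs => ?_
      have h1 := hs.1
      have h2 := hs.2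
      have h3 : (x ^ 2 - s ^ 2) ^ l ≤ (y ^ 2 - s ^ 2) ^ l :=
        Real.rpow_le_rpow (by nlinarith) (by nlinarith) hl.le
      rw [← sub_mul, norm_mul, Real.norm_eq_abs, abs_of_nonneg (sub_nonneg.2 h3), mul_comm]
      exact mul_le_mul_of_nonneg_right (hM s ⟨h1.le, by linarith⟩) (sub_nonneg.2 h3)
    · exact ((hi' _ _ _).sub (hi' _ _ _)).const_mul M
  have e2 : |∫ s in x..y, (y ^ 2 - s ^ 2) ^ l * f s| ≤ M * ∫ s in x..y, (y ^ 2 - s ^ 2) ^ l := by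
    rw [← intervalIntegral.integral_const_mul, ← Real.norm_eq_abs]
    apply intervalIntegral.norm_integral_le_of_norm_le hxy
    · refine Filter.Eventually.of_forall fun s hs => ?_
      have h1 := hs.1
      have h2 := hs.2
      have h3 : 0 ≤ (y ^ 2 - s ^ 2) ^ l := Real.rpow_nonneg (by nlinarith) _
      rw [norm_mul, Real.norm_eq_abs, abs_of_nonneg h3, mul_comm]
      exact mul_le_mul_of_nonneg_right (hM s ⟨by linarith, by linarith⟩) h3
    · exact (hi' _ _ _).const_mul M
  rw [abs_le] at *
  constructor <;> linarith [e1.1, e1.2, e2.1, e2.2]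

/-- Derivative comparison. -/
lemma aux_deriv (g h : ℝ → ℝ) (x g' h' : ℝ) (hg : HasDerivAt g g' x) (hh : HasDerivAt h h' x)
    (H : ∀ᶠ y in nhds x, |g y - g x| ≤ |h y - h x|) : |g'| ≤ |h'| := by
  refine le_of_tendsto_of_tendsto (hasDerivAt_iff_tendsto_slope.1 hg).abs
    (hasDerivAt_iff_tendsto_slope.1 hh).abs ?_
  filter_upwards [H.filter_mono nhdsWithin_le_nhds] with y hy
  simp only [slope_def_field, abs_div]
  gcongr

/-- Boundary behaviour of `Y_l f` and its derivative at `0⁺`. -/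
theorem stmt_2 (b l : ℝ) (hb : 0 < b) (hl : -(1/2) ≤ l)
    (f : ℝ → ℝ) (hf : ContinuousOn f (Set.Icc 0 b))
    (Y : ℝ → ℝ)
    (hY : ∀ x : ℝ, Y x = x ^ (-l) / (2 ^ (l + 1/2) * Real.Gamma (l + 3/2)) *
        ∫ s in (0:ℝ)..x, (x ^ 2 - s ^ 2) ^ l * f s) :
    Filter.Tendsto Y (nhdsWithin 0 (Set.Ioi 0)) (nhds 0) ∧
    (0 < l → Filter.Tendsto (deriv Y) (nhdsWithin 0 (Set.Ioi 0)) (nhds 0)) ∧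
    (l = 0 → Filter.Tendsto (deriv Y) (nhdsWithin 0 (Set.Ioi 0))
      (nhds (Real.sqrt (2 / Real.pi) * f 0))) := by
  obtain ⟨M, hM⟩ := isCompact_Icc.exists_bound_of_continuousOn hf
  simp only [Real.norm_eq_abs] at hM
  have hM0 : 0 ≤ M := (abs_nonneg _).trans (hM 0 ⟨le_rfl, hb.le⟩)
  set D : ℝ := 2 ^ (l + 1/2) * Real.Gamma (l + 3/2) with hD
  have hDpos : 0 < D := mul_pos (by positivity) (Real.Gamma_pos_of_pos (by linarith))
  set B : ℝ := ∫ s in (0:ℝ)..1, (1 - s ^ 2) ^ l with hB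
  have hB0 : 0 ≤ B := by
    apply intervalIntegral.integral_nonneg zero_le_one
    intro s hs
    exact Real.rpow_nonneg (by nlinarith [hs.1, hs.2]) _
  have hev : ∀ᶠ x in nhdsWithin (0:ℝ) (Set.Ioi 0), 0 < x ∧ x < b := by
    filter_upwards [Ioo_mem_nhdsGT hb] with x hx using hx
  have hpow : ∀ (K p : ℝ), 0 < p →
      Filter.Tendsto (fun x : ℝ => K * x ^ p) (nhdsWithin 0 (Set.Ioi 0)) (nhds 0) := by
    intro K p hp
    have : ContinuousAt (fun x : ℝ => K * x ^ p) 0 :=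
      (Real.continuousAt_rpow_const 0 p (Or.inr hp.le)).const_mul K
    have h2 := this.tendsto.mono_left (nhdsWithin_le_nhds (s := Set.Ioi 0))
    simpa [Real.zero_rpow hp.ne'] using h2
  refine ⟨?_, ?_, ?_⟩
  · apply squeeze_zero_norm' _ (hpow (M * B / D) (l + 1) (by linarith))
    filter_upwards [hev] with x hx
    have h := aux_bound b l M x (by linarith) f hM hx.1 hx.2.le
    rw [hY x, norm_mul, Real.norm_eq_abs, Real.norm_eq_abs, abs_of_nonneg
      (div_nonneg (Real.rpow_nonneg hx.1.le _) hDpos.le)]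
    refine (mul_le_mul_of_nonneg_left h
      (div_nonneg (Real.rpow_nonneg hx.1.le _) hDpos.le)).trans (le_of_eq ?_)
    have e : x ^ (l + 1) = x ^ (-l) * x ^ (2 * l + 1) := by
      rw [← Real.rpow_add hx.1]; congr 1; ring
    rw [e]
    ring
  · intro hl0
    apply squeeze_zero_norm' _ (hpow (M * B * (3 * l + 1) / D) l hl0)
    filter_upwards [hev] with x hx
    obtain ⟨hx0, hxb⟩ := hx
    by_cases hd : DifferentiableAt ℝ Y x
    swap
    · rw [deriv_zero_of_not_differentiableAt hd, norm_zero]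
      positivity
    set g : ℝ → ℝ := fun x => ∫ s in (0:ℝ)..x, (x ^ 2 - s ^ 2) ^ l * f s with hg
    have hgd : DifferentiableAt ℝ g x := by
      have h1 : DifferentiableAt ℝ (fun y : ℝ => D * y ^ l * Y y) x :=
        ((Real.differentiableAt_rpow_const_of_ne l hx0.ne').const_mul D).mul hd
      refine h1.congr_of_eventuallyEq ?_
      filter_upwards [lt_mem_nhds hx0] with y hy
      rw [hY y, Real.rpow_neg hy.le]
      have := (Real.rpow_pos_of_pos hy l).ne'
      field_simp
      rfl
    have hgb : |g x| ≤ M * (B * x ^ (2 * l + 1)) :=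
      aux_bound b l M x (by linarith) f hM hx0 hxb.le
    have hrp : HasDerivAt (fun y : ℝ => M * (B * y ^ (2 * l + 1)))
        (M * (B * ((2 * l + 1) * x ^ (2 * l)))) x := by
      have := ((Real.hasDerivAt_rpow_const (x := x) (p := 2 * l + 1)
        (Or.inl hx0.ne')).const_mul B).const_mul M
      simpa using this
    have hg' : |deriv g x| ≤ M * (B * ((2 * l + 1) * x ^ (2 * l))) := by
      refine (aux_deriv g _ x _ _ hgd.hasDerivAt hrp ?_).trans (le_of_eq (abs_of_nonneg ?_))
      · filter_upwards [Ioo_mem_nhds hx0 hxb] with y hy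
        rcases le_total x y with hxy | hxy
        · refine le_trans ?_ (le_abs_self _)
          refine (aux_lip b l M x y hl0 f hf hM hx0 hxy hy.2.le).trans (le_of_eq ?_)
          ring
        · rw [abs_sub_comm, abs_sub_comm (M * _)]
          refine le_trans ?_ (le_abs_self _)
          refine (aux_lip b l M y x hl0 f hf hM hy.1 hxy hxb.le).trans (le_of_eq ?_)
          ring
      · positivity
    have hYd : deriv Y x = (-l * x ^ (-l - 1) / D) * g x + x ^ (-l) / D * deriv g x := by
      have h1 : HasDerivAt (fun y : ℝ => y ^ (-l) / D * g y)
          ((-l * x ^ (-l - 1) / D) * g x + x ^ (-l) / D * deriv g x) x :=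
        ((Real.hasDerivAt_rpow_const (Or.inl hx0.ne')).div_const D).mul hgd.hasDerivAt
      have h2 : Y = fun y : ℝ => y ^ (-l) / D * g y := funext hY
      rw [h2]
      exact h1.deriv
    rw [hYd]
    refine (norm_add_le _ _).trans ?_
    rw [norm_mul, norm_mul, Real.norm_eq_abs, Real.norm_eq_abs, Real.norm_eq_abs, Real.norm_eq_abs]
    have a1 : |-l * x ^ (-l - 1) / D| = l * x ^ (-l - 1) / D := by
      rw [neg_mul, neg_div, abs_neg, abs_of_nonneg (by positivity)]
    have a2 : |x ^ (-l) / D| = x ^ (-l) / D := abs_of_nonneg (by positivity)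
    rw [a1, a2]
    have e1 : x ^ l = x ^ (-l - 1) * x ^ (2 * l + 1) := by
      rw [← Real.rpow_add hx0]; congr 1; ring
    have e2 : x ^ l = x ^ (-l) * x ^ (2 * l) := by
      rw [← Real.rpow_add hx0]; congr 1; ring
    calc _ ≤ l * x ^ (-l - 1) / D * (M * (B * x ^ (2 * l + 1)))
          + x ^ (-l) / D * (M * (B * ((2 * l + 1) * x ^ (2 * l)))) := by gcongr
      _ = M * B * l / D * (x ^ (-l - 1) * x ^ (2 * l + 1))
          + M * B * (2 * l + 1) / D * (x ^ (-l) * x ^ (2 * l)) := by ring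
      _ = _ := by rw [← e1, ← e2]; ring
  · intro hl0
    have hc : Real.sqrt (2 / Real.pi) = 1 / D := by
      rw [hD, hl0]
      have : Real.Gamma (0 + 3 / 2) = Real.sqrt Real.pi / 2 := by
        rw [show (0 + 3 / 2 : ℝ) = 1 / 2 + 1 by norm_num, Real.Gamma_add_one (by norm_num),
          Real.Gamma_one_half_eq]
        ring
      rw [this, zero_add, ← Real.sqrt_eq_rpow, Real.sqrt_div (by norm_num)]
      have h2 : Real.sqrt 2 * Real.sqrt 2 = 2 := Real.mul_self_sqrt (by norm_num)
      have h3 : 0 < Real.sqrt Real.pi := Real.sqrt_pos.2 Real.pi_pos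
      have h4 : 0 < Real.sqrt 2 := by positivity
      rw [div_eq_div_iff h3.ne' (by positivity)]
      linear_combination (Real.sqrt Real.pi / 2) * h2
    have hft : Filter.Tendsto f (nhdsWithin 0 (Set.Ioi 0)) (nhds (f 0)) := by
      have := (hf 0 ⟨le_rfl, hb.le⟩).mono Set.Ioo_subset_Icc_self
      rw [ContinuousWithinAt, nhdsWithin_Ioo_eq_nhdsGT hb] at this
      exact this
    rw [hc]
    refine (hft.const_mul (1 / D)).congr' ?_
    filter_upwards [hev] with x hx
    have h2 : Y = fun y : ℝ => 1 / D * ∫ s in (0:ℝ)..y, f s := by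
      funext y
      rw [hY y]
      simp [hl0]
    have hnb : Set.Icc 0 b ∈ nhds x := Icc_mem_nhds hx.1 hx.2
    have h3 : HasDerivAt (fun y : ℝ => ∫ s in (0:ℝ)..y, f s) (f x) x := by
      apply intervalIntegral.integral_hasDerivAt_right
      · apply ContinuousOn.intervalIntegrable
        rw [Set.uIcc_of_le hx.1.le]
        exact hf.mono (Set.Icc_subset_Icc le_rfl hx.2.le)
      · exact (hf.mono Set.Ioo_subset_Icc_self).stronglyMeasurableAtFilter isOpen_Ioo x hx
      · exact hf.continuousAt hnb
    rw [h2]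
    exact (h3.const_mul (1 / D)).deriv.symm
end

section
/- Let l ≥ -1/2 be real and let ω > 0. Then for every x > 0, x^{-l}/(2^{l+1/2} Γ(l+3/2)) · ∫₀ˣ (x² - s²)^l cos(ωs) ds = (√π · Γ(l+1)/(2 Γ(l+3/2))) · √x · ω^{-(l+1/2)} · J_{l+1/2}(ωx), where J_ν(y) := Σ_{m=0}^∞ (-1)^m/(m! Γ(m+ν+1)) · (y/2)^{2m+ν} is the Bessel function of the first kind of order ν defined by its convergent power series. -/
open MeasureTheory Set in
lemma aux_beta (u v a : ℝ) (hu : 0 < u) (hv : 0 < v) (ha : 0 < a) :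
    ∫ t in (0:ℝ)..a, t ^ (u - 1) * (a - t) ^ (v - 1) =
      a ^ (u + v - 1) * (Real.Gamma u * Real.Gamma v / Real.Gamma (u + v)) := by
  have h := Complex.betaIntegral_scaled (u : ℂ) (v : ℂ) ha
  rw [Complex.betaIntegral_eq_Gamma_mul_div _ _ (by simpa using hu) (by simpa using hv)] at h
  have h2 : ∫ t in (0:ℝ)..a, (t : ℂ) ^ ((u : ℂ) - 1) * ((a : ℂ) - t) ^ ((v : ℂ) - 1) =
      ∫ t in (0:ℝ)..a, ((t ^ (u - 1) * (a - t) ^ (v - 1) : ℝ) : ℂ) := by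
    apply intervalIntegral.integral_congr
    intro t ht
    rw [uIcc_of_le ha.le] at ht
    simp only
    rw [Complex.ofReal_mul, Complex.ofReal_cpow ht.1, Complex.ofReal_cpow (sub_nonneg.2 ht.2)]
    push_cast
    rfl
  rw [h2, intervalIntegral.integral_ofReal, ← Complex.ofReal_add, Complex.Gamma_ofReal,
    Complex.Gamma_ofReal, Complex.Gamma_ofReal,
    show ((u + v : ℝ) : ℂ) - 1 = ((u + v - 1 : ℝ) : ℂ) by push_cast; rfl,
    ← Complex.ofReal_cpow ha.le] at h
  exact_mod_cast h

open MeasureTheory Set in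
lemma aux_moment (l x : ℝ) (hl : -1 < l) (hx : 0 < x) (m : ℕ) :
    ∫ s in (0:ℝ)..x, (x ^ 2 - s ^ 2) ^ l * s ^ (2 * m) =
      x ^ (2 * (m : ℝ) + 2 * l + 1) / 2 *
        (Real.Gamma (m + 1/2) * Real.Gamma (l + 1) / Real.Gamma ((m : ℝ) + (l + 1/2) + 1)) := by
  have hb := aux_beta ((m : ℝ) + 1/2) (l + 1) (x ^ 2) (by positivity) (by linarith) (by positivity)
  rw [show (m : ℝ) + 1/2 + (l + 1) = (m : ℝ) + (l + 1/2) + 1 by ring] at hb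
  have hsub := integral_comp_rpow_Ioi_of_pos (p := 2) (by norm_num)
    (g := (Iic (x ^ 2)).indicator
      (fun t : ℝ => t ^ ((m : ℝ) + 1/2 - 1) * (x ^ 2 - t) ^ (l + 1 - 1)))
  rw [setIntegral_indicator measurableSet_Iic, Ioi_inter_Iic,
    ← intervalIntegral.integral_of_le (by positivity), hb] at hsub
  have h3 : ∫ s in Ioi (0:ℝ), ((2:ℝ) * s ^ ((2:ℝ) - 1)) • (Iic (x ^ 2)).indicator
      (fun t : ℝ => t ^ ((m : ℝ) + 1/2 - 1) * (x ^ 2 - t) ^ (l + 1 - 1)) (s ^ (2:ℝ)) =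
      ∫ s in Ioi (0:ℝ), (Iic x).indicator
        (fun s : ℝ => 2 * ((x ^ 2 - s ^ 2) ^ l * s ^ (2 * m))) s := by
    apply setIntegral_congr_fun measurableSet_Ioi
    intro s hs
    have hs' : (0:ℝ) < s := hs
    simp only
    by_cases h : s ≤ x
    · rw [indicator_of_mem (by simp only [mem_Iic, Real.rpow_two]; gcongr),
        indicator_of_mem (by simpa using h), ← Real.rpow_mul hs'.le, smul_eq_mul,
        add_sub_cancel_right, Real.rpow_two, ← Real.rpow_natCast s (2 * m),
        show ((2 * m : ℕ) : ℝ) = ((2:ℝ) - 1) + 2 * ((m : ℝ) + 1/2 - 1) by push_cast; ring,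
        Real.rpow_add hs' (2 - 1)]
      ring
    · rw [indicator_of_notMem, indicator_of_notMem (by simpa using h), smul_zero]
      simp only [mem_Iic, Real.rpow_two, not_le]
      push Not at h
      gcongr
  rw [h3, setIntegral_indicator measurableSet_Iic, Ioi_inter_Iic,
    ← intervalIntegral.integral_of_le hx.le, intervalIntegral.integral_const_mul,
    ← Real.rpow_two, ← Real.rpow_mul hx.le] at hsub
  rw [show 2 * (m : ℝ) + 2 * l + 1 = 2 * ((m : ℝ) + (l + 1/2) + 1 - 1) by ring]
  rw [Real.rpow_two] at hsub
  linarith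

lemma aux_gamma (m : ℕ) :
    Real.Gamma (m + 1/2) * (4 ^ m * m.factorial) = (2 * m).factorial * Real.sqrt Real.pi := by
  induction m with
  | zero => simp [-one_div, Real.Gamma_one_half_eq]
  | succ k ih =>
    rw [show ((k + 1 : ℕ) : ℝ) + 1/2 = ((k : ℝ) + 1/2) + 1 by push_cast; ring,
      Real.Gamma_add_one (by positivity), show 2 * (k + 1) = 2 * k + 1 + 1 by ring,
      Nat.factorial_succ, Nat.factorial_succ, Nat.factorial_succ]
    push_cast
    linear_combination (((k : ℝ) + 1/2) * 4 * (k + 1)) * ih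

open MeasureTheory Set in
lemma aux_integrable (l x : ℝ) (hl : -1 < l) (hx : 0 < x) :
    IntervalIntegrable (fun s : ℝ => (x ^ 2 - s ^ 2) ^ l) volume 0 x := by
  by_contra h
  have h0 := aux_moment l x hl hx 0
  simp only [mul_zero, pow_zero, mul_one] at h0
  rw [intervalIntegral.integral_undef h] at h0
  have h1 : 0 < Real.Gamma (l + 1) := Real.Gamma_pos_of_pos (by linarith)
  have h2 : 0 < Real.Gamma (((0:ℕ) : ℝ) + 1/2) := Real.Gamma_pos_of_pos (by simp)
  have h4 : ((0:ℕ) : ℝ) + (l + 1/2) + 1 = l + 3/2 := by push_cast; ring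
  rw [h4] at h0
  have h5 : 0 < Real.Gamma (l + 3/2) := Real.Gamma_pos_of_pos (by linarith)
  refine absurd h0 (ne_of_lt ?_)
  positivity

open MeasureTheory Set in
lemma aux_hasSum (l ω x : ℝ) (hl : -1 < l) (hω : 0 < ω) (hx : 0 < x) :
    HasSum (fun m : ℕ => ∫ s in (0:ℝ)..x, ((-1) ^ m * ω ^ (2 * m) / ((2 * m).factorial : ℝ)) *
        ((x ^ 2 - s ^ 2) ^ l * s ^ (2 * m)))
      (∫ s in (0:ℝ)..x, (x ^ 2 - s ^ 2) ^ l * Real.cos (ω * s)) := by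
  apply intervalIntegral.hasSum_integral_of_dominated_convergence
    (bound := fun m s => (x ^ 2 - s ^ 2) ^ l * ((ω * x) ^ (2 * m) / ((2 * m).factorial : ℝ)))
  · intro n
    apply Measurable.aestronglyMeasurable
    fun_prop
  · intro n
    refine Filter.Eventually.of_forall fun s hs => ?_
    rw [uIoc_of_le hx.le] at hs
    have hs0 := hs.1.le
    have h0 : 0 ≤ x ^ 2 - s ^ 2 := sub_nonneg.2 (pow_le_pow_left₀ hs.1.le hs.2 2)
    have h1 : 0 ≤ (x ^ 2 - s ^ 2) ^ l := Real.rpow_nonneg h0 l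
    have h2 : s ^ (2 * n) ≤ x ^ (2 * n) := pow_le_pow_left₀ hs.1.le hs.2 _
    rw [norm_mul, norm_div, norm_mul, norm_pow, norm_neg, norm_one, one_pow, one_mul,
      Real.norm_of_nonneg (by positivity), Real.norm_of_nonneg (by positivity),
      Real.norm_of_nonneg (by positivity), mul_pow]
    calc _ = (x ^ 2 - s ^ 2) ^ l * (ω ^ (2 * n) * s ^ (2 * n) / ((2 * n).factorial : ℝ)) := by ring
      _ ≤ _ := by gcongr
  · exact Filter.Eventually.of_forall fun s _ => (Real.hasSum_cosh (ω * x)).summable.mul_left _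
  · simp_rw [tsum_mul_left]
    exact (aux_integrable l x hl hx).mul_const _
  · refine Filter.Eventually.of_forall fun s _ => ?_
    have h := (Real.hasSum_cos (ω * s)).mul_left ((x ^ 2 - s ^ 2) ^ l)
    refine (congrArg (fun g : ℕ → ℝ => HasSum g _) (funext fun m => ?_)).mp h
    rw [mul_pow]
    ring


/-- Poisson-type representation: `Y_l[cos(ω·)](x)` equals
`(√π Γ(l+1)/(2Γ(l+3/2))) √x ω^{-(l+1/2)} J_{l+1/2}(ωx)`, with the Bessel
function of the first kind given by its power series. -/
theorem stmt_3 (l ω : ℝ) (hl : -(1/2) ≤ l) (hω : 0 < ω) (x : ℝ) (hx : 0 < x) :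
    x ^ (-l) / (2 ^ (l + 1/2) * Real.Gamma (l + 3/2)) *
        ∫ s in (0:ℝ)..x, (x ^ 2 - s ^ 2) ^ l * Real.cos (ω * s) =
      Real.sqrt Real.pi * Real.Gamma (l + 1) / (2 * Real.Gamma (l + 3/2)) * Real.sqrt x *
          ω ^ (-(l + 1/2)) *
        ∑' m : ℕ, (-1 : ℝ) ^ m / ((m.factorial : ℝ) * Real.Gamma ((m : ℝ) + (l + 1/2) + 1)) *
          (ω * x / 2) ^ (2 * (m : ℝ) + (l + 1/2)) := by
  have hl1 : -1 < l := by linarith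
  rw [← (aux_hasSum l ω x hl1 hω hx).tsum_eq, ← tsum_mul_left, ← tsum_mul_left]
  refine tsum_congr fun m => ?_
  rw [intervalIntegral.integral_const_mul, aux_moment l x hl1 hx m]
  have hG : Real.Gamma ((m : ℝ) + 1/2) =
      (2 * m).factorial * Real.sqrt Real.pi / (4 ^ m * m.factorial) := by
    rw [eq_div_iff (by positivity), aux_gamma]
  have h1 : Real.Gamma (l + 3/2) ≠ 0 := (Real.Gamma_pos_of_pos (by linarith)).ne'
  have h2 : Real.Gamma ((m : ℝ) + (l + 1/2) + 1) ≠ 0 :=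
    (Real.Gamma_pos_of_pos (by have : (0:ℝ) ≤ m := m.cast_nonneg; linarith)).ne'
  have hf : ((2 * m).factorial : ℝ) ≠ 0 := by positivity
  have hf' : (m.factorial : ℝ) ≠ 0 := by positivity
  have hxp : Real.sqrt x * x ^ (2 * (m : ℝ) + (l + 1/2)) =
      x ^ (-l) * x ^ (2 * (m : ℝ) + 2 * l + 1) := by
    rw [Real.sqrt_eq_rpow, ← Real.rpow_add hx, ← Real.rpow_add hx]
    congr 1
    ring
  have hωp : ω ^ (-(l + 1/2)) * ω ^ (2 * (m : ℝ) + (l + 1/2)) = ω ^ (2 * m) := by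
    rw [← Real.rpow_add hω, ← Real.rpow_natCast]
    congr 1
    push_cast
    ring
  have h2p : (2:ℝ) ^ (2 * (m : ℝ) + (l + 1/2)) = 4 ^ m * 2 ^ (l + 1/2) := by
    rw [Real.rpow_add two_pos, Real.rpow_mul two_pos.le, Real.rpow_natCast]
    norm_num
  have h2q : (2:ℝ) ^ (l + 1/2) ≠ 0 := by positivity
  rw [hG, Real.div_rpow (by positivity) two_pos.le, Real.mul_rpow hω.le hx.le, h2p]
  calc _ = Real.sqrt Real.pi * Real.Gamma (l + 1) / (2 * Real.Gamma (l + 3/2)) *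
        ((-1) ^ m / ((m.factorial : ℝ) * Real.Gamma ((m : ℝ) + (l + 1/2) + 1))) *
        ω ^ (2 * m) * (x ^ (-l) * x ^ (2 * (m : ℝ) + 2 * l + 1)) / (4 ^ m * 2 ^ (l + 1/2)) := by
        generalize (2:ℝ) ^ (l + 1/2) = A at *
        generalize x ^ (2 * (m : ℝ) + 2 * l + 1) = B at *
        generalize x ^ (-l) = C at *
        generalize Real.Gamma ((m : ℝ) + (l + 1/2) + 1) = D at *
        generalize Real.Gamma (l + 3/2) = E at *
        field_simp
    _ = _ := by
        rw [← hxp, ← hωp]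
        ring
end

section
/- Let l ≥ -1/2 be real and let ω > 0. Define h(x) = x^{-l}/(2^{l+1/2} Γ(l+3/2)) · ∫₀ˣ (x² - s²)^l sin(ωs) ds. Then for every x > 0, h is twice differentiable at x and h''(x) - (l(l+1)/x²)·h(x) + ω²·h(x) = 2(l+1)·ω·C₁·x^l, where C₁ = Γ(l+1)/(2^{l+3/2} Γ(l+3/2) Γ(l+2)). -/
lemma wint (l : ℝ) (hl : -(1/2) ≤ l) :
    IntervalIntegrable (fun t : ℝ => (1 - t ^ 2) ^ l) MeasureTheory.volume 0 1 := by
  have h1 : IntervalIntegrable (fun t : ℝ => (1 - t) ^ l) MeasureTheory.volume 0 1 := by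
    have := (intervalIntegral.intervalIntegrable_rpow' (a := 0) (b := 1) (r := l)
      (by linarith)).comp_sub_left 1
    simpa using this.symm
  have h2 : ContinuousOn (fun t : ℝ => (1 + t) ^ l) (Set.uIcc 0 1) := by
    rw [Set.uIcc_of_le zero_le_one]
    apply ContinuousOn.rpow_const (by fun_prop)
    intro t ht
    left
    have := ht.1
    positivity
  refine (h1.mul_continuousOn h2).congr ?_
  intro t ht
  rw [Set.uIoc_of_le zero_le_one] at ht
  have a := ht.1
  have b := ht.2
  simp only
  rw [← Real.mul_rpow (by linarith) (by linarith)]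
  congr 1
  ring

lemma dsin (w : ℝ → ℝ) (hw : IntervalIntegrable w MeasureTheory.volume 0 1) (ω x : ℝ) :
    HasDerivAt (fun x => ∫ t in (0:ℝ)..1, w t * Real.sin (ω * (x * t)))
      (∫ t in (0:ℝ)..1, w t * (Real.cos (ω * (x * t)) * (ω * t))) x := by
  have hc : ∀ y, IntervalIntegrable (fun t => w t * Real.sin (ω * (y * t)))
      MeasureTheory.volume 0 1 := fun y => hw.mul_continuousOn (by fun_prop)
  have hd : ∀ y, IntervalIntegrable (fun t => w t * (Real.cos (ω * (y * t)) * (ω * t)))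
      MeasureTheory.volume 0 1 := fun y => hw.mul_continuousOn (by fun_prop)
  refine (intervalIntegral.hasDerivAt_integral_of_dominated_loc_of_deriv_le
    (F := fun x t => w t * Real.sin (ω * (x * t)))
    (F' := fun x t => w t * (Real.cos (ω * (x * t)) * (ω * t)))
    (bound := fun t => ‖w t‖ * |ω|) (s := Set.univ) Filter.univ_mem
    (Filter.Eventually.of_forall fun y => (hc y).def'.aestronglyMeasurable) (hc x)
    (hd x).def'.aestronglyMeasurable ?_ (hw.norm.mul_const _) ?_).2
  · refine Filter.Eventually.of_forall fun t ht y _ => ?_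
    rw [Set.uIoc_of_le zero_le_one] at ht
    rw [norm_mul]
    gcongr
    rw [Real.norm_eq_abs, abs_mul, abs_mul]
    have a1 := Real.abs_cos_le_one (ω * (y * t))
    have a2 : |t| ≤ 1 := abs_le.2 ⟨by linarith [ht.1], ht.2⟩
    calc _ ≤ 1 * (|ω| * 1) := by gcongr
      _ = _ := by ring
  · refine Filter.Eventually.of_forall fun t ht y _ => ?_
    have : HasDerivAt (fun y : ℝ => ω * (y * t)) (ω * t) y := by
      simpa using ((hasDerivAt_id y).mul_const t).const_mul ω
    exact this.sin.const_mul _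

lemma dcos (w : ℝ → ℝ) (hw : IntervalIntegrable w MeasureTheory.volume 0 1) (ω x : ℝ) :
    HasDerivAt (fun x => ∫ t in (0:ℝ)..1, w t * (Real.cos (ω * (x * t)) * (ω * t)))
      (∫ t in (0:ℝ)..1, w t * (-Real.sin (ω * (x * t)) * (ω * t) * (ω * t))) x := by
  have hc : ∀ y, IntervalIntegrable (fun t => w t * (Real.cos (ω * (y * t)) * (ω * t)))
      MeasureTheory.volume 0 1 := fun y => hw.mul_continuousOn (by fun_prop)
  have hd : ∀ y, IntervalIntegrable
      (fun t => w t * (-Real.sin (ω * (y * t)) * (ω * t) * (ω * t)))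
      MeasureTheory.volume 0 1 := fun y => hw.mul_continuousOn (by fun_prop)
  refine (intervalIntegral.hasDerivAt_integral_of_dominated_loc_of_deriv_le
    (F := fun x t => w t * (Real.cos (ω * (x * t)) * (ω * t)))
    (F' := fun x t => w t * (-Real.sin (ω * (x * t)) * (ω * t) * (ω * t)))
    (bound := fun t => ‖w t‖ * (|ω| * |ω|)) (s := Set.univ) Filter.univ_mem
    (Filter.Eventually.of_forall fun y => (hc y).def'.aestronglyMeasurable) (hc x)
    (hd x).def'.aestronglyMeasurable ?_ (hw.norm.mul_const _) ?_).2
  · refine Filter.Eventually.of_forall fun t ht y _ => ?_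
    rw [Set.uIoc_of_le zero_le_one] at ht
    rw [norm_mul]
    gcongr
    rw [Real.norm_eq_abs, abs_mul, abs_mul, abs_neg, abs_mul]
    have a1 := Real.abs_sin_le_one (ω * (y * t))
    have a2 : |t| ≤ 1 := abs_le.2 ⟨by linarith [ht.1], ht.2⟩
    calc _ ≤ 1 * (|ω| * 1) * (|ω| * 1) := by gcongr
      _ = _ := by ring
  · refine Filter.Eventually.of_forall fun t ht y _ => ?_
    have : HasDerivAt (fun y : ℝ => ω * (y * t)) (ω * t) y := by
      simpa using ((hasDerivAt_id y).mul_const t).const_mul ω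
    exact (this.cos.mul_const _).const_mul _

lemma parts (l ω x : ℝ) (hl : -(1/2) ≤ l) :
    x * (∫ t in (0:ℝ)..1, (1 - t ^ 2) ^ l * (-Real.sin (ω * (x * t)) * (ω * t) * (ω * t)))
    + 2 * (l + 1) * (∫ t in (0:ℝ)..1, (1 - t ^ 2) ^ l * (Real.cos (ω * (x * t)) * (ω * t)))
    + ω ^ 2 * x * (∫ t in (0:ℝ)..1, (1 - t ^ 2) ^ l * Real.sin (ω * (x * t))) = ω := by
  have hw := wint l hl
  have i1 : IntervalIntegrable
      (fun t : ℝ => (1 - t ^ 2) ^ l * (-Real.sin (ω * (x * t)) * (ω * t) * (ω * t)))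
      MeasureTheory.volume 0 1 := hw.mul_continuousOn (by fun_prop)
  have i2 : IntervalIntegrable
      (fun t : ℝ => (1 - t ^ 2) ^ l * (Real.cos (ω * (x * t)) * (ω * t)))
      MeasureTheory.volume 0 1 := hw.mul_continuousOn (by fun_prop)
  have i3 : IntervalIntegrable
      (fun t : ℝ => (1 - t ^ 2) ^ l * Real.sin (ω * (x * t)))
      MeasureTheory.volume 0 1 := hw.mul_continuousOn (by fun_prop)
  rw [← intervalIntegral.integral_const_mul, ← intervalIntegral.integral_const_mul,
    ← intervalIntegral.integral_const_mul,
    ← intervalIntegral.integral_add (i1.const_mul _) (i2.const_mul _),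
    ← intervalIntegral.integral_add ((i1.const_mul _).add (i2.const_mul _)) (i3.const_mul _)]
  rw [intervalIntegral.integral_eq_sub_of_hasDerivAt_of_le
    (f := fun t : ℝ => -((1 - t ^ 2) ^ (l + 1) * (ω * Real.cos (ω * (x * t))))) zero_le_one]
  · simp [Real.zero_rpow (show l + 1 ≠ 0 by linarith)]
  · apply ContinuousOn.neg
    apply ContinuousOn.mul _ (by fun_prop)
    apply ContinuousOn.rpow_const (by fun_prop)
    intro t ht
    right
    linarith
  · intro t ht
    have hp : 0 < 1 - t ^ 2 := by nlinarith [ht.1, ht.2]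
    have e1 : HasDerivAt (fun t : ℝ => 1 - t ^ 2) (-(2 * t)) t := by
      simpa using (hasDerivAt_pow 2 t).const_sub 1
    have e2 := e1.rpow_const (p := l + 1) (Or.inl hp.ne')
    have e3 : HasDerivAt (fun t : ℝ => ω * (x * t)) (ω * x) t := by
      simpa using ((hasDerivAt_id t).const_mul x).const_mul ω
    refine (e2.mul (e3.cos.const_mul ω)).neg.congr_deriv ?_
    rw [add_sub_cancel_right, Real.rpow_add_one hp.ne']
    ring
  · exact ((i1.const_mul _).add (i2.const_mul _)).add (i3.const_mul _)

lemma subst_h (l ω x : ℝ) (hx : 0 < x) :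
    x ^ (-l) * (∫ s in (0:ℝ)..x, (x ^ 2 - s ^ 2) ^ l * Real.sin (ω * s)) =
    x ^ (l + 1) * ∫ t in (0:ℝ)..1, (1 - t ^ 2) ^ l * Real.sin (ω * (x * t)) := by
  have := intervalIntegral.smul_integral_comp_mul_left (a := 0) (b := 1)
    (fun s => (x ^ 2 - s ^ 2) ^ l * Real.sin (ω * s)) x
  rw [mul_zero, mul_one] at this
  rw [← this]
  have e : (∫ t in (0:ℝ)..1, (x ^ 2 - (x * t) ^ 2) ^ l * Real.sin (ω * (x * t))) =
      ∫ t in (0:ℝ)..1, x ^ (2 * l) * ((1 - t ^ 2) ^ l * Real.sin (ω * (x * t))) := by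
    apply intervalIntegral.integral_congr
    intro t ht
    rw [Set.uIcc_of_le zero_le_one] at ht
    have hp : 0 ≤ 1 - t ^ 2 := by nlinarith [ht.1, ht.2]
    simp only
    rw [show x ^ 2 - (x * t) ^ 2 = x ^ 2 * (1 - t ^ 2) by ring,
      Real.mul_rpow (by positivity) hp, Real.rpow_mul hx.le, Real.rpow_two]
    ring
  rw [e, intervalIntegral.integral_const_mul, smul_eq_mul, ← mul_assoc, ← mul_assoc]
  congr 1
  rw [← Real.rpow_add_one hx.ne', ← Real.rpow_add hx]
  congr 1
  ring

/-- `h = Y_l[sin(ω·)]` solves the inhomogeneous Bessel equation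
`h'' - (l(l+1)/x²)h + ω²h = 2(l+1)ω C₁ x^l`. -/
theorem stmt_4 (l ω : ℝ) (hl : -(1/2) ≤ l) (hω : 0 < ω)
    (h : ℝ → ℝ)
    (hh : ∀ x : ℝ, h x = x ^ (-l) / (2 ^ (l + 1/2) * Real.Gamma (l + 3/2)) *
        ∫ s in (0:ℝ)..x, (x ^ 2 - s ^ 2) ^ l * Real.sin (ω * s)) :
    ∀ x : ℝ, 0 < x →
      DifferentiableAt ℝ h x ∧ DifferentiableAt ℝ (deriv h) x ∧
      deriv (deriv h) x - l * (l + 1) / x ^ 2 * h x + ω ^ 2 * h x =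
        2 * (l + 1) * ω *
            (Real.Gamma (l + 1) /
              (2 ^ (l + 3/2) * Real.Gamma (l + 3/2) * Real.Gamma (l + 2))) *
          x ^ l := by
  have hw := wint l hl
  have hG : 0 < Real.Gamma (l + 3/2) := Real.Gamma_pos_of_pos (by linarith)
  have hG1 : 0 < Real.Gamma (l + 1) := Real.Gamma_pos_of_pos (by linarith)
  have hG2 : Real.Gamma (l + 2) = (l + 1) * Real.Gamma (l + 1) := by
    rw [← Real.Gamma_add_one (by linarith)]
    congr 1
    ring
  have h2 : (2:ℝ) ^ (l + 3/2) = 2 ^ (l + 1/2) * 2 := by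
    rw [← Real.rpow_add_one (by norm_num)]
    congr 1
    ring
  have h2p : (0:ℝ) < 2 ^ (l + 1/2) := by positivity
  have hl1 : l + 1 ≠ 0 := by linarith
  have hK : 2 * (l + 1) * ω * (Real.Gamma (l + 1) /
      (2 ^ (l + 3/2) * Real.Gamma (l + 3/2) * Real.Gamma (l + 2))) =
      (2 ^ (l + 1/2) * Real.Gamma (l + 3/2))⁻¹ * ω := by
    rw [hG2, h2]
    field_simp
  set K : ℝ := (2 ^ (l + 1/2) * Real.Gamma (l + 3/2))⁻¹ with hKd
  obtain ⟨g, hg⟩ : ∃ g : ℝ → ℝ, g = fun x => ∫ t in (0:ℝ)..1,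
    (1 - t ^ 2) ^ l * Real.sin (ω * (x * t)) := ⟨_, rfl⟩
  obtain ⟨g1, hg1⟩ : ∃ g : ℝ → ℝ, g = fun x => ∫ t in (0:ℝ)..1,
    (1 - t ^ 2) ^ l * (Real.cos (ω * (x * t)) * (ω * t)) := ⟨_, rfl⟩
  obtain ⟨g2, hg2⟩ : ∃ g : ℝ → ℝ, g = fun x => ∫ t in (0:ℝ)..1,
    (1 - t ^ 2) ^ l * (-Real.sin (ω * (x * t)) * (ω * t) * (ω * t)) := ⟨_, rfl⟩
  have d1 : ∀ x, HasDerivAt g (g1 x) x := by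
    intro x
    rw [hg, hg1]
    exact dsin _ hw ω x
  have d2 : ∀ x, HasDerivAt g1 (g2 x) x := by
    intro x
    rw [hg1, hg2]
    exact dcos _ hw ω x
  have hp : ∀ x, x * g2 x + 2 * (l + 1) * g1 x + ω ^ 2 * x * g x = ω := by
    intro x
    rw [hg, hg1, hg2]
    exact parts l ω x hl
  have hx0 : ∀ x, 0 < x → h x = K * (x ^ (l + 1) * g x) := by
    intro x hx
    rw [hh, hg, ← subst_h l ω x hx, hKd]
    ring
  have D1 : ∀ x, 0 < x → HasDerivAt h
      (K * ((l + 1) * x ^ l * g x + x ^ (l + 1) * g1 x)) x := by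
    intro x hx
    have e := Real.hasDerivAt_rpow_const (x := x) (p := l + 1) (Or.inl hx.ne')
    rw [add_sub_cancel_right] at e
    refine ((e.mul (d1 x)).const_mul K).congr_of_eventuallyEq ?_
    filter_upwards [lt_mem_nhds hx] with y hy using hx0 y hy
  intro x hx
  have D2 : HasDerivAt (deriv h)
      (K * (((l + 1) * (l * x ^ (l - 1)) * g x + (l + 1) * x ^ l * g1 x) +
        ((l + 1) * x ^ l * g1 x + x ^ (l + 1) * g2 x))) x := by
    have e := Real.hasDerivAt_rpow_const (x := x) (p := l + 1) (Or.inl hx.ne')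
    rw [add_sub_cancel_right] at e
    have e' := Real.hasDerivAt_rpow_const (x := x) (p := l) (Or.inl hx.ne')
    refine ((((e'.const_mul (l + 1)).mul (d1 x)).add
      (e.mul (d2 x))).const_mul K).congr_of_eventuallyEq ?_
    filter_upwards [lt_mem_nhds hx] with y hy using (D1 y hy).deriv
  refine ⟨(D1 x hx).differentiableAt, D2.differentiableAt, ?_⟩
  rw [D2.deriv, hK, hx0 x hx, Real.rpow_sub_one hx.ne', Real.rpow_add_one hx.ne']
  conv_rhs => rw [← hp x]
  field_simp
  ring
end

section
/- Let b > 0 and let l ≥ -1/2 be real. Then: (i) for every continuous f on [0,b], the function Y_l f (with (Y_l f)(0) := 0) is continuous on [0,b] and satisfies |(Y_l f)(x)| ≤ (√π · Γ(l+1)/(2^{l+3/2} Γ(l+3/2)²)) · x^{l+1} · sup_{[0,b]}|f| for all x ∈ [0,b]; in particular Y_l is a bounded linear operator from C([0,b]) to C([0,b]). (ii) If moreover l ≥ 0, there exists a constant M (depending only on l and b) such that for every f ∈ C¹([0,b]), the derivative (Y_l f)' extends continuously to [0,b] and sup_{[0,b]}|(Y_l f)'| ≤ M·(sup_{[0,b]}|f|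 + sup_{[0,b]}|f'|). -/
open MeasureTheory intervalIntegral in
lemma aux_beta_s5 (l : ℝ) (hl : -1 < l) :
    IntervalIntegrable (fun u : ℝ => u ^ l * (1 - u) ^ l) volume 0 1 ∧
    ∫ u in (0:ℝ)..1, u ^ l * (1 - u) ^ l = Real.Gamma (l + 1) ^ 2 / Real.Gamma (2 * (l + 1)) := by
  have hpos : 0 < l + 1 := by linarith
  have hc := Complex.betaIntegral_convergent (u := ((l + 1 : ℝ) : ℂ)) (v := ((l + 1 : ℝ) : ℂ))
    (by simpa using hpos) (by simpa using hpos)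
  have heq : ∀ u ∈ Set.uIcc (0:ℝ) 1,
      (u : ℂ) ^ (((l + 1 : ℝ) : ℂ) - 1) * (1 - (u : ℂ)) ^ (((l + 1 : ℝ) : ℂ) - 1)
        = ((u ^ l * (1 - u) ^ l : ℝ) : ℂ) := by
    intro u hu
    rw [Set.uIcc_of_le zero_le_one] at hu
    have e : ((l + 1 : ℝ) : ℂ) - 1 = (l : ℂ) := by push_cast; ring
    rw [e, Complex.ofReal_mul, Complex.ofReal_cpow hu.1, Complex.ofReal_cpow (by linarith [hu.2])]
    push_cast; rfl
  have hc2 : IntervalIntegrable (fun u : ℝ => ((u ^ l * (1 - u) ^ l : ℝ) : ℂ)) volume 0 1 :=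
    hc.congr (fun u hu => heq u (Set.uIoc_subset_uIcc hu))
  have hint : IntervalIntegrable (fun u : ℝ => u ^ l * (1 - u) ^ l) volume 0 1 := by
    rw [intervalIntegrable_iff] at hc2 ⊢
    have h := hc2.re
    simp only [RCLike.re_to_complex, Complex.ofReal_re] at h
    exact h
  refine ⟨hint, ?_⟩
  have h := ProbabilityTheory.beta_eq_betaIntegralReal (l + 1) (l + 1) hpos hpos
  rw [Complex.betaIntegral, intervalIntegral.integral_congr heq, intervalIntegral.integral_ofReal,
    Complex.ofReal_re] at h
  rw [← h, ProbabilityTheory.beta]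
  ring_nf

open MeasureTheory intervalIntegral in
lemma aux_kernel (l : ℝ) (hl : -1 < l) :
    IntervalIntegrable (fun t : ℝ => (1 - t ^ 2) ^ l) volume 0 1 ∧
    ∫ t in (0:ℝ)..1, (1 - t ^ 2) ^ l =
      Real.sqrt Real.pi * Real.Gamma (l + 1) / (2 * Real.Gamma (l + 3 / 2)) := by
  obtain ⟨hi, hv⟩ := aux_beta_s5 l hl
  have hk : ∀ u ∈ Set.Icc (0:ℝ) 1, (1 - (2 * u - 1) ^ 2) ^ l = 4 ^ l * (u ^ l * (1 - u) ^ l) := by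
    intro u hu
    have h0 := hu.1
    have h1 : 0 ≤ 1 - u := by linarith [hu.2]
    rw [← Real.mul_rpow h0 h1, ← Real.mul_rpow (by norm_num) (mul_nonneg h0 h1)]
    congr 1; ring
  have hi2 : IntervalIntegrable (fun t : ℝ => (1 - t ^ 2) ^ l) volume (-1) 1 := by
    have h1 := ((hi.const_mul (4 ^ l)).comp_mul_left (c := 1 / 2)).comp_add_right 1
    norm_num at h1
    refine h1.congr ?_
    intro t ht
    rw [Set.uIoc_of_le (by norm_num)] at ht
    have := hk (1 / 2 * (t + 1)) ⟨by linarith [ht.1], by linarith [ht.2]⟩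
    ring_nf at this ⊢
    exact this.symm
  have hr : IntervalIntegrable (fun t : ℝ => (1 - t ^ 2) ^ l) volume 0 1 :=
    hi2.mono_set (by
      rw [Set.uIcc_of_le (by norm_num), Set.uIcc_of_le (by norm_num)]
      exact Set.Icc_subset_Icc (by norm_num) le_rfl)
  have hle : IntervalIntegrable (fun t : ℝ => (1 - t ^ 2) ^ l) volume (-1) 0 :=
    hi2.mono_set (by
      rw [Set.uIcc_of_le (by norm_num), Set.uIcc_of_le (by norm_num)]
      exact Set.Icc_subset_Icc le_rfl (by norm_num))
  refine ⟨hr, ?_⟩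
  have h1 : ∫ u in (0:ℝ)..1, (1 - (2 * u - 1) ^ 2) ^ l
      = 4 ^ l * (Real.Gamma (l + 1) ^ 2 / Real.Gamma (2 * (l + 1))) := by
    rw [← hv, ← intervalIntegral.integral_const_mul]
    apply intervalIntegral.integral_congr
    intro u hu
    rw [Set.uIcc_of_le zero_le_one] at hu
    exact hk u hu
  have h2 := intervalIntegral.integral_comp_mul_sub (a := 0) (b := 1)
    (fun t : ℝ => (1 - t ^ 2) ^ l) (two_ne_zero (α := ℝ)) 1
  have h3 : ∫ t in (-1:ℝ)..0, (1 - t ^ 2) ^ l = ∫ t in (0:ℝ)..1, (1 - t ^ 2) ^ l := by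
    have := intervalIntegral.integral_comp_neg (a := 0) (b := 1) (fun t : ℝ => (1 - t ^ 2) ^ l)
    simp at this
    exact this.symm
  have h4 := intervalIntegral.integral_add_adjacent_intervals hle hr
  simp only [smul_eq_mul] at h2
  norm_num at h2
  rw [← h4, h3, h1] at h2
  have hd := Real.Gamma_mul_Gamma_add_half (l + 1)
  have e1 : l + 1 + 1 / 2 = l + 3 / 2 := by ring
  rw [e1] at hd
  have e2 : (2:ℝ) ^ (1 - 2 * (l + 1)) = 1 / (2 * 4 ^ l) := by
    have : (4:ℝ) ^ l = 2 ^ (2 * l) := by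
      rw [Real.rpow_mul (by norm_num)]; norm_num
    rw [this, show 1 - 2 * (l + 1) = -(1 + 2 * l) by ring, Real.rpow_neg (by norm_num),
      Real.rpow_add (by norm_num), Real.rpow_one, one_div]
  rw [e2] at hd
  have g1 : 0 < Real.Gamma (l + 1) := Real.Gamma_pos_of_pos (by linarith)
  have g2 : 0 < Real.Gamma (l + 3 / 2) := Real.Gamma_pos_of_pos (by linarith)
  have g3 : 0 < Real.Gamma (2 * (l + 1)) := Real.Gamma_pos_of_pos (by linarith)
  have g4 : (0:ℝ) < 4 ^ l := by positivity
  have h5 : ∫ t in (0:ℝ)..1, (1 - t ^ 2) ^ l =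
      4 ^ l * (Real.Gamma (l + 1) ^ 2 / Real.Gamma (2 * (l + 1))) := by linarith
  rw [h5]
  generalize Real.Gamma (2 * (l + 1)) = A at *
  generalize Real.Gamma (l + 3 / 2) = B at *
  generalize Real.Gamma (l + 1) = C at *
  generalize (4:ℝ) ^ l = D at *
  field_simp at hd ⊢
  linarith

open MeasureTheory intervalIntegral in
lemma aux_scale (l : ℝ) (hl : -1 < l) (c : ℝ) (f : ℝ → ℝ) (x : ℝ) (hx : 0 ≤ x) :
    x ^ (-l) / c * ∫ s in (0:ℝ)..x, (x ^ 2 - s ^ 2) ^ l * f s =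
      x ^ (l + 1) / c * ∫ t in (0:ℝ)..1, (1 - t ^ 2) ^ l * f (x * t) := by
  rcases hx.eq_or_lt with rfl | hx
  · rw [Real.zero_rpow (by linarith : l + 1 ≠ 0)]; simp
  · have h := intervalIntegral.mul_integral_comp_mul_left (a := 0) (b := 1)
      (f := fun s : ℝ => (x ^ 2 - s ^ 2) ^ l * f s) (c := x)
    simp only [mul_zero, mul_one] at h
    rw [← h]
    have e : ∫ t in (0:ℝ)..1, (x ^ 2 - (x * t) ^ 2) ^ l * f (x * t) =
        x ^ (2 * l) * ∫ t in (0:ℝ)..1, (1 - t ^ 2) ^ l * f (x * t) := by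
      rw [← intervalIntegral.integral_const_mul]
      apply intervalIntegral.integral_congr
      intro t ht
      rw [Set.uIcc_of_le zero_le_one] at ht
      have h1 : 0 ≤ 1 - t ^ 2 := by nlinarith [ht.1, ht.2]
      have h2 : (x ^ 2) ^ l = x ^ (2 * l) := by
        rw [Real.rpow_mul hx.le, Real.rpow_two]
      simp only
      rw [show x ^ 2 - (x * t) ^ 2 = x ^ 2 * (1 - t ^ 2) by ring,
        Real.mul_rpow (by positivity) h1, h2]
      ring
    rw [e]
    have : x ^ (l + 1) = x ^ (-l) * x * x ^ (2 * l) := by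
      rw [← Real.rpow_add_one hx.ne', ← Real.rpow_add hx]; congr 1; ring
    rw [this]; ring

lemma aux_mem {b x t : ℝ} (hx : x ∈ Set.Icc 0 b) (ht : t ∈ Set.Icc (0:ℝ) 1) :
    x * t ∈ Set.Icc 0 b :=
  ⟨mul_nonneg hx.1 ht.1, by nlinarith [hx.1, hx.2, ht.1, ht.2]⟩

open MeasureTheory intervalIntegral in
lemma aux_int_s5 (b : ℝ) (w g : ℝ → ℝ) (hw : IntervalIntegrable w volume 0 1)
    (hg : ContinuousOn g (Set.Icc 0 b)) {x : ℝ} (hx : x ∈ Set.Icc 0 b) :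
    IntervalIntegrable (fun t => w t * g (x * t)) volume 0 1 := by
  apply hw.mul_continuousOn
  rw [Set.uIcc_of_le zero_le_one]
  exact hg.comp (by fun_prop) (fun t ht => aux_mem hx ht)

open MeasureTheory intervalIntegral in
lemma aux_cont (b : ℝ) (w g : ℝ → ℝ) (hw : IntervalIntegrable w volume 0 1)
    (hg : ContinuousOn g (Set.Icc 0 b)) :
    ContinuousOn (fun x => ∫ t in (0:ℝ)..1, w t * g (x * t)) (Set.Icc 0 b) := by
  obtain ⟨C, hC⟩ := isCompact_Icc.exists_bound_of_continuousOn hg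
  intro x hx
  apply continuousWithinAt_of_dominated_interval (bound := fun t => ‖w t‖ * C)
  · filter_upwards [self_mem_nhdsWithin] with y hy
    exact (aux_int_s5 b w g hw hg hy).def'.aestronglyMeasurable
  · filter_upwards [self_mem_nhdsWithin] with y hy
    refine Filter.Eventually.of_forall fun t ht => ?_
    rw [Set.uIoc_of_le zero_le_one] at ht
    rw [norm_mul]
    exact mul_le_mul_of_nonneg_left (hC _ (aux_mem hy ⟨ht.1.le, ht.2⟩)) (norm_nonneg _)
  · exact hw.norm.mul_const C
  · refine Filter.Eventually.of_forall fun t ht => ?_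
    rw [Set.uIoc_of_le zero_le_one] at ht
    have : ContinuousOn (fun y => w t * g (y * t)) (Set.Icc 0 b) :=
      continuousOn_const.mul (hg.comp (by fun_prop) (fun y hy => aux_mem hy ⟨ht.1.le, ht.2⟩))
    exact this x hx

open MeasureTheory intervalIntegral in
lemma aux_bound_s5 (b : ℝ) (w g : ℝ → ℝ) (hw : IntervalIntegrable w volume 0 1)
    (hw0 : ∀ t ∈ Set.Icc (0:ℝ) 1, 0 ≤ w t) (F : ℝ)
    (hF : ∀ y ∈ Set.Icc (0:ℝ) b, |g y| ≤ F) {x : ℝ} (hx : x ∈ Set.Icc 0 b) :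
    |∫ t in (0:ℝ)..1, w t * g (x * t)| ≤ (∫ t in (0:ℝ)..1, w t) * F := by
  rw [← intervalIntegral.integral_mul_const, ← Real.norm_eq_abs]
  apply intervalIntegral.norm_integral_le_of_norm_le zero_le_one _ (hw.mul_const F)
  refine Filter.Eventually.of_forall fun t ht => ?_
  have ht' : t ∈ Set.Icc (0:ℝ) 1 := ⟨ht.1.le, ht.2⟩
  rw [norm_mul, Real.norm_eq_abs, Real.norm_eq_abs, abs_of_nonneg (hw0 t ht')]
  exact mul_le_mul_of_nonneg_left (hF _ (aux_mem hx ht')) (hw0 t ht')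

open MeasureTheory intervalIntegral in
lemma aux_deriv_s5 (b : ℝ) (w f f' : ℝ → ℝ) (hw : IntervalIntegrable w volume 0 1)
    (hf : ∀ x ∈ Set.Icc (0:ℝ) b, HasDerivWithinAt f (f' x) (Set.Icc 0 b) x)
    (hf' : ContinuousOn f' (Set.Icc 0 b)) {x : ℝ} (hx : x ∈ Set.Ioo 0 b) :
    HasDerivAt (fun x => ∫ t in (0:ℝ)..1, w t * f (x * t))
      (∫ t in (0:ℝ)..1, (w t * t) * f' (x * t)) x := by
  have hfc : ContinuousOn f (Set.Icc 0 b) := fun y hy => (hf y hy).continuousWithinAt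
  have hwt : IntervalIntegrable (fun t => w t * t) volume 0 1 :=
    hw.mul_continuousOn continuousOn_id
  obtain ⟨C, hC⟩ := isCompact_Icc.exists_bound_of_continuousOn hf'
  have hn : Set.Ioo 0 b ∈ nhds x := Ioo_mem_nhds hx.1 hx.2
  refine (intervalIntegral.hasDerivAt_integral_of_dominated_loc_of_deriv_le
    (F := fun x t => w t * f (x * t)) (F' := fun x t => (w t * t) * f' (x * t))
    (bound := fun t => ‖w t * t‖ * C) hn ?_ ?_ ?_ ?_ ?_ ?_).2
  · filter_upwards [hn] with y hy
    exact (aux_int_s5 b w f hw hfc (Set.Ioo_subset_Icc_self hy)).def'.aestronglyMeasurable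
  · exact aux_int_s5 b w f hw hfc (Set.Ioo_subset_Icc_self hx)
  · exact (aux_int_s5 b _ f' hwt hf' (Set.Ioo_subset_Icc_self hx)).def'.aestronglyMeasurable
  · refine Filter.Eventually.of_forall fun t ht y hy => ?_
    rw [Set.uIoc_of_le zero_le_one] at ht
    rw [norm_mul]
    exact mul_le_mul_of_nonneg_left
      (hC _ (aux_mem (Set.Ioo_subset_Icc_self hy) ⟨ht.1.le, ht.2⟩)) (norm_nonneg _)
  · exact hwt.norm.mul_const C
  · refine Filter.Eventually.of_forall fun t ht y hy => ?_
    rw [Set.uIoc_of_le zero_le_one] at ht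
    have h0 : 0 < y * t := mul_pos hy.1 ht.1
    have h1 : y * t < b := by nlinarith [hy.1, hy.2, ht.1, ht.2]
    have hd : HasDerivAt f (f' (y * t)) (y * t) :=
      (hf _ ⟨h0.le, h1.le⟩).hasDerivAt (Icc_mem_nhds h0 h1)
    have hm : HasDerivAt (fun y : ℝ => y * t) t y := by
      simpa using (hasDerivAt_id y).mul_const t
    have := (hd.comp y hm).const_mul (w t)
    convert! this using 1
    ring

/-- Mapping properties of `Y_l`: it is a bounded operator on
`C([0,b])` with the explicit bound `|Y_l f(x)| ≤ (√π Γ(l+1)/(2^{l+3/2} Γ(l+3/2)²)) x^{l+1} sup|f|`,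
and (for `l ≥ 0`) `f ↦ (Y_l f)'` is a bounded operator from `C¹([0,b])` to `C([0,b])`. -/
theorem stmt_5 (b l : ℝ) (hb : 0 < b) (hl : -(1/2) ≤ l) :
    (∀ f : ℝ → ℝ, ContinuousOn f (Set.Icc 0 b) →
      (ContinuousOn (fun x : ℝ => x ^ (-l) / (2 ^ (l + 1/2) * Real.Gamma (l + 3/2)) *
          ∫ s in (0:ℝ)..x, (x ^ 2 - s ^ 2) ^ l * f s) (Set.Icc 0 b)) ∧
      ∀ F : ℝ, (∀ y ∈ Set.Icc (0:ℝ) b, |f y| ≤ F) →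
        ∀ x ∈ Set.Icc (0:ℝ) b,
          |x ^ (-l) / (2 ^ (l + 1/2) * Real.Gamma (l + 3/2)) *
              ∫ s in (0:ℝ)..x, (x ^ 2 - s ^ 2) ^ l * f s| ≤
            Real.sqrt Real.pi * Real.Gamma (l + 1) /
                (2 ^ (l + 3/2) * Real.Gamma (l + 3/2) ^ 2) * x ^ (l + 1) * F) ∧
    (0 ≤ l → ∃ M : ℝ, ∀ f f' : ℝ → ℝ,
      (∀ x ∈ Set.Icc (0:ℝ) b, HasDerivWithinAt f (f' x) (Set.Icc 0 b) x) →
      ContinuousOn f' (Set.Icc 0 b) →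
      ∃ G : ℝ → ℝ, ContinuousOn G (Set.Icc 0 b) ∧
        (∀ x ∈ Set.Ioo (0:ℝ) b,
          HasDerivAt (fun y : ℝ => y ^ (-l) / (2 ^ (l + 1/2) * Real.Gamma (l + 3/2)) *
            ∫ s in (0:ℝ)..y, (y ^ 2 - s ^ 2) ^ l * f s) (G x) x) ∧
        ∀ F F' : ℝ, (∀ y ∈ Set.Icc (0:ℝ) b, |f y| ≤ F) →
          (∀ y ∈ Set.Icc (0:ℝ) b, |f' y| ≤ F') →
          ∀ x ∈ Set.Icc (0:ℝ) b, |G x| ≤ M * (F + F')) := by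
  have hl1 : -1 < l := by linarith
  obtain ⟨hk, hkv⟩ := aux_kernel l hl1
  have hk0 : ∀ t ∈ Set.Icc (0:ℝ) 1, 0 ≤ (1 - t ^ 2) ^ l := fun t ht =>
    Real.rpow_nonneg (by nlinarith [ht.1, ht.2]) _
  have hG : 0 < Real.Gamma (l + 3 / 2) := Real.Gamma_pos_of_pos (by linarith)
  have hc : 0 < 2 ^ (l + 1/2) * Real.Gamma (l + 3/2) := by positivity
  have hc2 : (2:ℝ) ^ (l + 3 / 2) = 2 * 2 ^ (l + 1/2) := by
    rw [show l + 3 / 2 = l + 1/2 + 1 by ring, Real.rpow_add_one (by norm_num)]; ring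
  refine ⟨fun f hf => ⟨?_, ?_⟩, fun hl0 => ?_⟩
  · have h : ContinuousOn (fun x : ℝ => x ^ (l + 1) / (2 ^ (l + 1/2) * Real.Gamma (l + 3/2)) *
        ∫ t in (0:ℝ)..1, (1 - t ^ 2) ^ l * f (x * t)) (Set.Icc 0 b) :=
      (((Real.continuous_rpow_const (by linarith)).continuousOn).div_const _).mul
        (aux_cont b _ f hk hf)
    exact h.congr fun x hx => aux_scale l hl1 _ f x hx.1
  · intro F hF x hx
    rw [aux_scale l hl1 _ f x hx.1, abs_mul,
      abs_of_nonneg (div_nonneg (Real.rpow_nonneg hx.1 _) hc.le)]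
    refine (mul_le_mul_of_nonneg_left (aux_bound_s5 b _ f hk hk0 F hF hx)
      (div_nonneg (Real.rpow_nonneg hx.1 _) hc.le)).trans (le_of_eq ?_)
    rw [hkv, hc2]
    have : (2:ℝ) ^ (l + 1/2) ≠ 0 := by positivity
    field_simp
  · have hkt : IntervalIntegrable (fun t : ℝ => (1 - t ^ 2) ^ l * t) MeasureTheory.volume 0 1 :=
      hk.mul_continuousOn continuousOn_id
    have hkt0 : ∀ t ∈ Set.Icc (0:ℝ) 1, 0 ≤ (1 - t ^ 2) ^ l * t := fun t ht =>
      mul_nonneg (hk0 t ht) ht.1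
    set c := 2 ^ (l + 1/2) * Real.Gamma (l + 3/2) with hcdef
    set I := ∫ t in (0:ℝ)..1, (1 - t ^ 2) ^ l with hI
    set J := ∫ t in (0:ℝ)..1, (1 - t ^ 2) ^ l * t with hJ
    have hI0 : 0 ≤ I := intervalIntegral.integral_nonneg zero_le_one hk0
    have hJ0 : 0 ≤ J := intervalIntegral.integral_nonneg zero_le_one hkt0
    refine ⟨(l + 1) * b ^ l / c * I + b ^ (l + 1) / c * J, fun f f' hf hf' => ?_⟩
    have hfc : ContinuousOn f (Set.Icc 0 b) := fun y hy => (hf y hy).continuousWithinAt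
    refine ⟨fun x => (l + 1) * x ^ l / c * (∫ t in (0:ℝ)..1, (1 - t ^ 2) ^ l * f (x * t)) +
      x ^ (l + 1) / c * ∫ t in (0:ℝ)..1, ((1 - t ^ 2) ^ l * t) * f' (x * t), ?_, ?_, ?_⟩
    · exact (((continuousOn_const.mul (Real.continuous_rpow_const hl0).continuousOn).div_const
        _).mul (aux_cont b _ f hk hfc)).add
        ((((Real.continuous_rpow_const (by linarith)).continuousOn).div_const _).mul
        (aux_cont b _ f' hkt hf'))
    · intro x hx
      have h1 : HasDerivAt (fun y : ℝ => y ^ (l + 1) / c) ((l + 1) * x ^ l / c) x := by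
        have := (Real.hasDerivAt_rpow_const (p := l + 1) (Or.inl hx.1.ne')).div_const c
        simpa using this
      refine (h1.mul (aux_deriv_s5 b _ f f' hk hf hf' hx)).congr_of_eventuallyEq ?_
      filter_upwards [Ioo_mem_nhds hx.1 hx.2] with y hy
      exact aux_scale l hl1 c f y hy.1.le
    · intro F F' hF hF' x hx
      have hF0 : 0 ≤ F := (abs_nonneg _).trans (hF x hx)
      have hF0' : 0 ≤ F' := (abs_nonneg _).trans (hF' x hx)
      have hxl : x ^ l ≤ b ^ l := Real.rpow_le_rpow hx.1 hx.2 hl0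
      have hxl1 : x ^ (l + 1) ≤ b ^ (l + 1) := Real.rpow_le_rpow hx.1 hx.2 (by linarith)
      have hx0 : 0 ≤ x ^ l := Real.rpow_nonneg hx.1 _
      have hx1 : 0 ≤ x ^ (l + 1) := Real.rpow_nonneg hx.1 _
      have hl2 : 0 ≤ l + 1 := by linarith
      have hA : 0 ≤ (l + 1) * b ^ l / c * I := by positivity
      have hB : 0 ≤ b ^ (l + 1) / c * J := by positivity
      have b1 : |(l + 1) * x ^ l / c * (∫ t in (0:ℝ)..1, (1 - t ^ 2) ^ l * f (x * t))| ≤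
          (l + 1) * b ^ l / c * (I * F) := by
        rw [abs_mul, abs_of_nonneg (by positivity)]
        have := aux_bound_s5 b _ f hk hk0 F hF hx
        gcongr
      have b2 : |x ^ (l + 1) / c * (∫ t in (0:ℝ)..1, ((1 - t ^ 2) ^ l * t) * f' (x * t))| ≤
          b ^ (l + 1) / c * (J * F') := by
        rw [abs_mul, abs_of_nonneg (by positivity)]
        have := aux_bound_s5 b _ f' hkt hkt0 F' hF' hx
        gcongr
      refine (abs_add_le _ _).trans ((add_le_add b1 b2).trans ?_)
      have := mul_nonneg hA hF0'
      have := mul_nonneg hB hF0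
      nlinarith
end

section
/- Let b > 0, let l ≥ -1/2 be real, and let q : [0,b] → ℂ be continuous. Suppose K is a complex-valued function, twice continuously differentiable on the closed triangle {(x,t) : 0 ≤ t ≤ x ≤ b}, satisfying: (i) ∂²K/∂x² - ∂²K/∂t² - (l(l+1)/x²)K + (l(l+1)/t²)K - q(x)K = 0 for 0 < t ≤ x ≤ b; (ii) d/dx[K(x,x)] = q(x)/2 for x ∈ [0,b]; (iii) K(x,0) = 0 for x ∈ [0,b]. Let φ : [0,b] → ℂ be continuous with φ(0) = 0, twice continuously differentiable on (0,b], such that φ' extends continuously to [0,b] if l ≥ 0, and φ'(t) = O(t^l) as t → 0⁺ if -1/2 ≤ l < 0; assume moreover that for each x ∈ (0,b] the function t ↦ K(x,t)φ''(t) is improperly integrable on (0,x]. Define (Tφ)(x) = φ(x) + ∫₀ˣ K(x,t)φ(t) dt. Then for every x ∈ (0,b], Tφ is twice differentiable at x and (Tφ)''(x) - (l(l+1)/x² + q(x))·(Tφ)(x) = φ''(x) - (l(l+1)/x²)φ(x) + ∫₀ˣ K(x,t)·(φ''(t) - (l(l+1)/t²)φ(t)) dt. -/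
open Set Filter Topology MeasureTheory

/-- Leibniz rule for a globally continuous integrand. -/
theorem leibniz_global (d : ℝ → ℂ) (g : ℝ → ℝ → ℂ) (hd : Continuous d)
    (hg : Continuous (fun p : ℝ × ℝ => g p.1 p.2)) (x : ℝ) :
    HasDerivAt (fun x => ∫ t in (0:ℝ)..x, (d t + ∫ y in t..x, g y t))
      (d x + ∫ t in (0:ℝ)..x, g x t) x := by
  have hgs : Continuous (fun p : ℝ × ℝ => g p.2 p.1) := hg.comp continuous_swap
  have hy : ∀ t, Continuous (fun y => g y t) := fun t =>
    hg.comp (continuous_id.prodMk continuous_const)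
  have ht : ∀ y, Continuous (fun t => g y t) := fun y =>
    hg.comp (continuous_const.prodMk continuous_id)
  -- joint continuity of primitives
  have c1 : Continuous (fun p : ℝ × ℝ => ∫ y in (0:ℝ)..p.2, g y p.1) :=
    intervalIntegral.continuous_parametric_primitive_of_continuous (f := fun t y => g y t) hgs
  have c2 : Continuous (fun p : ℝ × ℝ => ∫ t in (0:ℝ)..p.2, g p.1 t) :=
    intervalIntegral.continuous_parametric_primitive_of_continuous (f := fun y t => g y t) hg
  have c1t : ∀ x, Continuous (fun t => ∫ y in (0:ℝ)..x, g y t) := fun x =>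
    c1.comp (continuous_id.prodMk continuous_const)
  have c1d : Continuous (fun t => ∫ y in (0:ℝ)..t, g y t) :=
    c1.comp (continuous_id.prodMk continuous_id)
  have c2t : ∀ u, Continuous (fun y => ∫ t in (0:ℝ)..u, g y t) := fun u =>
    c2.comp (continuous_id.prodMk continuous_const)
  have hswap : ∀ u x : ℝ, (∫ t in (0:ℝ)..u, ∫ y in (0:ℝ)..x, g y t) =
      ∫ y in (0:ℝ)..x, ∫ t in (0:ℝ)..u, g y t := by
    intro u x
    apply MeasureTheory.intervalIntegral_intervalIntegral_swap
    have : IntegrableOn (fun p : ℝ × ℝ => g p.2 p.1) (uIcc 0 u ×ˢ uIcc 0 x) :=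
      hgs.continuousOn.integrableOn_compact (isCompact_uIcc.prod isCompact_uIcc)
    exact this.mono_set (Set.prod_mono uIoc_subset_uIcc uIoc_subset_uIcc)
  have hH := hasStrictFDerivAt_uncurry_coprod (𝕜 := ℝ) (u := (x, x))
    (f := fun u x => ∫ t in (0:ℝ)..u, ∫ y in (0:ℝ)..x, g y t)
    (f₁ := fun u x => ContinuousLinearMap.toSpanSingleton ℝ (∫ y in (0:ℝ)..x, g y u))
    (f₂ := fun u x => ContinuousLinearMap.toSpanSingleton ℝ (∫ t in (0:ℝ)..u, g x t))
    (Eventually.of_forall fun v => by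
      have := intervalIntegral.integral_hasDerivAt_right ((c1t v.2).intervalIntegrable 0 v.1)
        ((c1t v.2).stronglyMeasurableAtFilter _ _) (c1t v.2).continuousAt
      exact this.hasFDerivAt)
    (Eventually.of_forall fun v => by
      have := intervalIntegral.integral_hasDerivAt_right ((c2t v.1).intervalIntegrable 0 v.2)
        ((c2t v.1).stronglyMeasurableAtFilter _ _) (c2t v.1).continuousAt
      simp only [hswap]
      exact this.hasFDerivAt)
    (by
      have : Continuous fun p : ℝ × ℝ =>
        ContinuousLinearMap.toSpanSingleton ℝ (∫ y in (0:ℝ)..p.2, g y p.1) :=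
        (ContinuousLinearMap.toSpanSingletonCLE (𝕜 := ℝ) (E := ℂ)).continuous.comp c1
      exact this.continuousAt)
    (by
      have : Continuous fun p : ℝ × ℝ =>
        ContinuousLinearMap.toSpanSingleton ℝ (∫ t in (0:ℝ)..p.1, g p.2 t) :=
        (ContinuousLinearMap.toSpanSingletonCLE (𝕜 := ℝ) (E := ℂ)).continuous.comp
          (c2.comp continuous_swap)
      exact this.continuousAt)
  have hdiagd : HasDerivAt (fun x : ℝ => (x, x)) ((1:ℝ), (1:ℝ)) x :=
    (hasDerivAt_id x).prodMk (hasDerivAt_id x)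
  have hH2 : HasDerivAt (fun x => ∫ t in (0:ℝ)..x, ∫ y in (0:ℝ)..x, g y t)
      ((∫ y in (0:ℝ)..x, g y x) + ∫ t in (0:ℝ)..x, g x t) x := by
    have := HasFDerivAt.comp_hasDerivAt (f := fun x : ℝ => (x, x)) x
      (HasStrictFDerivAt.hasFDerivAt hH) hdiagd
    simpa [Function.HasUncurry.uncurry, Function.comp_def] using this
  have hD := intervalIntegral.integral_hasDerivAt_right (hd.intervalIntegrable 0 x)
        (hd.stronglyMeasurableAtFilter _ _) hd.continuousAt
  have hP := intervalIntegral.integral_hasDerivAt_right (c1d.intervalIntegrable 0 x)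
        (c1d.stronglyMeasurableAtFilter _ _) c1d.continuousAt
  have := (hD.add hH2).sub hP
  have hval : d x + ∫ t in (0:ℝ)..x, g x t = d x + ((∫ y in (0:ℝ)..x, g y x) +
      ∫ t in (0:ℝ)..x, g x t) - ∫ y in (0:ℝ)..x, g y x := by ring
  rw [hval]
  refine this.congr_of_eventuallyEq (Eventually.of_forall fun x => ?_)
  · simp only [Pi.add_apply, Pi.sub_apply]
    have hdx : Continuous (fun t => d t + ∫ y in (0:ℝ)..x, g y t) := hd.add (c1t x)
    rw [← intervalIntegral.integral_add (hd.intervalIntegrable _ _)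
      ((c1t x).intervalIntegrable _ _), ← intervalIntegral.integral_sub
      (hdx.intervalIntegrable _ _) (c1d.intervalIntegrable _ _)]
    apply intervalIntegral.integral_congr
    intro t _
    simp only
    rw [add_sub_assoc, intervalIntegral.integral_interval_sub_left
      ((hy t).intervalIntegrable _ _) ((hy t).intervalIntegrable _ _)]

/-- Leibniz rule on the closed triangle. -/
theorem leibniz_triangle (b : ℝ) (G Gx : ℝ → ℝ → ℂ)
    (hG : ContinuousOn (fun p : ℝ × ℝ => G p.1 p.2)
      {p : ℝ × ℝ | 0 ≤ p.2 ∧ p.2 ≤ p.1 ∧ p.1 ≤ b})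
    (hGx : ∀ x t : ℝ, 0 ≤ t → t ≤ x → x ≤ b →
      HasDerivWithinAt (fun y => G y t) (Gx x t) (Set.Icc t b) x)
    (hGxc : ContinuousOn (fun p : ℝ × ℝ => Gx p.1 p.2)
      {p : ℝ × ℝ | 0 ≤ p.2 ∧ p.2 ≤ p.1 ∧ p.1 ≤ b})
    (x : ℝ) (hx : x ∈ Ioc 0 b) :
    HasDerivWithinAt (fun x => ∫ t in (0:ℝ)..x, G x t) (G x x + ∫ t in (0:ℝ)..x, Gx x t)
      (Ioc 0 b) x := by
  have hb : 0 < b := hx.1.trans_le hx.2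
  set c : ℝ → ℝ := fun s => max 0 (min s b) with hc
  have hcc : Continuous c := by fun_prop
  have c0 : ∀ s, 0 ≤ c s := fun s => le_max_left _ _
  have cb : ∀ s, c s ≤ b := fun s => max_le hb.le (min_le_right _ _)
  have ceq : ∀ s, 0 ≤ s → s ≤ b → c s = s := fun s h1 h2 => by
    simp [hc, min_eq_left h2, max_eq_right h1]
  have hd : Continuous (fun t => G (c t) (c t)) :=
    hG.comp_continuous (f := fun t => (c t, c t)) (hcc.prodMk hcc)
      (fun t => ⟨c0 t, le_rfl, cb t⟩)
  have hg : Continuous (fun p : ℝ × ℝ => Gx (max (c p.1) (c p.2)) (c p.2)) :=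
    hGxc.comp_continuous (f := fun p : ℝ × ℝ => (max (c p.1) (c p.2), c p.2))
      (by fun_prop) (fun p => ⟨c0 _, le_max_right _ _, max_le (cb _) (cb _)⟩)
  have key := (leibniz_global (fun t => G (c t) (c t))
    (fun y t => Gx (max (c y) (c t)) (c t)) hd hg x).hasDerivWithinAt (s := Ioc 0 b)
  have hF : ∀ x ∈ Ioc 0 b, (∫ t in (0:ℝ)..x, G x t) = ∫ t in (0:ℝ)..x,
      (G (c t) (c t) + ∫ y in t..x, Gx (max (c y) (c t)) (c t)) := by
    intro x hx
    apply intervalIntegral.integral_congr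
    intro t ht
    rw [uIcc_of_le hx.1.le] at ht
    have e1 : c t = t := ceq t ht.1 (ht.2.trans hx.2)
    have e2 : (∫ y in t..x, Gx (max (c y) (c t)) (c t)) = G x t - G t t := by
      apply intervalIntegral.integral_eq_sub_of_hasDeriv_right_of_le ht.2
      · intro y hy
        exact ((hGx y t ht.1 hy.1 (hy.2.trans hx.2)).continuousWithinAt).mono
          (Icc_subset_Icc_right hx.2)
      · intro y hy
        have hyb : y < b := hy.2.trans_le hx.2
        have : max (c y) (c t) = y := by
          rw [e1, ceq y (ht.1.trans hy.1.le) hyb.le, max_eq_left hy.1.le]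
        simp only [this]
        rw [e1]
        exact ((hGx y t ht.1 hy.1.le hyb.le).hasDerivAt (Icc_mem_nhds hy.1 hyb)).hasDerivWithinAt
      · have : Continuous fun y => Gx (max (c y) (c t)) (c t) :=
          hg.comp (continuous_id.prodMk continuous_const)
        exact this.intervalIntegrable _ _
    simp only [e1] at e2 ⊢
    rw [e2]
    ring
  have hF' : (∫ t in (0:ℝ)..x, Gx x t) = ∫ t in (0:ℝ)..x, Gx (max (c x) (c t)) (c t) := by
    apply intervalIntegral.integral_congr
    intro t ht
    rw [uIcc_of_le hx.1.le] at ht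
    simp only [ceq t ht.1 (ht.2.trans hx.2), ceq x hx.1.le hx.2, max_eq_left ht.2]
  have ex : c x = x := ceq x hx.1.le hx.2
  rw [← hF'] at key
  simp only [ex] at key
  exact key.congr hF (hF x hx)

/-- The derivative along the diagonal. -/
theorem diag_deriv (b : ℝ) (K Kx : ℝ → ℝ → ℂ) (Ktx : ℂ) (D : ℂ) (x : ℝ) (hx : x ∈ Ioc 0 b)
    (hKx : ∀ x t : ℝ, 0 ≤ t → t ≤ x → x ≤ b →
      HasDerivWithinAt (fun y => K y t) (Kx x t) (Set.Icc t b) x)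
    (hKxc : ContinuousOn (fun p : ℝ × ℝ => Kx p.1 p.2)
      {p : ℝ × ℝ | 0 ≤ p.2 ∧ p.2 ≤ p.1 ∧ p.1 ≤ b})
    (hKt : HasDerivWithinAt (fun s => K x s) Ktx (Set.Icc 0 x) x)
    (hD : HasDerivWithinAt (fun y => K y y) D (Set.Icc 0 b) x) :
    D = Kx x x + Ktx := by
  have hmono : Icc 0 x ⊆ Icc 0 b := Icc_subset_Icc_right hx.2
  have hD' := hD.mono hmono
  have h1 : HasDerivWithinAt (fun s => K x s - K s s) (Ktx - D) (Icc 0 x) x := hKt.sub hD'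
  have h2 : HasDerivWithinAt (fun s => K x s - K s s) (-Kx x x) (Icc 0 x) x := by
    rw [hasDerivWithinAt_iff_isLittleO, Asymptotics.isLittleO_iff]
    intro ε hε
    have hc := hKxc (x, x) ⟨hx.1.le, le_rfl, hx.2⟩
    obtain ⟨δ, hδ, hδ2⟩ := Metric.continuousWithinAt_iff.1 hc ε hε
    have hev : ∀ᶠ s in 𝓝[Icc 0 x] x, dist s x < δ :=
      mem_nhdsWithin_of_mem_nhds (Metric.ball_mem_nhds x hδ)
    filter_upwards [hev, self_mem_nhdsWithin] with s hs hs2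
    have hm := (convex_Icc s x).norm_image_sub_le_of_norm_hasDerivWithin_le
      (f := fun y : ℝ => K y s - (y : ℝ) • Kx x x) (f' := fun y => Kx y s - (1:ℝ) • Kx x x)
      (C := ε) (x := s) (y := x)
      (fun y hy => (((hKx y s hs2.1 hy.1 (hy.2.trans hx.2)).mono
        (Icc_subset_Icc_right hx.2))).sub ((hasDerivWithinAt_id y _).smul_const _))
      (fun y hy => by
        have hd : dist (y, s) (x, x) < δ := by
          rw [Prod.dist_eq]
          refine max_lt (lt_of_le_of_lt ?_ hs) hs
          simp only [Real.dist_eq]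
          rw [abs_sub_comm, abs_of_nonneg (by linarith [hy.2]), abs_sub_comm,
            abs_of_nonneg (by linarith [hs2.2])]
          linarith [hy.1]
        have := hδ2 (x := (y, s)) ⟨hs2.1, hy.1, hy.2.trans hx.2⟩ hd
        rw [dist_eq_norm] at this
        simpa using this.le)
      ⟨le_rfl, hs2.2⟩ ⟨hs2.2, le_rfl⟩
    rw [norm_sub_rev s x]
    refine le_trans (le_of_eq ?_) hm
    congr 1
    simp only [Complex.real_smul]
    push_cast
    ring
  have hu : UniqueDiffWithinAt ℝ (Icc 0 x) x :=
    uniqueDiffOn_Icc hx.1 x ⟨hx.1.le, le_rfl⟩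
  have := hu.eq_deriv _ h1 h2
  linear_combination (-1 : ℂ) * this

/-- The transmutation property `L T φ = T L₀ φ`, where
`L = d²/dx² - (l(l+1)/x² + q(x))`, `L₀ = d²/dx² - l(l+1)/x²` and
`(Tφ)(x) = φ(x) + ∫₀ˣ K(x,t) φ(t) dt`. -/
theorem stmt_8 (b l : ℝ) (hb : 0 < b) (hl : -(1/2) ≤ l)
    (q : ℝ → ℂ) (hq : ContinuousOn q (Set.Icc 0 b))
    (K Kx Kxx Kt Ktt : ℝ → ℝ → ℂ)
    (hKc : ContinuousOn (fun p : ℝ × ℝ => K p.1 p.2)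
      {p : ℝ × ℝ | 0 ≤ p.2 ∧ p.2 ≤ p.1 ∧ p.1 ≤ b})
    (hKx : ∀ x t : ℝ, 0 ≤ t → t ≤ x → x ≤ b →
      HasDerivWithinAt (fun y => K y t) (Kx x t) (Set.Icc t b) x)
    (hKxx : ∀ x t : ℝ, 0 ≤ t → t ≤ x → x ≤ b →
      HasDerivWithinAt (fun y => Kx y t) (Kxx x t) (Set.Icc t b) x)
    (hKt : ∀ x t : ℝ, 0 ≤ t → t ≤ x → x ≤ b →
      HasDerivWithinAt (fun s => K x s) (Kt x t) (Set.Icc 0 x) t)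
    (hKtt : ∀ x t : ℝ, 0 ≤ t → t ≤ x → x ≤ b →
      HasDerivWithinAt (fun s => Kt x s) (Ktt x t) (Set.Icc 0 x) t)
    (hC2 : ContinuousOn (fun p : ℝ × ℝ => (Kx p.1 p.2, Kxx p.1 p.2, Kt p.1 p.2, Ktt p.1 p.2))
      {p : ℝ × ℝ | 0 ≤ p.2 ∧ p.2 ≤ p.1 ∧ p.1 ≤ b})
    (hPDE : ∀ x t : ℝ, 0 < t → t ≤ x → x ≤ b →
      Kxx x t - Ktt x t - ((l * (l + 1) / x ^ 2 : ℝ) : ℂ) * K x t +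
        ((l * (l + 1) / t ^ 2 : ℝ) : ℂ) * K x t - q x * K x t = 0)
    (hdiag : ∀ x ∈ Set.Icc (0:ℝ) b, HasDerivWithinAt (fun y => K y y) (q x / 2) (Set.Icc 0 b) x)
    (hK0 : ∀ x ∈ Set.Icc (0:ℝ) b, K x 0 = 0)
    (φ φ' φ'' : ℝ → ℂ)
    (hφc : ContinuousOn φ (Set.Icc 0 b)) (hφ0 : φ 0 = 0)
    (hφ1 : ∀ x ∈ Set.Ioc (0:ℝ) b, HasDerivWithinAt φ (φ' x) (Set.Ioc 0 b) x)
    (hφ2 : ∀ x ∈ Set.Ioc (0:ℝ) b, HasDerivWithinAt φ' (φ'' x) (Set.Ioc 0 b) x)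
    (hφ2c : ContinuousOn φ'' (Set.Ioc 0 b))
    (hext : 0 ≤ l → ∃ ψ : ℝ → ℂ, ContinuousOn ψ (Set.Icc 0 b) ∧
      ∀ x ∈ Set.Ioc (0:ℝ) b, ψ x = φ' x)
    (hO : l < 0 → Asymptotics.IsBigO (nhdsWithin (0:ℝ) (Set.Ioi 0)) φ' fun t : ℝ => t ^ l)
    (hint : ∀ x ∈ Set.Ioc (0:ℝ) b,
      MeasureTheory.IntegrableOn (fun t => K x t * φ'' t) (Set.Ioc 0 x))
    (T : ℝ → ℂ)
    (hT : ∀ x : ℝ, T x = φ x + ∫ t in (0:ℝ)..x, K x t * φ t) :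
    ∃ T' T'' : ℝ → ℂ,
      (∀ x ∈ Set.Ioc (0:ℝ) b, HasDerivWithinAt T (T' x) (Set.Ioc 0 b) x) ∧
      (∀ x ∈ Set.Ioc (0:ℝ) b, HasDerivWithinAt T' (T'' x) (Set.Ioc 0 b) x) ∧
      ∀ x ∈ Set.Ioc (0:ℝ) b,
        T'' x - (((l * (l + 1) / x ^ 2 : ℝ) : ℂ) + q x) * T x =
          φ'' x - ((l * (l + 1) / x ^ 2 : ℝ) : ℂ) * φ x +
            ∫ t in (0:ℝ)..x, K x t * (φ'' t - ((l * (l + 1) / t ^ 2 : ℝ) : ℂ) * φ t) := by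
  have hKxc : ContinuousOn (fun p : ℝ × ℝ => Kx p.1 p.2)
      {p : ℝ × ℝ | 0 ≤ p.2 ∧ p.2 ≤ p.1 ∧ p.1 ≤ b} := hC2.fst
  have hKxxc : ContinuousOn (fun p : ℝ × ℝ => Kxx p.1 p.2)
      {p : ℝ × ℝ | 0 ≤ p.2 ∧ p.2 ≤ p.1 ∧ p.1 ≤ b} := hC2.snd.fst
  have hKttc : ContinuousOn (fun p : ℝ × ℝ => Ktt p.1 p.2)
      {p : ℝ × ℝ | 0 ≤ p.2 ∧ p.2 ≤ p.1 ∧ p.1 ≤ b} := hC2.snd.snd.snd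
  have hφp : ContinuousOn (fun p : ℝ × ℝ => φ p.2)
      {p : ℝ × ℝ | 0 ≤ p.2 ∧ p.2 ≤ p.1 ∧ p.1 ≤ b} :=
    hφc.comp continuousOn_snd (fun p hp => ⟨hp.1, hp.2.1.trans hp.2.2⟩)
  have hL1 : ∀ x ∈ Ioc (0:ℝ) b, HasDerivWithinAt (fun x => ∫ t in (0:ℝ)..x, K x t * φ t)
      (K x x * φ x + ∫ t in (0:ℝ)..x, Kx x t * φ t) (Ioc 0 b) x := fun x hx =>
    leibniz_triangle b (fun x t => K x t * φ t) (fun x t => Kx x t * φ t) (hKc.mul hφp)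
      (fun x t h1 h2 h3 => (hKx x t h1 h2 h3).mul_const (φ t)) (hKxc.mul hφp) x hx
  have hL2 : ∀ x ∈ Ioc (0:ℝ) b, HasDerivWithinAt (fun x => ∫ t in (0:ℝ)..x, Kx x t * φ t)
      (Kx x x * φ x + ∫ t in (0:ℝ)..x, Kxx x t * φ t) (Ioc 0 b) x := fun x hx =>
    leibniz_triangle b (fun x t => Kx x t * φ t) (fun x t => Kxx x t * φ t) (hKxc.mul hφp)
      (fun x t h1 h2 h3 => (hKxx x t h1 h2 h3).mul_const (φ t)) (hKxxc.mul hφp) x hx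
  refine ⟨fun x => φ' x + (K x x * φ x + ∫ t in (0:ℝ)..x, Kx x t * φ t),
    fun x => φ'' x + ((q x / 2 * φ x + K x x * φ' x) +
      (Kx x x * φ x + ∫ t in (0:ℝ)..x, Kxx x t * φ t)), ?_, ?_, ?_⟩
  · intro x hx
    have hTf : T = fun x => φ x + ∫ t in (0:ℝ)..x, K x t * φ t := funext hT
    rw [hTf]
    exact (hφ1 x hx).add (hL1 x hx)
  · intro x hx
    exact (hφ2 x hx).add ((((hdiag x ⟨hx.1.le, hx.2⟩).mono Ioc_subset_Icc_self).mul
      (hφ1 x hx)).add (hL2 x hx))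
  intro x hx
  have hD := diag_deriv b K Kx (Kt x x) (q x / 2) x hx hKx hKxc (hKt x x hx.1.le le_rfl hx.2)
    (hdiag x ⟨hx.1.le, hx.2⟩)
  have hsec : ∀ F : ℝ → ℝ → ℂ, ContinuousOn (fun p : ℝ × ℝ => F p.1 p.2)
      {p : ℝ × ℝ | 0 ≤ p.2 ∧ p.2 ≤ p.1 ∧ p.1 ≤ b} → ContinuousOn (fun t => F x t) (Icc 0 x) :=
    fun F hF => hF.comp (f := fun t => (x, t)) (by fun_prop) (fun t ht => ⟨ht.1, ht.2, hx.2⟩)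
  have sφ : ContinuousOn φ (Icc 0 x) := hφc.mono (Icc_subset_Icc_right hx.2)
  have sK := hsec K hKc
  have sKxx := hsec Kxx hKxxc
  have sKtt := hsec Ktt hKttc
  have hI : ∀ f : ℝ → ℂ, ContinuousOn f (Icc 0 x) → IntervalIntegrable f volume 0 x :=
    fun f hf => by
      apply ContinuousOn.intervalIntegrable
      rwa [uIcc_of_le hx.1.le]
  have iK : IntervalIntegrable (fun t => K x t * φ t) volume 0 x := hI _ (sK.mul sφ)
  have iKxx : IntervalIntegrable (fun t => Kxx x t * φ t) volume 0 x := hI _ (sKxx.mul sφ)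
  have iKtt : IntervalIntegrable (fun t => Ktt x t * φ t) volume 0 x := hI _ (sKtt.mul sφ)
  have iφ : IntervalIntegrable (fun t => K x t * φ'' t) volume 0 x :=
    (intervalIntegrable_iff_integrableOn_Ioc_of_le hx.1.le).2 (hint x hx)
  have hKO : (fun t => K x t) =O[𝓝[>] (0:ℝ)] (fun t : ℝ => t) := by
    have h := (hKt x 0 le_rfl hx.1.le hx.2).differentiableWithinAt.isBigO_sub
    have hle : 𝓝[>] (0:ℝ) ≤ 𝓝[Icc 0 x] 0 := by
      rw [← nhdsWithin_Ioc_eq_nhdsGT hx.1]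
      exact nhdsWithin_mono _ Ioc_subset_Icc_self
    simpa [hK0 x ⟨hx.1.le, hx.2⟩] using h.mono hle
  have hid : Tendsto (fun t : ℝ => t) (𝓝[>] 0) (𝓝 0) := tendsto_id.mono_left nhdsWithin_le_nhds
  have hlim : Tendsto (fun t => K x t * φ' t) (𝓝[>] 0) (𝓝 0) := by
    rcases le_or_gt 0 l with h0 | h0
    · obtain ⟨ψ, hψ, hψe⟩ := hext h0
      have h1 : Tendsto ψ (𝓝[>] 0) (𝓝 (ψ 0)) := by
        rw [← nhdsWithin_Ioc_eq_nhdsGT hb]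
        exact (hψ 0 ⟨le_rfl, hb.le⟩).mono_left (nhdsWithin_mono _ Ioc_subset_Icc_self)
      have h2 : Tendsto (fun t => K x t) (𝓝[>] 0) (𝓝 0) := hKO.trans_tendsto hid
      have h3 := h2.mul h1
      rw [zero_mul] at h3
      refine h3.congr' ?_
      filter_upwards [Ioc_mem_nhdsGT hb] with t ht
      rw [hψe t ht]
    · have h1 := hKO.mul (hO h0)
      refine h1.trans_tendsto ?_
      have h2 : Tendsto (fun t : ℝ => t ^ (l + 1)) (𝓝[>] 0) (𝓝 0) := by
        have : ContinuousAt (fun t : ℝ => t ^ (l + 1)) 0 :=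
          Real.continuousAt_rpow_const 0 (l + 1) (Or.inr (by linarith))
        have h := this.tendsto.mono_left (nhdsWithin_le_nhds (s := Ioi 0))
        rwa [Real.zero_rpow (by linarith)] at h
      refine h2.congr' ?_
      filter_upwards [self_mem_nhdsWithin] with t ht
      rw [Real.rpow_add_one (ne_of_gt ht), mul_comm]
  have hKtc : ContinuousOn (fun t => Kt x t) (Icc 0 x) := fun t ht =>
    (hKtt x t ht.1 ht.2 hx.2).continuousWithinAt
  have hφ'c : ContinuousOn φ' (Ioc 0 b) := fun t ht => (hφ2 t ht).continuousWithinAt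
  have hparts : (∫ t in (0:ℝ)..x, (Ktt x t * φ t - K x t * φ'' t)) =
      (Kt x x * φ x - K x x * φ' x) - 0 := by
    apply intervalIntegral.integral_eq_sub_of_hasDerivAt_of_tendsto
      (f := fun t => Kt x t * φ t - K x t * φ' t) hx.1
    · intro t ht
      have htb : t < b := ht.2.trans_le hx.2
      have d1 := (hKtt x t ht.1.le ht.2.le hx.2).hasDerivAt (Icc_mem_nhds ht.1 ht.2)
      have d2 := (hKt x t ht.1.le ht.2.le hx.2).hasDerivAt (Icc_mem_nhds ht.1 ht.2)
      have d3 := (hφ1 t ⟨ht.1, htb.le⟩).hasDerivAt (Ioc_mem_nhds ht.1 htb)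
      have d4 := (hφ2 t ⟨ht.1, htb.le⟩).hasDerivAt (Ioc_mem_nhds ht.1 htb)
      have d5 := (d1.mul d3).sub (d2.mul d4)
      have e : Ktt x t * φ t - K x t * φ'' t = Ktt x t * φ t + Kt x t * φ' t -
          (Kt x t * φ' t + K x t * φ'' t) := by ring
      rw [e]
      exact d5
    · exact iKtt.sub iφ
    · have h1 : Tendsto (fun t => Kt x t * φ t) (𝓝[>] 0) (𝓝 (Kt x 0 * φ 0)) := by
        rw [← nhdsWithin_Ioc_eq_nhdsGT hx.1]
        exact ((hKtc.mul sφ) 0 ⟨le_rfl, hx.1.le⟩).mono_left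
          (nhdsWithin_mono _ Ioc_subset_Icc_self)
      have h2 := h1.sub hlim
      rwa [hφ0, mul_zero, sub_zero] at h2
    · have h1 : ContinuousOn (fun t => Kt x t * φ t - K x t * φ' t) (Ioc 0 x) :=
        ((hKtc.mul sφ).mono Ioc_subset_Icc_self).sub
          ((sK.mono Ioc_subset_Icc_self).mul (hφ'c.mono (Ioc_subset_Ioc_right hx.2)))
      rw [← nhdsWithin_Ioo_eq_nhdsLT hx.1]
      exact (h1 x ⟨hx.1, le_rfl⟩).mono_left (nhdsWithin_mono _ Ioo_subset_Ioc_self)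
  have hR : (∫ t in (0:ℝ)..x, K x t * (φ'' t - ((l * (l + 1) / t ^ 2 : ℝ) : ℂ) * φ t)) =
      ∫ t in (0:ℝ)..x, (Kxx x t * φ t - (((l * (l + 1) / x ^ 2 : ℝ) : ℂ) + q x) * (K x t * φ t)
        - (Ktt x t * φ t - K x t * φ'' t)) := by
    rw [intervalIntegral.integral_of_le hx.1.le, intervalIntegral.integral_of_le hx.1.le]
    apply setIntegral_congr_fun measurableSet_Ioc
    intro t ht
    have := hPDE x t ht.1 ht.2 hx.2
    simp only
    linear_combination (-φ t) * this
  rw [hR, intervalIntegral.integral_sub (iKxx.sub (iK.const_mul _)) (iKtt.sub iφ), hparts,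
    intervalIntegral.integral_sub iKxx (iK.const_mul _), intervalIntegral.integral_const_mul, hT x]
  beta_reduce
  linear_combination (-φ x) * hD
end

section
/- Let b > 0, let l ≥ -1/2 be real, and let q : [0,b] → ℂ be continuous. Suppose K : [0,b] × [0,b] → ℂ is continuous, its restrictions to the closed triangles {0 ≤ t ≤ x ≤ b} and {0 ≤ x ≤ t ≤ b} are twice continuously differentiable, and K satisfies: (i) ∂²K/∂x² - ∂²K/∂t² - (l(l+1)/x²)K + (l(l+1)/t²)K - q(x)K = 0 for 0 < t ≤ x ≤ b; (ii) d/dx[K(x,x)] = q(x)/2 for x ∈ [0,b]; (iii) K(x,0) = 0 and K(0,t) = 0 for all x, t ∈ [0,b]. For 0 < x < τ < b define k(x,τ) = K(x,τ) - ∫₀ˣ K(t,x)K(t,τ) dt, and define (T[k(·,τ)])(x) = k(x,τ) + ∫₀ˣ K(x,t)k(t,τ) dt. Then for all 0 < x < τ < b: d²/dx²[(T[k(·,τ)])(x)] - (l(l+1)/x² + q(x))·(T[k(·,τ)])(x) = [∂²k/∂x²(x,τ) - (l(l+1)/x²)k(x,τ)] + ∫₀ˣ K(x,t)·[∂²k/∂x²(t,τ)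 - (l(l+1)/t²)k(t,τ)] dt, where ∂²k/∂x²(t,τ) denotes the second partial derivative of k in its first variable evaluated at (t,τ). -/
section
open Set MeasureTheory Filter Topology

/-- Continuous extension from the triangle `0 ≤ t ≤ x ≤ c` to the plane. -/
lemma aux_ext (c : ℝ) (hc : 0 ≤ c) (G : ℝ → ℝ → ℂ)
    (hG : ContinuousOn (fun p : ℝ × ℝ => G p.1 p.2) {p : ℝ × ℝ | 0 ≤ p.2 ∧ p.2 ≤ p.1 ∧ p.1 ≤ c}) :
    ∃ H : ℝ → ℝ → ℂ, Continuous (fun p : ℝ × ℝ => H p.1 p.2) ∧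
      ∀ x t, 0 ≤ t → t ≤ x → x ≤ c → H x t = G x t := by
  refine ⟨fun x t => G (max 0 (min x c)) (max 0 (min t (max 0 (min x c)))), ?_, ?_⟩
  · have := hG.comp_continuous (f := fun p : ℝ × ℝ =>
      ((max 0 (min p.1 c)), (max 0 (min p.2 (max 0 (min p.1 c)))))) (by fun_prop) ?_
    · exact this
    · intro p
      refine ⟨le_max_left _ _, max_le (le_max_left _ _) (min_le_right _ _),
        max_le hc (min_le_right _ _)⟩
  · intro x t h0 h1 h2
    have hx : max 0 (min x c) = x := by rw [min_eq_left h2, max_eq_right (h0.trans h1)]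
    simp only [hx]
    rw [min_eq_left h1, max_eq_right h0]

lemma aux_cont_s9 (c : ℝ) (hc : 0 ≤ c) (F : ℝ → ℝ → ℂ)
    (hF : ContinuousOn (fun p : ℝ × ℝ => F p.1 p.2) {p : ℝ × ℝ | 0 ≤ p.2 ∧ p.2 ≤ p.1 ∧ p.1 ≤ c}) :
    ContinuousOn (fun x => ∫ t in (0:ℝ)..x, F x t) (Icc 0 c) := by
  obtain ⟨H, hH, hHF⟩ := aux_ext c hc F hF
  have h1 : Continuous (fun x => ∫ t in (0:ℝ)..x, H x t) :=
    intervalIntegral.continuous_parametric_intervalIntegral_of_continuous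
      (f := H) hH continuous_id
  refine h1.continuousOn.congr ?_
  intro x hx
  refine intervalIntegral.integral_congr ?_
  intro t ht
  rw [uIcc_of_le hx.1] at ht
  exact (hHF x t ht.1 ht.2 hx.2).symm

/-- Leibniz rule on the plane. -/
lemma aux_leib_plane (F G : ℝ → ℝ → ℂ)
    (hF : Continuous (fun p : ℝ × ℝ => F p.1 p.2))
    (hG : Continuous (fun p : ℝ × ℝ => G p.1 p.2))
    (hFG : ∀ x t, HasDerivAt (fun y => F y t) (G x t) x) (x : ℝ) :
    HasDerivAt (fun y => ∫ t in (0:ℝ)..y, F y t) (F x x + ∫ t in (0:ℝ)..x, G x t) x := by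
  have hFx : ∀ x, Continuous (F x) := fun x => hF.comp (by fun_prop : Continuous fun t => (x, t))
  have hGx : ∀ x, Continuous (G x) := fun x => hG.comp (by fun_prop : Continuous fun t => (x, t))
  let Φ : ℝ → ℝ → ℂ := fun y z => ∫ t in (0:ℝ)..z, F y t
  have hd1 : ∀ y z, HasDerivAt (fun y => Φ y z) (∫ t in (0:ℝ)..z, G y t) y := by
    intro y z
    obtain ⟨M, hM⟩ := ((isCompact_Icc (a := y - 1) (b := y + 1)).prod
      (isCompact_uIcc (a := (0:ℝ)) (b := z))).exists_bound_of_continuousOn hG.continuousOn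
    refine (intervalIntegral.hasDerivAt_integral_of_dominated_loc_of_deriv_le
      (F := F) (F' := G) (bound := fun _ => M) (s := Icc (y-1) (y+1))
      (Icc_mem_nhds (by linarith) (by linarith)) ?_ ?_ ?_ ?_ ?_ ?_).2
    · exact Eventually.of_forall fun x => (hFx x).aestronglyMeasurable
    · exact (hFx y).intervalIntegrable _ _
    · exact (hGx y).aestronglyMeasurable
    · refine Eventually.of_forall fun t ht x hx => hM (x, t) ⟨hx, uIoc_subset_uIcc ht⟩
    · exact continuous_const.intervalIntegrable _ _
    · exact Eventually.of_forall fun t ht x hx => hFG x t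
  have hd2 : ∀ y z, HasDerivAt (fun z => Φ y z) (F y z) z := fun y z =>
    intervalIntegral.integral_hasDerivAt_right ((hFx y).intervalIntegrable _ _)
      (hFx y).stronglyMeasurable.stronglyMeasurableAtFilter (hFx y).continuousAt
  have hc1 : Continuous (fun p : ℝ × ℝ => ∫ t in (0:ℝ)..p.2, G p.1 t) :=
    intervalIntegral.continuous_parametric_intervalIntegral_of_continuous
      (f := fun (p : ℝ × ℝ) t => G p.1 t)
      (hG.comp (by fun_prop : Continuous fun q : (ℝ × ℝ) × ℝ => (q.1.1, q.2))) continuous_snd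
  have key := hasStrictFDerivAt_uncurry_coprod (𝕜 := ℝ) (u := (x, x)) (f := Φ)
    (f₁ := fun y z => ContinuousLinearMap.toSpanSingleton ℝ (∫ t in (0:ℝ)..z, G y t))
    (f₂ := fun y z => ContinuousLinearMap.toSpanSingleton ℝ (F y z))
    (Eventually.of_forall fun v => (hd1 v.1 v.2).hasFDerivAt)
    (Eventually.of_forall fun v => (hd2 v.1 v.2).hasFDerivAt)
    (Continuous.continuousAt ((ContinuousLinearMap.toSpanSingletonCLE (𝕜 := ℝ) (E := ℂ)).continuous.comp hc1))
    (Continuous.continuousAt ((ContinuousLinearMap.toSpanSingletonCLE (𝕜 := ℝ) (E := ℂ)).continuous.comp hF))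
  have h3 : HasDerivAt (fun y : ℝ => (y, y)) ((1:ℝ), (1:ℝ)) x :=
    (hasDerivAt_id x).prodMk (hasDerivAt_id x)
  have := HasFDerivAt.comp_hasDerivAt (f := fun y : ℝ => (y, y)) x key.hasFDerivAt h3
  refine HasDerivAt.congr_deriv (f := fun y => ∫ t in (0:ℝ)..y, F y t) this ?_
  change (1:ℝ) • (∫ t in (0:ℝ)..x, G x t) + (1:ℝ) • F x x = _
  rw [one_smul, one_smul, add_comm]

lemma aux_leib (c : ℝ) (hc : 0 < c) (F G : ℝ → ℝ → ℂ)
    (hF : ContinuousOn (fun p : ℝ × ℝ => F p.1 p.2) {p : ℝ × ℝ | 0 ≤ p.2 ∧ p.2 ≤ p.1 ∧ p.1 ≤ c})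
    (hG : ContinuousOn (fun p : ℝ × ℝ => G p.1 p.2) {p : ℝ × ℝ | 0 ≤ p.2 ∧ p.2 ≤ p.1 ∧ p.1 ≤ c})
    (hFG : ∀ x t, 0 ≤ t → t ≤ x → x ≤ c → HasDerivWithinAt (fun y => F y t) (G x t) (Icc t c) x)
    (x : ℝ) (hx : x ∈ Ioo 0 c) :
    HasDerivAt (fun y => ∫ t in (0:ℝ)..y, F y t) (F x x + ∫ t in (0:ℝ)..x, G x t) x := by
  obtain ⟨F0, hF0, hF0e⟩ := aux_ext c hc.le F hF
  obtain ⟨H, hH, hHe⟩ := aux_ext c hc.le G hG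
  have hHx : ∀ t, Continuous (fun s => H s t) :=
    fun t => hH.comp (by fun_prop : Continuous fun s => (s, t))
  let E : ℝ → ℝ → ℂ := fun y t => F0 t t + ∫ s in t..y, H s t
  have hEe : ∀ x t, 0 ≤ t → t ≤ x → x ≤ c → E x t = F x t := by
    intro x t h0 h1 h2
    have : ∫ s in t..x, H s t = F x t - F t t := by
      refine intervalIntegral.integral_eq_sub_of_hasDerivAt_of_le h1 (f := fun s => F s t) ?_ ?_
        ((hHx t).intervalIntegrable _ _)
      · intro s hs
        exact ((hFG s t h0 hs.1 (hs.2.trans h2)).continuousWithinAt).mono (Icc_subset_Icc_right h2)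
      · intro s hs
        rw [hHe s t h0 hs.1.le (hs.2.le.trans h2)]
        exact (hFG s t h0 hs.1.le (hs.2.le.trans h2)).hasDerivAt
          (Icc_mem_nhds hs.1 (hs.2.trans_le h2))
    simp only [E]
    rw [this, hF0e t t h0 le_rfl (h1.trans h2)]; ring
  have hEc : Continuous (fun p : ℝ × ℝ => E p.1 p.2) := by
    have h1 : ∀ p : ℝ × ℝ, E p.1 p.2 = F0 p.2 p.2 +
        ((∫ s in (0:ℝ)..p.1, H s p.2) - ∫ s in (0:ℝ)..p.2, H s p.2) := by
      intro p
      rw [intervalIntegral.integral_interval_sub_left ((hHx _).intervalIntegrable _ _)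
        ((hHx _).intervalIntegrable _ _)]
    simp_rw [h1]
    have h2 : Continuous (Function.uncurry fun (p : ℝ × ℝ) s => H s p.2) :=
      hH.comp (by fun_prop : Continuous fun q : (ℝ × ℝ) × ℝ => (q.2, q.1.2))
    refine Continuous.add (hF0.comp (by fun_prop : Continuous fun p : ℝ × ℝ => (p.2, p.2)))
      (Continuous.sub ?_ ?_)
    · exact intervalIntegral.continuous_parametric_intervalIntegral_of_continuous h2 continuous_fst
    · exact intervalIntegral.continuous_parametric_intervalIntegral_of_continuous h2 continuous_snd
  have hEd : ∀ x t, HasDerivAt (fun y => E y t) (H x t) x := fun x t =>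
    (intervalIntegral.integral_hasDerivAt_right ((hHx t).intervalIntegrable _ _)
      (hHx t).stronglyMeasurable.stronglyMeasurableAtFilter (hHx t).continuousAt).const_add _
  have main := aux_leib_plane E H hEc hH hEd x
  have e1 : ∫ t in (0:ℝ)..x, H x t = ∫ t in (0:ℝ)..x, G x t := by
    refine intervalIntegral.integral_congr fun t ht => ?_
    rw [uIcc_of_le hx.1.le] at ht
    exact hHe x t ht.1 ht.2 hx.2.le
  rw [e1, hEe x x hx.1.le le_rfl hx.2.le] at main
  refine main.congr_of_eventuallyEq ?_
  filter_upwards [Ioo_mem_nhds hx.1 hx.2] with y hy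
  refine intervalIntegral.integral_congr fun t ht => ?_
  rw [uIcc_of_le hy.1.le] at ht
  exact (hEe y t ht.1 ht.2 hy.2.le).symm

lemma aux_diag (b : ℝ) (K K1x K1t : ℝ → ℝ → ℂ) (d : ℂ)
    (x : ℝ) (hx : 0 < x) (hxb : x < b)
    (h1x : HasDerivWithinAt (fun y => K y x) (K1x x x) (Icc x b) x)
    (h1t : ∀ x t : ℝ, 0 ≤ t → t ≤ x → x ≤ b →
      HasDerivWithinAt (fun s => K x s) (K1t x t) (Set.Icc 0 x) t)
    (h1c : ContinuousOn (fun p : ℝ × ℝ => K1t p.1 p.2) {p : ℝ × ℝ | 0 ≤ p.2 ∧ p.2 ≤ p.1 ∧ p.1 ≤ b})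
    (hd : HasDerivWithinAt (fun y => K y y) d (Icc 0 b) x) : d = K1x x x + K1t x x := by
  obtain ⟨H, hH, hHe⟩ := aux_ext b (hx.trans hxb).le K1t h1c
  have hHx : ∀ y, Continuous (H y) := fun y => hH.comp (by fun_prop : Continuous fun s => (y, s))
  have e : ∀ y ∈ Icc x b, ∫ s in x..y, H y s = K y y - K y x := by
    intro y hy
    refine intervalIntegral.integral_eq_sub_of_hasDerivAt_of_le hy.1 (f := fun s => K y s) ?_ ?_
        ((hHx y).intervalIntegrable _ _)
    · intro s hs
      exact ((h1t y s (hx.le.trans hs.1) hs.2 hy.2).continuousWithinAt).mono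
        (Icc_subset_Icc_left hx.le)
    · intro s hs
      rw [hHe y s (hx.le.trans hs.1.le) hs.2.le hy.2]
      exact (h1t y s (hx.le.trans hs.1.le) hs.2.le hy.2).hasDerivAt
          (Icc_mem_nhds (hx.trans hs.1) hs.2)
  have hI : HasDerivAt (fun y => ∫ s in x..y, H y s) (H x x) x := by
    rw [hasDerivAt_iff_isLittleO, Asymptotics.isLittleO_iff]
    intro ε hε
    obtain ⟨δ, hδ, hb⟩ := Metric.continuousAt_iff.1 (hH.continuousAt (x := (x, x))) ε hε
    filter_upwards [Metric.ball_mem_nhds x hδ] with y hy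
    have h2 : (∫ s in x..y, H y s) - (∫ s in x..x, H x s) - (y - x) • H x x =
        ∫ s in x..y, (H y s - H x x) := by
      rw [intervalIntegral.integral_sub ((hHx y).intervalIntegrable _ _)
        (continuous_const.intervalIntegrable _ _)]
      simp
    rw [h2]
    refine intervalIntegral.norm_integral_le_of_norm_le_const fun s hs => ?_
    rw [← dist_eq_norm]
    refine (hb (x := (y, s)) ?_).le
    rw [Metric.mem_ball, Real.dist_eq] at hy
    rw [Prod.dist_eq, max_lt_iff, Real.dist_eq, Real.dist_eq]
    refine ⟨hy, lt_of_le_of_lt ?_ hy⟩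
    exact abs_sub_left_of_mem_uIcc (uIoc_subset_uIcc hs)
  have h4 := h1x.add (hI.hasDerivWithinAt (s := Icc x b))
  have h5 : HasDerivWithinAt (fun y => K y y) (K1x x x + H x x) (Icc x b) x := by
    refine h4.congr ?_ ?_
    · intro y hy
      simp only [Pi.add_apply]
      rw [e y hy]; ring
    · simp
  have h6 := hd.mono (Icc_subset_Icc_left hx.le)
  rw [← hHe x x hx.le le_rfl hxb.le]
  exact (uniqueDiffOn_Icc hxb x ⟨le_rfl, hxb.le⟩).eq_deriv _ h6 h5

lemma aux_uniq (b : ℝ) (hb : 0 < b) :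
    UniqueDiffOn ℝ {p : ℝ × ℝ | 0 ≤ p.1 ∧ p.1 ≤ p.2 ∧ p.2 ≤ b} := by
  refine uniqueDiffOn_convex ?_ ?_
  · rintro ⟨a1, a2⟩ ⟨h1, h2, h3⟩ ⟨c1, c2⟩ ⟨h4, h5, h6⟩ s t hs ht hst
    simp only [mem_ofPred_eq, Prod.fst_add, Prod.smul_fst, Prod.snd_add, Prod.smul_snd,
      smul_eq_mul] at *
    refine ⟨by positivity, by gcongr, ?_⟩
    calc s * a2 + t * c2 ≤ s * b + t * b := by gcongr
      _ = b := by rw [← add_mul, hst, one_mul]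
  · refine ⟨(b/3, 2*b/3), ?_⟩
    rw [mem_interior]
    refine ⟨{p : ℝ × ℝ | 0 < p.1 ∧ p.1 < p.2 ∧ p.2 < b}, ?_, ?_, ?_⟩
    · rintro p ⟨h1, h2, h3⟩; exact ⟨h1.le, h2.le, h3.le⟩
    · exact (isOpen_lt continuous_const continuous_fst).inter
        ((isOpen_lt continuous_fst continuous_snd).inter (isOpen_lt continuous_snd continuous_const))
    · simp only [mem_ofPred_eq]; refine ⟨?_, ?_, ?_⟩ <;> linarith

lemma aux_partials (b : ℝ) (hb : 0 < b) (n : ℕ) (f : ℝ × ℝ → ℂ)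
    (hf : ContDiffOn ℝ (n + 1 : ℕ) f {p : ℝ × ℝ | 0 ≤ p.1 ∧ p.1 ≤ p.2 ∧ p.2 ≤ b}) :
    ∃ f1 f2 : ℝ × ℝ → ℂ,
      ContDiffOn ℝ n f1 {p : ℝ × ℝ | 0 ≤ p.1 ∧ p.1 ≤ p.2 ∧ p.2 ≤ b} ∧
      ContDiffOn ℝ n f2 {p : ℝ × ℝ | 0 ≤ p.1 ∧ p.1 ≤ p.2 ∧ p.2 ≤ b} ∧
      (∀ x t, 0 ≤ x → x ≤ t → t ≤ b →
        HasDerivWithinAt (fun y => f (y, t)) (f1 (x, t)) (Icc 0 t) x) ∧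
      (∀ x t, 0 ≤ x → x ≤ t → t ≤ b →
        HasDerivWithinAt (fun s => f (x, s)) (f2 (x, t)) (Icc x b) t) := by
  set S := {p : ℝ × ℝ | 0 ≤ p.1 ∧ p.1 ≤ p.2 ∧ p.2 ≤ b} with hS
  have h1 : ContDiffOn ℝ n (fderivWithin ℝ f S) S :=
    hf.fderivWithin (aux_uniq b hb) (by norm_cast)
  have hd : ∀ p ∈ S, HasFDerivWithinAt f (fderivWithin ℝ f S p) S p := fun p hp =>
    (hf.differentiableOn (by norm_num) p hp).hasFDerivWithinAt
  refine ⟨fun p => fderivWithin ℝ f S p (1, 0), fun p => fderivWithin ℝ f S p (0, 1),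
    h1.clm_apply contDiffOn_const, h1.clm_apply contDiffOn_const, ?_, ?_⟩
  · intro x t h0 h1 h2
    have h3 : HasDerivWithinAt (fun y : ℝ => (y, t)) ((1:ℝ), (0:ℝ)) (Icc 0 t) x :=
      (hasDerivWithinAt_id x _).prodMk (hasDerivWithinAt_const x _ t)
    exact HasFDerivWithinAt.comp_hasDerivWithinAt (f := fun y : ℝ => (y, t)) (t := S) x
      (hd (x, t) ⟨h0, h1, h2⟩) h3 (fun y hy => ⟨hy.1, hy.2, h2⟩)
  · intro x t h0 h1 h2
    have h3 : HasDerivWithinAt (fun y : ℝ => (x, y)) ((0:ℝ), (1:ℝ)) (Icc x b) t :=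
      (hasDerivWithinAt_const t _ x).prodMk (hasDerivWithinAt_id t _)
    exact HasFDerivWithinAt.comp_hasDerivWithinAt (f := fun y : ℝ => (x, y)) (t := S) t
      (hd (x, t) ⟨h0, h1, h2⟩) h3 (fun y hy => ⟨h0, hy.1, hy.2⟩)

end

open Set MeasureTheory Filter Topology in
/-- The transmutation relation `L T[k(·,τ)] = T L₀[k(·,τ)]` for the
preimage `k(x,τ) = K(x,τ) - ∫₀ˣ K(t,x)K(t,τ)dt` of the extended transmutation kernel,
valid for `0 < x < τ < b`. -/
theorem stmt_9 (b l : ℝ) (hb : 0 < b) (hl : -(1/2) ≤ l)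
    (q : ℝ → ℂ) (hq : ContinuousOn q (Set.Icc 0 b))
    (K K1x K1xx K1t K1tt : ℝ → ℝ → ℂ)
    (hKc : ContinuousOn (fun p : ℝ × ℝ => K p.1 p.2) (Set.Icc 0 b ×ˢ Set.Icc 0 b))
    -- the restriction of K to the closed lower triangle is C²
    (h1x : ∀ x t : ℝ, 0 ≤ t → t ≤ x → x ≤ b →
      HasDerivWithinAt (fun y => K y t) (K1x x t) (Set.Icc t b) x)
    (h1xx : ∀ x t : ℝ, 0 ≤ t → t ≤ x → x ≤ b →
      HasDerivWithinAt (fun y => K1x y t) (K1xx x t) (Set.Icc t b) x)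
    (h1t : ∀ x t : ℝ, 0 ≤ t → t ≤ x → x ≤ b →
      HasDerivWithinAt (fun s => K x s) (K1t x t) (Set.Icc 0 x) t)
    (h1tt : ∀ x t : ℝ, 0 ≤ t → t ≤ x → x ≤ b →
      HasDerivWithinAt (fun s => K1t x s) (K1tt x t) (Set.Icc 0 x) t)
    (h1c : ContinuousOn
      (fun p : ℝ × ℝ => (K1x p.1 p.2, K1xx p.1 p.2, K1t p.1 p.2, K1tt p.1 p.2))
      {p : ℝ × ℝ | 0 ≤ p.2 ∧ p.2 ≤ p.1 ∧ p.1 ≤ b})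
    -- the restriction of K to the closed upper triangle is C²
    (h2 : ContDiffOn ℝ 2 (fun p : ℝ × ℝ => K p.1 p.2)
      {p : ℝ × ℝ | 0 ≤ p.1 ∧ p.1 ≤ p.2 ∧ p.2 ≤ b})
    -- (i) the singular hyperbolic equation on the lower triangle
    (hPDE : ∀ x t : ℝ, 0 < t → t ≤ x → x ≤ b →
      K1xx x t - K1tt x t - ((l * (l + 1) / x ^ 2 : ℝ) : ℂ) * K x t +
        ((l * (l + 1) / t ^ 2 : ℝ) : ℂ) * K x t - q x * K x t = 0)
    -- (ii) the Goursat condition on the diagonal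
    (hdiag : ∀ x ∈ Set.Icc (0:ℝ) b, HasDerivWithinAt (fun y => K y y) (q x / 2) (Set.Icc 0 b) x)
    -- (iii) vanishing on the coordinate axes
    (hK0 : ∀ x ∈ Set.Icc (0:ℝ) b, K x 0 = 0)
    (hK0' : ∀ t ∈ Set.Icc (0:ℝ) b, K 0 t = 0)
    (k Tk : ℝ → ℝ → ℂ)
    (hk : ∀ x τ : ℝ, k x τ = K x τ - ∫ t in (0:ℝ)..x, K t x * K t τ)
    (hTk : ∀ x τ : ℝ, Tk x τ = k x τ + ∫ t in (0:ℝ)..x, K x t * k t τ) :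
    ∀ x τ : ℝ, 0 < x → x < τ → τ < b →
      ∃ g1 g2 m1 m2 : ℝ → ℂ,
        (∀ y ∈ Set.Ioo (0:ℝ) τ, HasDerivAt (fun z => Tk z τ) (g1 y) y) ∧
        (∀ y ∈ Set.Ioo (0:ℝ) τ, HasDerivAt g1 (g2 y) y) ∧
        (∀ y ∈ Set.Ioo (0:ℝ) τ, HasDerivAt (fun z => k z τ) (m1 y) y) ∧
        (∀ y ∈ Set.Ioo (0:ℝ) τ, HasDerivAt m1 (m2 y) y) ∧
        g2 x - (((l * (l + 1) / x ^ 2 : ℝ) : ℂ) + q x) * Tk x τ =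
          (m2 x - ((l * (l + 1) / x ^ 2 : ℝ) : ℂ) * k x τ) +
            ∫ t in (0:ℝ)..x, K x t * (m2 t - ((l * (l + 1) / t ^ 2 : ℝ) : ℂ) * k t τ) := by
  intro x τ hx hxτ hτb
  have hτ : 0 < τ := hx.trans hxτ
  obtain ⟨U1, U2, hU1, hU2, hd1, hd2⟩ := aux_partials b hb 1 (fun p => K p.1 p.2) h2
  obtain ⟨U11, -, hU11, -, hd11, -⟩ := aux_partials b hb 0 U1 hU1
  obtain ⟨-, U22, -, hU22, -, hd22⟩ := aux_partials b hb 0 U2 hU2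
  have cU1 := hU1.continuousOn
  have cU2 := hU2.continuousOn
  have cU11 := hU11.continuousOn
  have cU22 := hU22.continuousOn
  -- continuity on the closed lower triangle
  have hsub : {p : ℝ × ℝ | 0 ≤ p.2 ∧ p.2 ≤ p.1 ∧ p.1 ≤ τ} ⊆
      {p : ℝ × ℝ | 0 ≤ p.2 ∧ p.2 ≤ p.1 ∧ p.1 ≤ b} :=
    fun p hp => ⟨hp.1, hp.2.1, hp.2.2.trans hτb.le⟩
  have cK1x : ContinuousOn (fun p : ℝ × ℝ => K1x p.1 p.2)
      {p : ℝ × ℝ | 0 ≤ p.2 ∧ p.2 ≤ p.1 ∧ p.1 ≤ b} := h1c.fst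
  have cK1xx : ContinuousOn (fun p : ℝ × ℝ => K1xx p.1 p.2)
      {p : ℝ × ℝ | 0 ≤ p.2 ∧ p.2 ≤ p.1 ∧ p.1 ≤ b} := h1c.snd.fst
  have cK1t : ContinuousOn (fun p : ℝ × ℝ => K1t p.1 p.2)
      {p : ℝ × ℝ | 0 ≤ p.2 ∧ p.2 ≤ p.1 ∧ p.1 ≤ b} := h1c.snd.snd.fst
  have cK1tt : ContinuousOn (fun p : ℝ × ℝ => K1tt p.1 p.2)
      {p : ℝ × ℝ | 0 ≤ p.2 ∧ p.2 ≤ p.1 ∧ p.1 ≤ b} := h1c.snd.snd.snd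
  have cKl : ContinuousOn (fun p : ℝ × ℝ => K p.1 p.2)
      {p : ℝ × ℝ | 0 ≤ p.2 ∧ p.2 ≤ p.1 ∧ p.1 ≤ τ} := hKc.mono fun p hp =>
    ⟨⟨hp.1.trans hp.2.1, hp.2.2.trans hτb.le⟩, ⟨hp.1, (hp.2.1.trans hp.2.2).trans hτb.le⟩⟩
  -- swapped triangle
  have sw : ∀ f : ℝ × ℝ → ℂ, ContinuousOn f {p : ℝ × ℝ | 0 ≤ p.1 ∧ p.1 ≤ p.2 ∧ p.2 ≤ b} →
      ContinuousOn (fun p : ℝ × ℝ => f (p.2, p.1))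
        {p : ℝ × ℝ | 0 ≤ p.2 ∧ p.2 ≤ p.1 ∧ p.1 ≤ τ} := by
    intro f hf
    exact hf.comp (f := fun p : ℝ × ℝ => (p.2, p.1)) (by fun_prop)
      (fun p hp => ⟨hp.1, hp.2.1, hp.2.2.trans hτb.le⟩)
  have sn : ∀ f : ℝ → ℂ, ContinuousOn f (Icc 0 τ) →
      ContinuousOn (fun p : ℝ × ℝ => f p.2) {p : ℝ × ℝ | 0 ≤ p.2 ∧ p.2 ≤ p.1 ∧ p.1 ≤ τ} := by
    intro f hf
    exact hf.comp (f := fun p : ℝ × ℝ => p.2) (by fun_prop)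
      (fun p hp => ⟨hp.1, hp.2.1.trans hp.2.2⟩)
  have ro : ∀ f : ℝ × ℝ → ℂ, ContinuousOn f {p : ℝ × ℝ | 0 ≤ p.1 ∧ p.1 ≤ p.2 ∧ p.2 ≤ b} →
      ContinuousOn (fun z => f (z, τ)) (Icc 0 τ) := by
    intro f hf
    exact hf.comp (f := fun z : ℝ => (z, τ)) (by fun_prop) (fun z hz => ⟨hz.1, hz.2, hτb.le⟩)
  have di : ∀ f : ℝ × ℝ → ℂ, ContinuousOn f {p : ℝ × ℝ | 0 ≤ p.1 ∧ p.1 ≤ p.2 ∧ p.2 ≤ b} →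
      ContinuousOn (fun z => f (z, z)) (Icc 0 τ) := by
    intro f hf
    exact hf.comp (f := fun z : ℝ => (z, z)) (by fun_prop)
      (fun z hz => ⟨hz.1, le_rfl, hz.2.trans hτb.le⟩)
  have cKτ : ContinuousOn (fun z => K z τ) (Icc 0 τ) := ro _ h2.continuousOn
  have cKd : ContinuousOn (fun z => K z z) (Icc 0 τ) := di _ h2.continuousOn
  have cA0 := (sw _ h2.continuousOn).mul (sn _ cKτ)
  have cA1 := (sw _ cU2).mul (sn _ cKτ)
  have cA2 := (sw _ cU22).mul (sn _ cKτ)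
  have cq : ContinuousOn q (Icc 0 τ) := hq.mono (Icc_subset_Icc_right hτb.le)
  let m1 : ℝ → ℂ := fun z => U1 (z, τ) - K z z * K z τ - ∫ t in (0:ℝ)..z, U2 (t, z) * K t τ
  let m2 : ℝ → ℂ := fun z => U11 (z, τ) - (q z / 2 * K z τ + K z z * U1 (z, τ)) -
    (U2 (z, z) * K z τ + ∫ t in (0:ℝ)..z, U22 (t, z) * K t τ)
  have cu : ContinuousOn (fun z => k z τ) (Icc 0 τ) := by
    simp_rw [hk]
    exact cKτ.sub (aux_cont_s9 τ hτ.le (fun z t => K t z * K t τ) cA0)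
  have cm1 : ContinuousOn m1 (Icc 0 τ) :=
    ((ro _ cU1).sub (cKd.mul cKτ)).sub (aux_cont_s9 τ hτ.le (fun z t => U2 (t, z) * K t τ) cA1)
  have cm2 : ContinuousOn m2 (Icc 0 τ) :=
    ((ro _ cU11).sub (((cq.div_const 2).mul cKτ).add (cKd.mul (ro _ cU1)))).sub
      (((di _ cU2).mul cKτ).add (aux_cont_s9 τ hτ.le (fun z t => U22 (t, z) * K t τ) cA2))
  have dKτ : ∀ y ∈ Ioo (0:ℝ) τ, HasDerivAt (fun z => K z τ) (U1 (y, τ)) y := fun y hy =>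
    (hd1 y τ hy.1.le hy.2.le hτb.le).hasDerivAt (Icc_mem_nhds hy.1 hy.2)
  have dKd : ∀ y ∈ Ioo (0:ℝ) τ, HasDerivAt (fun z => K z z) (q y / 2) y := fun y hy =>
    (hdiag y ⟨hy.1.le, (hy.2.trans hτb).le⟩).hasDerivAt (Icc_mem_nhds hy.1 (hy.2.trans hτb))
  have du : ∀ y ∈ Ioo (0:ℝ) τ, HasDerivAt (fun z => k z τ) (m1 y) y := by
    intro y hy
    simp_rw [hk]
    have := (dKτ y hy).sub (aux_leib τ hτ (fun z t => K t z * K t τ)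
      (fun z t => U2 (t, z) * K t τ) cA0 cA1 (fun x t h0 h1 h2 =>
        ((hd2 t x h0 h1 (h2.trans hτb.le)).mono (Icc_subset_Icc_right hτb.le)).mul_const _) y hy)
    refine this.congr_deriv ?_
    simp only [m1]; ring
  have dm1 : ∀ y ∈ Ioo (0:ℝ) τ, HasDerivAt m1 (m2 y) y := by
    intro y hy
    have hU : HasDerivAt (fun z => U1 (z, τ)) (U11 (y, τ)) y :=
      (hd11 y τ hy.1.le hy.2.le hτb.le).hasDerivAt (Icc_mem_nhds hy.1 hy.2)
    exact (hU.sub ((dKd y hy).mul (dKτ y hy))).sub (aux_leib τ hτ (fun z t => U2 (t, z) * K t τ)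
      (fun z t => U22 (t, z) * K t τ) cA1 cA2 (fun x t h0 h1 h2 =>
        ((hd22 t x h0 h1 (h2.trans hτb.le)).mono (Icc_subset_Icc_right hτb.le)).mul_const _) y hy)
  let g1 : ℝ → ℂ := fun z => m1 z + (K z z * k z τ + ∫ t in (0:ℝ)..z, K1x z t * k t τ)
  let g2 : ℝ → ℂ := fun z => m2 z + ((q z / 2 * k z τ + K z z * m1 z) +
    (K1x z z * k z τ + ∫ t in (0:ℝ)..z, K1xx z t * k t τ))
  have cB0 := cKl.mul (sn _ cu)
  have cB1 := (cK1x.mono hsub).mul (sn _ cu)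
  have cB2 := (cK1xx.mono hsub).mul (sn _ cu)
  refine ⟨g1, g2, m1, m2, ?_, ?_, du, dm1, ?_⟩
  · intro y hy
    simp_rw [hTk]
    exact (du y hy).add (aux_leib τ hτ (fun z t => K z t * k t τ)
      (fun z t => K1x z t * k t τ) cB0 cB1 (fun x t h0 h1 h2 =>
        ((h1x x t h0 h1 (h2.trans hτb.le)).mono (Icc_subset_Icc_right hτb.le)).mul_const _) y hy)
  · intro y hy
    exact (dm1 y hy).add (((dKd y hy).mul (du y hy)).add
      (aux_leib τ hτ (fun z t => K1x z t * k t τ)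
      (fun z t => K1xx z t * k t τ) cB1 cB2 (fun x t h0 h1 h2 =>
        ((h1xx x t h0 h1 (h2.trans hτb.le)).mono (Icc_subset_Icc_right hτb.le)).mul_const _) y hy))
  -- the identity
  have hxb : x < b := hxτ.trans hτb
  have hdg : q x / 2 = K1x x x + K1t x x :=
    aux_diag b K K1x K1t (q x / 2) x hx hxb (h1x x x hx.le le_rfl hxb.le) h1t cK1t
      (hdiag x ⟨hx.le, hxb.le⟩)
  have li : ∀ f : ℝ × ℝ → ℂ, ContinuousOn f {p : ℝ × ℝ | 0 ≤ p.2 ∧ p.2 ≤ p.1 ∧ p.1 ≤ b} →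
      ContinuousOn (fun t => f (x, t)) (Icc 0 x) := by
    intro f hf
    exact hf.comp (f := fun t : ℝ => (x, t)) (by fun_prop) (fun t ht => ⟨ht.1, ht.2, hxb.le⟩)
  have lK1xx := li _ cK1xx
  have lK1tt := li _ cK1tt
  have lK1t := li _ cK1t
  have lK : ContinuousOn (fun t => K x t) (Icc 0 x) :=
    fun t ht => (h1t x t ht.1 ht.2 hxb.le).continuousWithinAt
  have hss : Icc 0 x ⊆ Icc 0 τ := Icc_subset_Icc_right hxτ.le
  have lu := cu.mono hss
  have lm1 := cm1.mono hss
  have lm2 := cm2.mono hss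
  have huI : uIcc 0 x = Icc 0 x := uIcc_of_le hx.le
  have ii : ∀ f : ℝ → ℂ, ContinuousOn f (Icc 0 x) → IntervalIntegrable f volume 0 x :=
    fun f hf => ContinuousOn.intervalIntegrable (by rwa [huI])
  have u0 : k 0 τ = 0 := by rw [hk, hK0' τ ⟨hτ.le, hτb.le⟩]; simp
  have Kx0 : K x 0 = 0 := hK0 x ⟨hx.le, hxb.le⟩
  have ibp1 : ∫ t in (0:ℝ)..x, K1t x t * m1 t =
      K1t x x * k x τ - K1t x 0 * k 0 τ - ∫ t in (0:ℝ)..x, K1tt x t * k t τ := by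
    refine intervalIntegral.integral_mul_deriv_eq_deriv_mul_of_hasDerivAt
      (u := fun t => K1t x t) (v := fun t => k t τ) (u' := fun t => K1tt x t) (v' := m1)
      (by rwa [huI]) (by rwa [huI]) ?_ ?_ (ii _ lK1tt) (ii _ lm1)
    · intro t ht
      rw [min_eq_left hx.le, max_eq_right hx.le] at ht
      exact (h1tt x t ht.1.le ht.2.le hxb.le).hasDerivAt (Icc_mem_nhds ht.1 ht.2)
    · intro t ht
      rw [min_eq_left hx.le, max_eq_right hx.le] at ht
      exact du t ⟨ht.1, ht.2.trans hxτ⟩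
  have ibp2 : ∫ t in (0:ℝ)..x, K x t * m2 t =
      K x x * m1 x - K x 0 * m1 0 - ∫ t in (0:ℝ)..x, K1t x t * m1 t := by
    refine intervalIntegral.integral_mul_deriv_eq_deriv_mul_of_hasDerivAt
      (u := fun t => K x t) (v := m1) (u' := fun t => K1t x t) (v' := m2)
      (by rwa [huI]) (by rwa [huI]) ?_ ?_ (ii _ lK1t) (ii _ lm2)
    · intro t ht
      rw [min_eq_left hx.le, max_eq_right hx.le] at ht
      exact (h1t x t ht.1.le ht.2.le hxb.le).hasDerivAt (Icc_mem_nhds ht.1 ht.2)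
    · intro t ht
      rw [min_eq_left hx.le, max_eq_right hx.le] at ht
      exact dm1 t ⟨ht.1, ht.2.trans hxτ⟩
  rw [u0, mul_zero, sub_zero] at ibp1
  rw [Kx0, zero_mul, sub_zero] at ibp2
  -- the right-hand integral
  have e1 : ∫ t in (0:ℝ)..x, K x t * (m2 t - ((l * (l + 1) / t ^ 2 : ℝ) : ℂ) * k t τ) =
      ∫ t in (0:ℝ)..x, (K x t * m2 t + (K1xx x t * k t τ - K1tt x t * k t τ -
        (((l * (l + 1) / x ^ 2 : ℝ) : ℂ) + q x) * (K x t * k t τ))) := by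
    refine intervalIntegral.integral_congr_ae (Eventually.of_forall fun t ht => ?_)
    rw [uIoc_of_le hx.le] at ht
    have := hPDE x t ht.1 ht.2 hxb.le
    linear_combination (-(k t τ)) * this
  have i1 : IntervalIntegrable (fun t => K x t * m2 t) volume 0 x := ii _ (lK.mul lm2)
  have i2 : IntervalIntegrable (fun t => K1xx x t * k t τ) volume 0 x := ii _ (lK1xx.mul lu)
  have i3 : IntervalIntegrable (fun t => K1tt x t * k t τ) volume 0 x := ii _ (lK1tt.mul lu)
  have i4 : IntervalIntegrable (fun t => (((l * (l + 1) / x ^ 2 : ℝ) : ℂ) + q x) *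
      (K x t * k t τ)) volume 0 x := IntervalIntegrable.const_mul (ii _ (lK.mul lu)) _
  have i23 : IntervalIntegrable (fun t => K1xx x t * k t τ - K1tt x t * k t τ) volume 0 x :=
    i2.sub i3
  have i234 : IntervalIntegrable (fun t => K1xx x t * k t τ - K1tt x t * k t τ -
      (((l * (l + 1) / x ^ 2 : ℝ) : ℂ) + q x) * (K x t * k t τ)) volume 0 x := i23.sub i4
  rw [e1, intervalIntegral.integral_add i1 i234, intervalIntegral.integral_sub i23 i4,
    intervalIntegral.integral_sub i2 i3, intervalIntegral.integral_const_mul, hTk]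
  simp only [g2]
  linear_combination (-1 : ℂ) * ibp2 + ibp1 - k x τ * hdg
end

section
/- Let l ≥ -1/2 be real. Suppose u = u(z,s) is twice continuously differentiable on the region {(z,s) : 0 ≤ s < z} and satisfies ∂²u/∂z∂s + (l/(z-s))·∂u/∂z - (l/(z-s))·∂u/∂s = 0 there. Define H(x,t) = (xt)^{-l} · u((x+t)²/4, (t-x)²/4) for 0 < x ≤ t. Then: (i) for all 0 < x < t, ∂²H/∂x² - ∂²H/∂t² - (l(l+1)/x²)H + (l(l+1)/t²)H = 0; (ii) if moreover h is a continuous function on [0,b] and ∂u/∂z(z,0) - (l/z)·u(z,0) = (1/4)·h(√z)·z^{l-1/2} for all z ∈ (0,b²], then d/dx[H(x,x)] = h(x)/2 for all x ∈ (0,b]. -/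
open Filter Topology in
theorem chain_aux {W : Set (ℝ × ℝ)} (hW : IsOpen W) (f fz fs : ℝ → ℝ → ℝ)
    (h1 : ∀ z s, (z, s) ∈ W → HasDerivAt (fun z' => f z' s) (fz z s) z)
    (h2 : ∀ z s, (z, s) ∈ W → HasDerivAt (fun s' => f z s') (fs z s) s)
    (c1 : ContinuousOn (fun p : ℝ × ℝ => fz p.1 p.2) W)
    (c2 : ContinuousOn (fun p : ℝ × ℝ => fs p.1 p.2) W)
    (a c : ℝ → ℝ) (a' c' r : ℝ) (ha : HasDerivAt a a' r) (hc : HasDerivAt c c' r)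
    (hm : (a r, c r) ∈ W) :
    HasDerivAt (fun r => f (a r) (c r)) (fz (a r) (c r) * a' + fs (a r) (c r) * c') r := by
  have hn := hW.mem_nhds hm
  have key := hasStrictFDerivAt_uncurry_coprod (𝕜 := ℝ) (u := (a r, c r)) (f := f)
    (f₁ := fun z s => ContinuousLinearMap.toSpanSingleton ℝ (fz z s))
    (f₂ := fun z s => ContinuousLinearMap.toSpanSingleton ℝ (fs z s))
    (by filter_upwards [hn] with v hv
        exact (h1 v.1 v.2 hv).hasFDerivAt)
    (by filter_upwards [hn] with v hv
        exact (h2 v.1 v.2 hv).hasFDerivAt)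
    (by
      have := (c1.continuousAt hn)
      exact ((ContinuousLinearMap.toSpanSingletonCLE (𝕜 := ℝ) (E := ℝ)).continuous.continuousAt).comp this)
    (by
      have := (c2.continuousAt hn)
      exact ((ContinuousLinearMap.toSpanSingletonCLE (𝕜 := ℝ) (E := ℝ)).continuous.continuousAt).comp this)
  have := key.hasFDerivAt.comp_hasDerivAt r (ha.prodMk hc)
  convert! this using 1
  simp [Function.HasUncurry.uncurry]
  ring

open Filter Topology in
theorem schwarz_aux {W : Set (ℝ × ℝ)} (hW : IsOpen W) (u uz us uzs : ℝ → ℝ → ℝ)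
    (h1 : ∀ z s, (z, s) ∈ W → HasDerivAt (fun z' => u z' s) (uz z s) z)
    (h2 : ∀ z s, (z, s) ∈ W → HasDerivAt (fun s' => u z s') (us z s) s)
    (h3 : ∀ z s, (z, s) ∈ W → HasDerivAt (fun s' => uz z s') (uzs z s) s)
    (c : ContinuousOn (fun p : ℝ × ℝ => uzs p.1 p.2) W) (z s : ℝ) (hm : (z, s) ∈ W) :
    HasDerivAt (fun z' => us z' s) (uzs z s) z := by
  rw [hasDerivAt_iff_isLittleO, Asymptotics.isLittleO_iff]
  intro ε hε
  have hn := hW.mem_nhds hm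
  have hc := (c.continuousAt hn)
  have hc2 := Metric.tendsto_nhds.1 hc ε hε
  obtain ⟨δ, hδ, hB⟩ := Metric.eventually_nhds_iff_ball.1 (hc2.and hn)
  have hB' : ∀ ζ ∈ Metric.ball z δ, ∀ σ ∈ Metric.ball s δ,
      (ζ, σ) ∈ W ∧ ‖uzs ζ σ - uzs z s‖ ≤ ε := by
    intro ζ hζ σ hσ
    have := hB (ζ, σ) (by rw [← ball_prod_same]; exact ⟨hζ, hσ⟩)
    exact ⟨this.2, by simpa [dist_eq_norm] using this.1.le⟩
  filter_upwards [Metric.ball_mem_nhds z hδ] with y hy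
  have hs0 : s ∈ Metric.ball s δ := Metric.mem_ball_self hδ
  have hz0 : z ∈ Metric.ball z δ := Metric.mem_ball_self hδ
  have hd : HasDerivAt (fun σ => u y σ - u z σ - uzs z s * (y - z) * σ)
      (us y s - us z s - uzs z s * (y - z)) s := by
    have := (((h2 y s (hB' y hy s hs0).1).sub (h2 z s hm)).sub
      ((hasDerivAt_id s).const_mul (uzs z s * (y - z))))
    simpa using! this
  have := hd.hasFDerivAt.le_of_lip' (C := ε * ‖y - z‖) (by positivity) (by
    filter_upwards [Metric.ball_mem_nhds s hδ] with σ hσ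
    have e1 : ∀ ζ ∈ Metric.ball z δ, ‖(uz ζ σ - uzs z s * σ) - (uz ζ s - uzs z s * s)‖ ≤ ε * ‖σ - s‖ := by
      intro ζ hζ
      refine (convex_ball s δ).norm_image_sub_le_of_norm_hasDerivWithin_le
        (f := fun σ => uz ζ σ - uzs z s * σ) (f' := fun σ => uzs ζ σ - uzs z s) ?_ ?_ hs0 hσ
      · intro τ hτ
        have := (h3 ζ τ (hB' ζ hζ τ hτ).1).sub ((hasDerivAt_id τ).const_mul (uzs z s))
        simpa using! this.hasDerivWithinAt
      · intro τ hτ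
        exact (hB' ζ hζ τ hτ).2
    have e2 := (convex_ball z δ).norm_image_sub_le_of_norm_hasDerivWithin_le
        (f := fun ζ => u ζ σ - u ζ s - uzs z s * (σ - s) * ζ)
        (f' := fun ζ => uz ζ σ - uz ζ s - uzs z s * (σ - s)) (C := ε * ‖σ - s‖) (by
          intro ζ hζ
          have := (((h1 ζ σ (hB' ζ hζ σ hσ).1).sub (h1 ζ s (hB' ζ hζ s hs0).1)).sub
            ((hasDerivAt_id ζ).const_mul (uzs z s * (σ - s))))
          simpa using! this.hasDerivWithinAt) (by
          intro ζ hζ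
          convert! e1 ζ hζ using 2
          ring) hz0 hy
    calc _ = _ := by congr 1; ring
      _ ≤ _ := e2
      _ = _ := by ring)
  simp at this
  simpa [mul_comm] using this

theorem rpow_aux (l t y : ℝ) (ht : 0 < t) (hy : 0 < y) :
    HasDerivAt (fun y => (y * t) ^ (-l)) ((y * t) ^ (-l) * (-l / y)) y := by
  have h := ((hasDerivAt_id y).mul_const t).rpow_const (p := -l) (Or.inl (by simp; constructor <;> positivity))
  convert! h using 1
  simp only [id]
  rw [Real.rpow_sub_one (by positivity)]
  field_simp


/-- The change of variables `z = (x+t)²/4`, `s = (t-x)²/4`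
(`z - s = xt`) transforms solutions of the Euler–Poisson–Darboux-type equation
`u_{zs} + (l/(z-s))(u_z - u_s) = 0` into solutions
`H(x,t) = (xt)^{-l} u((x+t)²/4,(t-x)²/4)` of the singular hyperbolic equation,
and transforms the boundary condition `u_z(z,0) - (l/z)u(z,0) = h(√z)z^{l-1/2}/4`
into the Goursat data `d/dx[H(x,x)] = h(x)/2`. -/
theorem stmt_10 (b l : ℝ) (hb : 0 < b) (hl : -(1/2) ≤ l)
    (u uz us uzz uss uzs : ℝ → ℝ → ℝ)
    (huz : ∀ z s : ℝ, 0 ≤ s → s < z → HasDerivAt (fun z' => u z' s) (uz z s) z)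
    (huzz : ∀ z s : ℝ, 0 ≤ s → s < z → HasDerivAt (fun z' => uz z' s) (uzz z s) z)
    (hus : ∀ z s : ℝ, 0 ≤ s → s < z →
      HasDerivWithinAt (fun s' => u z s') (us z s) (Set.Ici 0) s)
    (huss : ∀ z s : ℝ, 0 ≤ s → s < z →
      HasDerivWithinAt (fun s' => us z s') (uss z s) (Set.Ici 0) s)
    (huzs : ∀ z s : ℝ, 0 ≤ s → s < z →
      HasDerivWithinAt (fun s' => uz z s') (uzs z s) (Set.Ici 0) s)
    (hcont : ContinuousOn
      (fun p : ℝ × ℝ => (u p.1 p.2, uz p.1 p.2, us p.1 p.2, uzz p.1 p.2, uss p.1 p.2, uzs p.1 p.2))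
      {p : ℝ × ℝ | 0 ≤ p.2 ∧ p.2 < p.1})
    (hPDE : ∀ z s : ℝ, 0 ≤ s → s < z →
      uzs z s + l / (z - s) * uz z s - l / (z - s) * us z s = 0)
    (H : ℝ → ℝ → ℝ)
    (hH : ∀ x t : ℝ, H x t = (x * t) ^ (-l) * u ((x + t) ^ 2 / 4) ((t - x) ^ 2 / 4)) :
    (∀ x t : ℝ, 0 < x → x < t →
      DifferentiableAt ℝ (fun y => H y t) x ∧
      DifferentiableAt ℝ (deriv fun y => H y t) x ∧
      DifferentiableAt ℝ (fun s' => H x s') t ∧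
      DifferentiableAt ℝ (deriv fun s' => H x s') t ∧
      deriv (deriv fun y => H y t) x - deriv (deriv fun s' => H x s') t -
          l * (l + 1) / x ^ 2 * H x t + l * (l + 1) / t ^ 2 * H x t = 0) ∧
    (∀ h : ℝ → ℝ, ContinuousOn h (Set.Icc 0 b) →
      (∀ z ∈ Set.Ioc (0:ℝ) (b ^ 2),
        uz z 0 - l / z * u z 0 = 1 / 4 * h (Real.sqrt z) * z ^ (l - 1/2)) →
      ∀ x ∈ Set.Ioc (0:ℝ) b,
        HasDerivWithinAt (fun y => H y y) (h x / 2) (Set.Ioc 0 b) x) := by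
  set W : Set (ℝ × ℝ) := {p | 0 < p.2 ∧ p.2 < p.1} with hWdef
  have hW : IsOpen W := (isOpen_lt continuous_const continuous_snd).inter
    (isOpen_lt continuous_snd continuous_fst)
  have hcW := hcont.mono (show W ⊆ {p : ℝ × ℝ | 0 ≤ p.2 ∧ p.2 < p.1} from
    fun p hp => ⟨hp.1.le, hp.2⟩)
  have cuz := hcW.snd.fst
  have cus := hcW.snd.snd.fst
  have cuzz := hcW.snd.snd.snd.fst
  have cuss := hcW.snd.snd.snd.snd.fst
  have cuzs := hcW.snd.snd.snd.snd.snd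
  simp only at cuz cus cuzz cuss cuzs
  have d1 : ∀ z s, (z, s) ∈ W → HasDerivAt (fun z' => u z' s) (uz z s) z :=
    fun z s h => huz z s h.1.le h.2
  have d2 : ∀ z s, (z, s) ∈ W → HasDerivAt (fun s' => u z s') (us z s) s :=
    fun z s h => (hus z s h.1.le h.2).hasDerivAt (Ici_mem_nhds h.1)
  have d11 : ∀ z s, (z, s) ∈ W → HasDerivAt (fun z' => uz z' s) (uzz z s) z :=
    fun z s h => huzz z s h.1.le h.2
  have d22 : ∀ z s, (z, s) ∈ W → HasDerivAt (fun s' => us z s') (uss z s) s :=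
    fun z s h => (huss z s h.1.le h.2).hasDerivAt (Ici_mem_nhds h.1)
  have d12 : ∀ z s, (z, s) ∈ W → HasDerivAt (fun s' => uz z s') (uzs z s) s :=
    fun z s h => (huzs z s h.1.le h.2).hasDerivAt (Ici_mem_nhds h.1)
  have d21 : ∀ z s, (z, s) ∈ W → HasDerivAt (fun z' => us z' s) (uzs z s) z :=
    schwarz_aux hW u uz us uzs d1 d2 d12 cuzs
  have hmem : ∀ x t : ℝ, 0 < x → x < t → ((x + t) ^ 2 / 4, (t - x) ^ 2 / 4) ∈ W := by
    intro x t hx hxt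
    have h1 : 0 < t - x := by linarith
    refine ⟨by simp only; positivity, ?_⟩
    simp only
    nlinarith [mul_pos hx (hx.trans hxt)]
  constructor
  · intro x t hx hxt
    have ht : 0 < t := hx.trans hxt
    -- derivatives of the coordinate functions
    have ax : ∀ y t : ℝ, HasDerivAt (fun y => (y + t) ^ 2 / 4) ((y + t) / 2) y := by
      intro y t
      have := (((hasDerivAt_id y).add_const t).pow 2).div_const 4
      convert! this using 1
      simp; ring
    have cx : ∀ y t : ℝ, HasDerivAt (fun y => (t - y) ^ 2 / 4) (-(t - y) / 2) y := by
      intro y t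
      have := (((hasDerivAt_id y).const_sub t).pow 2).div_const 4
      convert! this using 1
      simp; ring
    have at' : ∀ x r : ℝ, HasDerivAt (fun r => (x + r) ^ 2 / 4) ((x + r) / 2) r := by
      intro x r
      have := (((hasDerivAt_id r).const_add x).pow 2).div_const 4
      convert! this using 1
      simp; ring
    have ct' : ∀ x r : ℝ, HasDerivAt (fun r => (r - x) ^ 2 / 4) ((r - x) / 2) r := by
      intro x r
      have := (((hasDerivAt_id r).sub_const x).pow 2).div_const 4
      convert! this using 1
      simp; ring
    have rt : ∀ r : ℝ, 0 < r → HasDerivAt (fun r => (x * r) ^ (-l)) ((x * r) ^ (-l) * (-l / r)) r := by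
      intro r hr
      have := rpow_aux l x r hx hr
      simpa only [mul_comm x] using this
    have inv' : ∀ y : ℝ, 0 < y → HasDerivAt (fun y => -l / y) (l / y ^ 2) y := by
      intro y hy
      have := (hasDerivAt_inv hy.ne').const_mul (-l)
      convert! this using 1
      field_simp
    -- first derivatives
    have Hx : ∀ y, 0 < y → y < t → HasDerivAt (fun y => H y t)
        ((y * t) ^ (-l) * (-l / y * u ((y + t) ^ 2 / 4) ((t - y) ^ 2 / 4)
          + uz ((y + t) ^ 2 / 4) ((t - y) ^ 2 / 4) * ((y + t) / 2)
          + us ((y + t) ^ 2 / 4) ((t - y) ^ 2 / 4) * (-(t - y) / 2))) y := by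
      intro y hy hyt
      have := (rpow_aux l t y ht hy).mul
        (chain_aux hW u uz us d1 d2 cuz cus _ _ _ _ y (ax y t) (cx y t) (hmem y t hy hyt))
      simp only [hH]
      convert! this using 1
      ring
    have Ht : ∀ r, x < r → HasDerivAt (fun r => H x r)
        ((x * r) ^ (-l) * (-l / r * u ((x + r) ^ 2 / 4) ((r - x) ^ 2 / 4)
          + uz ((x + r) ^ 2 / 4) ((r - x) ^ 2 / 4) * ((x + r) / 2)
          + us ((x + r) ^ 2 / 4) ((r - x) ^ 2 / 4) * ((r - x) / 2))) r := by
      intro r hr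
      have := (rt r (hx.trans hr)).mul
        (chain_aux hW u uz us d1 d2 cuz cus _ _ _ _ r (at' x r) (ct' x r) (hmem x r hx hr))
      simp only [hH]
      convert! this using 1
      ring
    have m0 := hmem x t hx hxt
    have lin1 : HasDerivAt (fun y : ℝ => (y + t) / 2) (1 / 2) x :=
      ((hasDerivAt_id x).add_const t).div_const 2
    have lin2 : HasDerivAt (fun y : ℝ => -(t - y) / 2) (1 / 2) x := by
      simpa using! ((hasDerivAt_id x).const_sub t).neg.div_const 2
    have lin3 : HasDerivAt (fun r : ℝ => (x + r) / 2) (1 / 2) t :=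
      ((hasDerivAt_id t).const_add x).div_const 2
    have lin4 : HasDerivAt (fun r : ℝ => (r - x) / 2) (1 / 2) t :=
      ((hasDerivAt_id t).sub_const x).div_const 2
    have Hxx := (rpow_aux l t x ht hx).mul
      ((((inv' x hx).mul
        (chain_aux hW u uz us d1 d2 cuz cus _ _ _ _ x (ax x t) (cx x t) m0)).add
        ((chain_aux hW uz uzz uzs d11 d12 cuzz cuzs _ _ _ _ x (ax x t) (cx x t) m0).mul lin1)).add
        ((chain_aux hW us uzs uss d21 d22 cuzs cuss _ _ _ _ x (ax x t) (cx x t) m0).mul lin2))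
    have Htt := (rt t ht).mul
      ((((inv' t ht).mul
        (chain_aux hW u uz us d1 d2 cuz cus _ _ _ _ t (at' x t) (ct' x t) m0)).add
        ((chain_aux hW uz uzz uzs d11 d12 cuzz cuzs _ _ _ _ t (at' x t) (ct' x t) m0).mul lin3)).add
        ((chain_aux hW us uzs uss d21 d22 cuzs cuss _ _ _ _ t (at' x t) (ct' x t) m0).mul lin4))
    have Hxx' := Hxx.congr_of_eventuallyEq (f₁ := deriv fun y => H y t) (by
      filter_upwards [Ioo_mem_nhds hx hxt] with y hy
      exact (Hx y hy.1 hy.2).deriv)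
    have Htt' := Htt.congr_of_eventuallyEq (f₁ := deriv fun r => H x r) (by
      filter_upwards [Ioi_mem_nhds hxt] with r hr
      exact (Ht r hr).deriv)
    refine ⟨(Hx x hx hxt).differentiableAt, Hxx'.differentiableAt,
      (Ht t hxt).differentiableAt, Htt'.differentiableAt, ?_⟩
    rw [Hxx'.deriv, Htt'.deriv, hH]
    have hp := hPDE _ _ m0.1.le m0.2
    simp only at hp
    have hzs : (x + t) ^ 2 / 4 - (t - x) ^ 2 / 4 = x * t := by ring
    rw [hzs] at hp
    simp only [Pi.mul_apply, Pi.add_apply]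
    generalize uzs ((x + t) ^ 2 / 4) ((t - x) ^ 2 / 4) = A at *
    generalize uz ((x + t) ^ 2 / 4) ((t - x) ^ 2 / 4) = B at *
    generalize us ((x + t) ^ 2 / 4) ((t - x) ^ 2 / 4) = C at *
    generalize (x * t) ^ (-l) = P at *
    have hA : A = - (l / (x * t) * B) + l / (x * t) * C := by linarith
    rw [hA]
    field_simp
    ring
  · intro h _ hbc x hx
    have hx0 := hx.1
    have hd : HasDerivAt (fun y : ℝ => y ^ 2) (2 * x) x := by
      simpa using hasDerivAt_pow 2 x
    have h1 : HasDerivAt (fun y : ℝ => u (y ^ 2) 0) (uz (x ^ 2) 0 * (2 * x)) x :=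
      HasDerivAt.comp (h₂ := fun z => u z 0) (h := fun y : ℝ => y ^ 2) x
        (huz (x ^ 2) 0 le_rfl (by positivity)) hd
    have h2 : HasDerivAt (fun y : ℝ => (y ^ 2) ^ (-l)) (2 * x * (-l) * (x ^ 2) ^ (-l - 1)) x :=
      hd.rpow_const (Or.inl (by positivity))
    have h3 := h2.mul h1
    have hB := hbc (x ^ 2) ⟨by positivity, by
      have := hx.2
      gcongr⟩
    rw [Real.sqrt_sq hx0.le] at hB
    have e : (fun y => H y y) = (fun y : ℝ => (y ^ 2) ^ (-l)) * fun y => u (y ^ 2) 0 := by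
      ext y
      simp only [hH, Pi.mul_apply]
      congr 2 <;> ring
    rw [e]
    refine HasDerivAt.hasDerivWithinAt ?_
    convert! h3 using 1
    have hp : (x ^ 2) ^ (l - 1 / 2) = (x ^ 2) ^ l / x := by
      rw [Real.rpow_sub (by positivity), ← Real.sqrt_eq_rpow, Real.sqrt_sq hx0.le]
    rw [hp] at hB
    have hq : (x ^ 2) ^ (-l) = ((x ^ 2) ^ l)⁻¹ := Real.rpow_neg (by positivity) _
    have hQ : 0 < (x ^ 2) ^ l := by positivity
    rw [Real.rpow_sub_one (by positivity), hq]
    generalize (x ^ 2) ^ l = Q at *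
    have hB2 : uz (x ^ 2) 0 = l / x ^ 2 * u (x ^ 2) 0 + 1 / 4 * h x * (Q / x) := by linarith
    rw [hB2]
    field_simp
    ring
end

section
/- Let l ≥ -1/2 be real and let n ≥ 1 be an integer. Let p_{4n-1}(x,t) = Σ_{k even, 0 ≤ k ≤ 2n} C(2n,k)·x^{2n-k}·t^k (where C(2n,k) is the binomial coefficient). Then for all x > 0, t > 0, applying the operator Y_l first in the variable t and then in the variable x to p_{4n-1} yields Y_{l,x}Y_{l,t}[p_{4n-1}](x,t) = Σ_{k even, 0 ≤ k ≤ 2n} C(2n,k) · [Γ(n+(1-k)/2)·Γ((k+1)/2)·Γ(l+1)² / (2^{2l+3}·Γ(l+3/2)²·Γ(n+l+(3-k)/2)·Γ(l+(k+3)/2))] · x^{2n-k+l+1}·t^{k+l+1}. -/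
open MeasureTheory in
lemma real_beta_scaled (p q a : ℝ) (hp : 0 < p) (hq : 0 < q) (ha : 0 < a) :
    ∫ u in (0:ℝ)..a, u ^ (p - 1) * (a - u) ^ (q - 1) =
      a ^ (p + q - 1) * (Real.Gamma p * Real.Gamma q / Real.Gamma (p + q)) := by
  have h := Complex.betaIntegral_scaled (p : ℂ) (q : ℂ) ha
  rw [Complex.betaIntegral_eq_Gamma_mul_div _ _ (by simpa) (by simpa)] at h
  have h2 : ∫ u in (0:ℝ)..a, (u : ℂ) ^ ((p : ℂ) - 1) * ((a : ℂ) - u) ^ ((q : ℂ) - 1) =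
      ∫ u in (0:ℝ)..a, ((u ^ (p - 1) * (a - u) ^ (q - 1) : ℝ) : ℂ) := by
    rw [intervalIntegral.integral_of_le ha.le, intervalIntegral.integral_of_le ha.le]
    refine setIntegral_congr_fun measurableSet_Ioc fun u hu => ?_
    have h3 : 0 ≤ a - u := sub_nonneg.mpr hu.2
    simp only [Complex.ofReal_mul, Complex.ofReal_cpow hu.1.le, Complex.ofReal_cpow h3,
      Complex.ofReal_sub, Complex.ofReal_one]
  rw [h2, intervalIntegral.integral_ofReal, ← Complex.ofReal_add, Complex.Gamma_ofReal,
    Complex.Gamma_ofReal, Complex.Gamma_ofReal, ← Complex.ofReal_one, ← Complex.ofReal_sub,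
    ← Complex.ofReal_cpow ha.le] at h
  exact_mod_cast h

open MeasureTheory in
lemma J_integral (l : ℝ) (hl : -(1/2) ≤ l) (m : ℕ) (x : ℝ) (hx : 0 < x) :
    ∫ s in (0:ℝ)..x, (x ^ 2 - s ^ 2) ^ l * s ^ (2 * m) =
      x ^ (2 * l + 2 * m + 1) / 2 *
        (Real.Gamma (m + 1/2) * Real.Gamma (l + 1) / Real.Gamma (m + l + 3/2)) := by
  have h := real_beta_scaled (m + 1/2) (l + 1) (x ^ 2) (by positivity) (by linarith)
    (by positivity)
  rw [intervalIntegral.integral_of_le (by positivity)] at h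
  have him : (fun s : ℝ => s ^ 2) '' Set.Ioc 0 x = Set.Ioc 0 (x ^ 2) := by
    ext u
    constructor
    · rintro ⟨s, ⟨h0, h1⟩, rfl⟩
      exact ⟨by positivity, by dsimp only; gcongr⟩
    · rintro ⟨h0, h1⟩
      exact ⟨√u, ⟨Real.sqrt_pos.mpr h0, (Real.sqrt_le_left hx.le).mpr h1⟩, Real.sq_sqrt h0.le⟩
  rw [← him, integral_image_eq_integral_abs_deriv_smul (f' := fun s => 2 * s) measurableSet_Ioc
    (fun s _ => by simpa using (hasDerivAt_pow 2 s).hasDerivWithinAt)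
    (fun a ha b hb hab => by
      exact (pow_left_inj₀ ha.1.le hb.1.le two_ne_zero).mp hab)] at h
  have h2 : ∫ s in Set.Ioc 0 x, |2 * s| • ((s ^ 2) ^ ((m:ℝ) + 1/2 - 1) *
      (x ^ 2 - s ^ 2) ^ (l + 1 - 1)) =
      ∫ s in Set.Ioc 0 x, 2 * ((x ^ 2 - s ^ 2) ^ l * s ^ (2 * m)) := by
    refine setIntegral_congr_fun measurableSet_Ioc fun s hs => ?_
    have hs0 : 0 < s := hs.1
    have e : (s ^ 2) ^ ((m:ℝ) + 1/2 - 1) * s = s ^ (2 * m) := by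
      rw [← Real.rpow_natCast s 2, ← Real.rpow_mul hs0.le, ← Real.rpow_add_one hs0.ne',
        ← Real.rpow_natCast]
      congr 1
      push_cast
      ring
    simp only [smul_eq_mul, add_sub_cancel_right]
    rw [abs_of_pos (by positivity), ← e]
    ring
  rw [h2, integral_const_mul] at h
  rw [intervalIntegral.integral_of_le hx.le]
  have e : (x ^ 2) ^ ((m:ℝ) + 1/2 + (l + 1) - 1) = x ^ (2 * l + 2 * m + 1) := by
    rw [← Real.rpow_natCast x 2, ← Real.rpow_mul hx.le]
    congr 1
    push_cast
    ring
  rw [e, show (m:ℝ) + 1/2 + (l + 1) = m + l + 3/2 by ring] at h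
  linarith

open MeasureTheory in
lemma J_integrable (l : ℝ) (hl : -(1/2) ≤ l) (m : ℕ) (x : ℝ) (hx : 0 < x) :
    IntervalIntegrable (fun s => (x ^ 2 - s ^ 2) ^ l * s ^ (2 * m)) volume 0 x := by
  by_contra hc
  have h := J_integral l hl m x hx
  rw [intervalIntegral.integral_undef hc] at h
  have h1 : 0 < Real.Gamma (m + 1/2) := Real.Gamma_pos_of_pos (by positivity)
  have h2 : 0 < Real.Gamma (l + 1) := Real.Gamma_pos_of_pos (by linarith)
  have h3 : 0 < Real.Gamma (m + l + 3/2) := Real.Gamma_pos_of_pos (by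
    have : (0:ℝ) ≤ m := by positivity
    linarith)
  have : 0 < x ^ (2 * l + 2 * m + 1) / 2 *
        (Real.Gamma (m + 1/2) * Real.Gamma (l + 1) / Real.Gamma (m + l + 3/2)) := by positivity
  linarith

lemma J_sum (l : ℝ) (hl : -(1/2) ≤ l) (x : ℝ) (hx : 0 < x) (S : Finset ℕ) (c : ℕ → ℝ)
    (e : ℕ → ℕ) :
    ∫ s in (0:ℝ)..x, (x ^ 2 - s ^ 2) ^ l * ∑ j ∈ S, c j * s ^ (2 * e j) =
      ∑ j ∈ S, c j * (x ^ (2 * l + 2 * (e j : ℝ) + 1) / 2 *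
        (Real.Gamma (e j + 1/2) * Real.Gamma (l + 1) / Real.Gamma (e j + l + 3/2))) := by
  have : ∀ s : ℝ, (x ^ 2 - s ^ 2) ^ l * ∑ j ∈ S, c j * s ^ (2 * e j) =
      ∑ j ∈ S, c j * ((x ^ 2 - s ^ 2) ^ l * s ^ (2 * e j)) := by
    intro s
    rw [Finset.mul_sum]
    exact Finset.sum_congr rfl fun j _ => by ring
  simp only [this]
  rw [intervalIntegral.integral_finsetSum
    fun j _ => (J_integrable l hl (e j) x hx).const_mul (c j)]
  refine Finset.sum_congr rfl fun j _ => ?_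
  rw [intervalIntegral.integral_const_mul, J_integral l hl _ x hx]

/-- The image of the wave polynomial
`p_{4n-1}(x,t) = Σ_{even k ≤ 2n} C(2n,k) x^{2n-k} t^k` under `Y_{l,x}Y_{l,t}`
(the operator `Y_l` applied first in `t`, then in `x`). The sum over even
`k = 2j`, `0 ≤ j ≤ n`. -/
theorem stmt_11 (l : ℝ) (hl : -(1/2) ≤ l) (n : ℕ) (hn : 1 ≤ n)
    (x t : ℝ) (hx : 0 < x) (ht : 0 < t) :
    x ^ (-l) / (2 ^ (l + 1/2) * Real.Gamma (l + 3/2)) *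
        ∫ r in (0:ℝ)..x, (x ^ 2 - r ^ 2) ^ l *
          (t ^ (-l) / (2 ^ (l + 1/2) * Real.Gamma (l + 3/2)) *
            ∫ s in (0:ℝ)..t, (t ^ 2 - s ^ 2) ^ l *
              ∑ j ∈ Finset.range (n + 1),
                (Nat.choose (2 * n) (2 * j) : ℝ) * r ^ (2 * (n - j)) * s ^ (2 * j)) =
      ∑ j ∈ Finset.range (n + 1),
        (Nat.choose (2 * n) (2 * j) : ℝ) *
          (Real.Gamma ((n : ℝ) + (1 - 2 * (j : ℝ)) / 2) * Real.Gamma ((2 * (j : ℝ) + 1) / 2) *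
              Real.Gamma (l + 1) ^ 2 /
            (2 ^ (2 * l + 3) * Real.Gamma (l + 3/2) ^ 2 *
              Real.Gamma ((n : ℝ) + l + (3 - 2 * (j : ℝ)) / 2) *
              Real.Gamma (l + (2 * (j : ℝ) + 3) / 2))) *
          x ^ (2 * (n : ℝ) - 2 * (j : ℝ) + l + 1) * t ^ (2 * (j : ℝ) + l + 1) := by
  simp only [J_sum l hl t ht (Finset.range (n + 1)) _ (fun j => j)]
  set A : ℝ := t ^ (-l) / (2 ^ (l + 1/2) * Real.Gamma (l + 3/2)) with hA
  set B : ℕ → ℝ := fun j => t ^ (2 * l + 2 * (j : ℝ) + 1) / 2 *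
    (Real.Gamma (j + 1/2) * Real.Gamma (l + 1) / Real.Gamma (j + l + 3/2)) with hB
  have h1 : ∀ r : ℝ, A * ∑ j ∈ Finset.range (n + 1),
      (Nat.choose (2 * n) (2 * j) : ℝ) * r ^ (2 * (n - j)) * (t ^ (2 * l + 2 * (j : ℝ) + 1) / 2 *
    (Real.Gamma (j + 1/2) * Real.Gamma (l + 1) / Real.Gamma (j + l + 3/2))) =
      ∑ j ∈ Finset.range (n + 1),
        (A * (Nat.choose (2 * n) (2 * j) : ℝ) * B j) * r ^ (2 * (n - j)) := by
    intro r
    rw [Finset.mul_sum]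
    exact Finset.sum_congr rfl fun j _ => by simp only [hB]; ring
  simp only [h1]
  rw [J_sum l hl x hx (Finset.range (n + 1)) _ (fun j => n - j), Finset.mul_sum]
  refine Finset.sum_congr rfl fun j hj => ?_
  have hjn : j ≤ n := Nat.lt_succ_iff.mp (Finset.mem_range.mp hj)
  simp only [hA, hB, Nat.cast_sub hjn]
  rw [show (n:ℝ) + (1 - 2 * j) / 2 = n - j + 1/2 by ring,
    show (2 * (j:ℝ) + 1) / 2 = j + 1/2 by ring,
    show (n:ℝ) + l + (3 - 2 * j) / 2 = n - j + l + 3/2 by ring,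
    show l + (2 * (j:ℝ) + 3) / 2 = j + l + 3/2 by ring,
    show 2 * (n:ℝ) - 2 * j + l + 1 = -l + (2 * l + 2 * (n - j) + 1) by ring,
    show 2 * (j:ℝ) + l + 1 = -l + (2 * l + 2 * j + 1) by ring,
    Real.rpow_add hx (-l), Real.rpow_add ht (-l),
    show (2:ℝ) ^ (2 * l + 3) = 2 ^ (l + 1/2) * 2 ^ (l + 1/2) * 4 by
      rw [← Real.rpow_add two_pos, show (4:ℝ) = 2 ^ (2:ℝ) by norm_num, ← Real.rpow_add two_pos]
      congr 1
      ring]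
  ring
end

section
/- Let l ≥ -1/2 be real. Define U₀(x,t) = C₀²·x^{l+1}·t^{l+1} with C₀ = Γ(1/2)Γ(l+1)/(2^{l+3/2}Γ(l+3/2)²), and for each integer n ≥ 1 define U_{4n-1}(x,t) = Σ_{k even, 0 ≤ k ≤ 2n} C(2n,k) · [Γ(n+(1-k)/2)·Γ((k+1)/2)·Γ(l+1)² / (2^{2l+3}·Γ(l+3/2)²·Γ(n+l+(3-k)/2)·Γ(l+(k+3)/2))] · x^{2n-k+l+1}·t^{k+l+1}. Then each of the functions U ∈ {U₀, U_{4n-1} : n ≥ 1} satisfies ∂²U/∂x² - ∂²U/∂t² - (l(l+1)/x²)·U + (l(l+1)/t²)·U = 0 for all x > 0, t > 0, and satisfies the boundary conditions lim_{x→0⁺} U(x,t) = 0 and lim_{t→0⁺} U(x,t) = 0. -/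
/-- The generalized wave polynomial `U₀(x,t) = C₀² x^{l+1} t^{l+1}` with
`C₀ = Γ(1/2)Γ(l+1)/(2^{l+3/2}Γ(l+3/2)²)`. -/
noncomputable def genWaveU0 (l : ℝ) (x t : ℝ) : ℝ :=
  (Real.Gamma (1/2) * Real.Gamma (l + 1) / (2 ^ (l + 3/2) * Real.Gamma (l + 3/2) ^ 2)) ^ 2 *
    x ^ (l + 1) * t ^ (l + 1)

/-- The generalized wave polynomial `U_{4n-1}` (sum over even `k = 2j`, `0 ≤ j ≤ n`). -/
noncomputable def genWaveU4 (l : ℝ) (n : ℕ) (x t : ℝ) : ℝ :=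
  ∑ j ∈ Finset.range (n + 1),
    (Nat.choose (2 * n) (2 * j) : ℝ) *
      (Real.Gamma ((n : ℝ) + (1 - 2 * (j : ℝ)) / 2) * Real.Gamma ((2 * (j : ℝ) + 1) / 2) *
          Real.Gamma (l + 1) ^ 2 /
        (2 ^ (2 * l + 3) * Real.Gamma (l + 3/2) ^ 2 *
          Real.Gamma ((n : ℝ) + l + (3 - 2 * (j : ℝ)) / 2) *
          Real.Gamma (l + (2 * (j : ℝ) + 3) / 2))) *
      x ^ (2 * (n : ℝ) - 2 * (j : ℝ) + l + 1) * t ^ (2 * (j : ℝ) + l + 1)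

/-- `U` solves the singular hyperbolic equation
`U_{xx} - U_{tt} - (l(l+1)/x²)U + (l(l+1)/t²)U = 0` for `x, t > 0` and vanishes as
`x → 0⁺` or `t → 0⁺`. -/
def SolvesSingularWaveEq (l : ℝ) (U : ℝ → ℝ → ℝ) : Prop :=
  (∀ x t : ℝ, 0 < x → 0 < t →
    DifferentiableAt ℝ (fun y => U y t) x ∧
    DifferentiableAt ℝ (deriv fun y => U y t) x ∧
    DifferentiableAt ℝ (fun s => U x s) t ∧
    DifferentiableAt ℝ (deriv fun s => U x s) t ∧
    deriv (deriv fun y => U y t) x - deriv (deriv fun s => U x s) t -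
        l * (l + 1) / x ^ 2 * U x t + l * (l + 1) / t ^ 2 * U x t = 0) ∧
  (∀ t : ℝ, 0 < t →
    Filter.Tendsto (fun x => U x t) (nhdsWithin 0 (Set.Ioi 0)) (nhds 0)) ∧
  (∀ x : ℝ, 0 < x →
    Filter.Tendsto (fun t => U x t) (nhdsWithin 0 (Set.Ioi 0)) (nhds 0))


lemma powSum_hasDerivAt (N : ℕ) (b p : ℕ → ℝ) (x : ℝ) (hx : 0 < x) :
    HasDerivAt (fun y : ℝ => ∑ j ∈ Finset.range N, b j * y ^ p j)
      (∑ j ∈ Finset.range N, (b j * p j) * x ^ (p j - 1)) x := by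
  refine HasDerivAt.fun_sum fun j _ => ?_
  have h := (Real.hasDerivAt_rpow_const (x := x) (p := p j) (Or.inl hx.ne')).const_mul (b j)
  rw [mul_assoc]
  exact h

lemma powSum_hasDerivAt_deriv (N : ℕ) (b p : ℕ → ℝ) (x : ℝ) (hx : 0 < x) :
    HasDerivAt (deriv fun y : ℝ => ∑ j ∈ Finset.range N, b j * y ^ p j)
      (∑ j ∈ Finset.range N, (b j * p j * (p j - 1)) * x ^ (p j - 1 - 1)) x := by
  refine (powSum_hasDerivAt N (fun j => b j * p j) (fun j => p j - 1) x hx).congr_of_eventuallyEq ?_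
  filter_upwards [lt_mem_nhds hx] with y hy
  exact (powSum_hasDerivAt N b p y hy).deriv

lemma powSum_tendsto (N : ℕ) (b p : ℕ → ℝ) (hp : ∀ j < N, 0 < p j) :
    Filter.Tendsto (fun y : ℝ => ∑ j ∈ Finset.range N, b j * y ^ p j)
      (nhdsWithin 0 (Set.Ioi 0)) (nhds 0) := by
  have h : Filter.Tendsto (fun y : ℝ => ∑ j ∈ Finset.range N, b j * y ^ p j)
      (nhds 0) (nhds (∑ j ∈ Finset.range N, b j * 0)) := by
    refine tendsto_finsetSum _ fun j hj => ?_
    have hpj := hp j (Finset.mem_range.1 hj)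
    have h1 := (Real.continuousAt_rpow_const 0 (p j) (Or.inr hpj.le)).tendsto
    rw [Real.zero_rpow hpj.ne'] at h1
    exact h1.const_mul _
  simp only [mul_zero, Finset.sum_const_zero] at h
  exact h.mono_left nhdsWithin_le_nhds

lemma solves_general (l : ℝ) (hl : -(1/2) ≤ l) (n : ℕ) (c : ℕ → ℝ)
    (hc : ∀ j < n, c j * (2 * ((n : ℝ) - j) * (2 * ((n : ℝ) - j) + 2 * l + 1)) =
      c (j + 1) * (2 * ((j : ℝ) + 1) * (2 * ((j : ℝ) + 1) + 2 * l + 1)))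
    (U : ℝ → ℝ → ℝ)
    (hU : ∀ x t, U x t = ∑ j ∈ Finset.range (n + 1),
      c j * x ^ (2 * (n : ℝ) - 2 * (j : ℝ) + l + 1) * t ^ (2 * (j : ℝ) + l + 1)) :
    SolvesSingularWaveEq l U := by
  have h1 : ∀ t, (fun y => U y t) = fun y => ∑ j ∈ Finset.range (n + 1),
      (c j * t ^ (2 * (j : ℝ) + l + 1)) * y ^ (2 * (n : ℝ) - 2 * (j : ℝ) + l + 1) := by
    intro t; funext y; rw [hU]; exact Finset.sum_congr rfl fun j _ => by ring
  have h2 : ∀ x, (fun s => U x s) = fun s => ∑ j ∈ Finset.range (n + 1),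
      (c j * x ^ (2 * (n : ℝ) - 2 * (j : ℝ) + l + 1)) * s ^ (2 * (j : ℝ) + l + 1) := by
    intro x; funext y; rw [hU]
  refine ⟨fun x t hx ht => ?_, fun t _ => ?_, fun x _ => ?_⟩
  · have a1 := powSum_hasDerivAt (n + 1) (fun j => c j * t ^ (2 * (j : ℝ) + l + 1))
      (fun j => 2 * (n : ℝ) - 2 * (j : ℝ) + l + 1) x hx
    have a2 := powSum_hasDerivAt_deriv (n + 1) (fun j => c j * t ^ (2 * (j : ℝ) + l + 1))
      (fun j => 2 * (n : ℝ) - 2 * (j : ℝ) + l + 1) x hx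
    have b1 := powSum_hasDerivAt (n + 1)
      (fun j => c j * x ^ (2 * (n : ℝ) - 2 * (j : ℝ) + l + 1))
      (fun j => 2 * (j : ℝ) + l + 1) t ht
    have b2 := powSum_hasDerivAt_deriv (n + 1)
      (fun j => c j * x ^ (2 * (n : ℝ) - 2 * (j : ℝ) + l + 1))
      (fun j => 2 * (j : ℝ) + l + 1) t ht
    rw [← h1 t] at a1 a2
    rw [← h2 x] at b1 b2
    refine ⟨a1.differentiableAt, a2.differentiableAt, b1.differentiableAt,
      b2.differentiableAt, ?_⟩
    rw [a2.deriv, b2.deriv, hU, Finset.mul_sum, Finset.mul_sum]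
    have hpow : ∀ z : ℝ, 0 < z → ∀ p : ℝ, z ^ p = z ^ (p - 1 - 1) * z ^ 2 := by
      intro z hz p
      rw [← Real.rpow_natCast, ← Real.rpow_add hz]
      congr 1; push_cast; ring
    have key : ∑ j ∈ Finset.range (n + 1),
        c j * (2 * ((n : ℝ) - j) * (2 * ((n : ℝ) - j) + 2 * l + 1)) *
          x ^ (2 * (n : ℝ) - 2 * (j : ℝ) + l + 1 - 1 - 1) * t ^ (2 * (j : ℝ) + l + 1) =
      ∑ j ∈ Finset.range (n + 1),
        c j * (2 * (j : ℝ) * (2 * (j : ℝ) + 2 * l + 1)) *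
          x ^ (2 * (n : ℝ) - 2 * (j : ℝ) + l + 1) * t ^ (2 * (j : ℝ) + l + 1 - 1 - 1) := by
      rw [Finset.sum_range_succ, Finset.sum_range_succ' _ n]
      congr 1
      · refine Finset.sum_congr rfl fun j hj => ?_
        rw [hc j (Finset.mem_range.1 hj)]
        push_cast
        congr 2
        · congr 1; ring
        · ring
      · simp
    have e1 : ∑ j ∈ Finset.range (n + 1),
        c j * (2 * ((n : ℝ) - j) * (2 * ((n : ℝ) - j) + 2 * l + 1)) *
          x ^ (2 * (n : ℝ) - 2 * (j : ℝ) + l + 1 - 1 - 1) * t ^ (2 * (j : ℝ) + l + 1) -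
      ∑ j ∈ Finset.range (n + 1),
        c j * (2 * (j : ℝ) * (2 * (j : ℝ) + 2 * l + 1)) *
          x ^ (2 * (n : ℝ) - 2 * (j : ℝ) + l + 1) * t ^ (2 * (j : ℝ) + l + 1 - 1 - 1) = 0 :=
      sub_eq_zero.2 key
    rw [← e1, ← Finset.sum_sub_distrib, ← Finset.sum_sub_distrib, ← Finset.sum_sub_distrib,
      ← Finset.sum_add_distrib]
    refine Finset.sum_congr rfl fun j _ => ?_
    rw [hpow x hx (2 * (n : ℝ) - 2 * (j : ℝ) + l + 1), hpow t ht (2 * (j : ℝ) + l + 1)]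
    generalize x ^ (2 * (n : ℝ) - 2 * (j : ℝ) + l + 1 - 1 - 1) = X
    generalize t ^ (2 * (j : ℝ) + l + 1 - 1 - 1) = T
    field_simp
    ring
  · rw [h1 t]
    refine powSum_tendsto _ _ _ fun j hj => ?_
    have : (j : ℝ) ≤ n := by exact_mod_cast Nat.lt_succ_iff.1 hj
    linarith
  · rw [h2 x]
    refine powSum_tendsto _ _ _ fun j hj => ?_
    have : (0 : ℝ) ≤ j := j.cast_nonneg
    linarith

lemma choose_rec (n j : ℕ) (hj : j < n) :
    (Nat.choose (2 * n) (2 * (j + 1)) : ℝ) * ((2 * (j : ℝ) + 2) * (2 * j + 1)) =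
      (Nat.choose (2 * n) (2 * j) : ℝ) * ((2 * ((n : ℝ) - j)) * (2 * ((n : ℝ) - j) - 1)) := by
  have a := Nat.choose_succ_right_eq (2 * n) (2 * j)
  have b := Nat.choose_succ_right_eq (2 * n) (2 * j + 1)
  obtain ⟨m, rfl⟩ : ∃ m, n = j + 1 + m := ⟨n - (j + 1), by omega⟩
  rw [show 2 * (j + 1 + m) - 2 * j = 2 * m + 2 by omega] at a
  rw [show 2 * (j + 1 + m) - (2 * j + 1) = 2 * m + 1 by omega] at b
  rw [show 2 * (j + 1) = 2 * j + 1 + 1 by ring]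
  have a' : (Nat.choose (2 * (j + 1 + m)) (2 * j + 1) : ℝ) * (2 * j + 1) =
    (Nat.choose (2 * (j + 1 + m)) (2 * j) : ℝ) * (2 * m + 2) := by exact_mod_cast a
  have b' : (Nat.choose (2 * (j + 1 + m)) (2 * j + 1 + 1) : ℝ) * (2 * j + 1 + 1) =
    (Nat.choose (2 * (j + 1 + m)) (2 * j + 1) : ℝ) * (2 * m + 1) := by exact_mod_cast b
  push_cast
  linear_combination (2 * (j : ℝ) + 1) * b' + (2 * (m : ℝ) + 1) * a'

lemma coeff_rec (l : ℝ) (hl : -(1/2) ≤ l) (n j : ℕ) (hj : j < n) (c : ℕ → ℝ)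
    (hc : ∀ j, c j = (Nat.choose (2 * n) (2 * j) : ℝ) *
      (Real.Gamma ((n : ℝ) + (1 - 2 * (j : ℝ)) / 2) * Real.Gamma ((2 * (j : ℝ) + 1) / 2) *
          Real.Gamma (l + 1) ^ 2 /
        (2 ^ (2 * l + 3) * Real.Gamma (l + 3/2) ^ 2 *
          Real.Gamma ((n : ℝ) + l + (3 - 2 * (j : ℝ)) / 2) *
          Real.Gamma (l + (2 * (j : ℝ) + 3) / 2)))) :
    c j * (2 * ((n : ℝ) - j) * (2 * ((n : ℝ) - j) + 2 * l + 1)) =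
      c (j + 1) * (2 * ((j : ℝ) + 1) * (2 * ((j : ℝ) + 1) + 2 * l + 1)) := by
  have hjn : (j : ℝ) + 1 ≤ n := by exact_mod_cast hj
  have hj0 : (0 : ℝ) ≤ j := j.cast_nonneg
  have g1 : Real.Gamma ((n : ℝ) + (1 - 2 * (j : ℝ)) / 2) =
      ((n : ℝ) - j - 1 / 2) * Real.Gamma ((n : ℝ) - j - 1 / 2) := by
    rw [← Real.Gamma_add_one (by linarith)]; congr 1; ring
  have g2 : Real.Gamma ((2 * ((j : ℝ) + 1) + 1) / 2) =
      ((2 * (j : ℝ) + 1) / 2) * Real.Gamma ((2 * (j : ℝ) + 1) / 2) := by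
    rw [← Real.Gamma_add_one (by linarith)]; congr 1; ring
  have g3 : Real.Gamma ((n : ℝ) + l + (3 - 2 * (j : ℝ)) / 2) =
      ((n : ℝ) - j + l + 1 / 2) * Real.Gamma ((n : ℝ) - j + l + 1 / 2) := by
    rw [← Real.Gamma_add_one (by linarith)]; congr 1; ring
  have g4 : Real.Gamma (l + (2 * ((j : ℝ) + 1) + 3) / 2) =
      (l + (2 * (j : ℝ) + 3) / 2) * Real.Gamma (l + (2 * (j : ℝ) + 3) / 2) := by
    rw [← Real.Gamma_add_one (by linarith)]; congr 1; ring
  have g5 : (n : ℝ) + (1 - 2 * ((j : ℝ) + 1)) / 2 = (n : ℝ) - j - 1 / 2 := by ring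
  have g6 : (n : ℝ) + l + (3 - 2 * ((j : ℝ) + 1)) / 2 = (n : ℝ) - j + l + 1 / 2 := by ring
  have p1 : Real.Gamma ((n : ℝ) - j + l + 1 / 2) ≠ 0 := (Real.Gamma_pos_of_pos (by linarith)).ne'
  have p2 : Real.Gamma (l + (2 * (j : ℝ) + 3) / 2) ≠ 0 :=
    (Real.Gamma_pos_of_pos (by linarith)).ne'
  have p3 : Real.Gamma (l + 3 / 2) ≠ 0 := (Real.Gamma_pos_of_pos (by linarith)).ne'
  have p4 : (2 : ℝ) ^ (2 * l + 3) ≠ 0 := (Real.rpow_pos_of_pos two_pos _).ne'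
  have q1 : (n : ℝ) - j + l + 1 / 2 ≠ 0 := by linarith
  have q2 : l + (2 * (j : ℝ) + 3) / 2 ≠ 0 := by linarith
  have hch := choose_rec n j hj
  rw [hc j, hc (j + 1)]
  push_cast
  rw [g5, g6, g1, g2, g3, g4]
  generalize Real.Gamma ((n : ℝ) - j + l + 1 / 2) = G1 at *
  generalize Real.Gamma (l + (2 * (j : ℝ) + 3) / 2) = G2 at *
  generalize Real.Gamma (l + 3 / 2) = G3 at *
  generalize (2 : ℝ) ^ (2 * l + 3) = G4 at *
  generalize Real.Gamma ((n : ℝ) - j - 1 / 2) = G5 at *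
  generalize Real.Gamma ((2 * (j : ℝ) + 1) / 2) = G6 at *
  generalize Real.Gamma (l + 1) = G7 at *
  generalize (Nat.choose (2 * n) (2 * j) : ℝ) = C1 at *
  generalize (Nat.choose (2 * n) (2 * (j + 1)) : ℝ) = C2 at *
  have L : C1 * (((n : ℝ) - j - 1 / 2) * G5 * G6 * G7 ^ 2 /
      (G4 * G3 ^ 2 * (((n : ℝ) - j + l + 1 / 2) * G1) * G2)) *
      (2 * ((n : ℝ) - j) * (2 * ((n : ℝ) - j) + 2 * l + 1)) =
      C1 * ((2 * ((n : ℝ) - j)) * (2 * ((n : ℝ) - j) - 1)) *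
        (G5 * G6 * G7 ^ 2 / (G4 * G3 ^ 2 * G1 * G2)) := by
    rw [show 2 * ((n : ℝ) - j) + 2 * l + 1 = 2 * ((n : ℝ) - j + l + 1 / 2) by ring]
    generalize (n : ℝ) - j + l + 1 / 2 = Q at *
    field_simp
  have R : C2 * (G5 * ((2 * (j : ℝ) + 1) / 2 * G6) * G7 ^ 2 /
      (G4 * G3 ^ 2 * G1 * ((l + (2 * (j : ℝ) + 3) / 2) * G2))) *
      (2 * ((j : ℝ) + 1) * (2 * ((j : ℝ) + 1) + 2 * l + 1)) =
      C2 * ((2 * (j : ℝ) + 2) * (2 * j + 1)) *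
        (G5 * G6 * G7 ^ 2 / (G4 * G3 ^ 2 * G1 * G2)) := by
    rw [show 2 * ((j : ℝ) + 1) + 2 * l + 1 = 2 * (l + (2 * (j : ℝ) + 3) / 2) by ring]
    generalize l + (2 * (j : ℝ) + 3) / 2 = Q at *
    field_simp
  rw [L, R, hch]

/-- All the generalized wave polynomials `U₀` and `U_{4n-1}`, `n ≥ 1`,
solve the singular hyperbolic equation and satisfy the boundary conditions
`U(0⁺,t) = 0` and `U(x,0⁺) = 0`. -/
theorem stmt_12 (l : ℝ) (hl : -(1/2) ≤ l) :
    SolvesSingularWaveEq l (genWaveU0 l) ∧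
    ∀ n : ℕ, 1 ≤ n → SolvesSingularWaveEq l (genWaveU4 l n) := by
  refine ⟨solves_general l hl 0 (fun _ => (Real.Gamma (1/2) * Real.Gamma (l + 1) /
    (2 ^ (l + 3/2) * Real.Gamma (l + 3/2) ^ 2)) ^ 2) (by simp) _ (fun x t => by
      simp [genWaveU0]), fun n _ => ?_⟩
  exact solves_general l hl n _ (fun j hj => coeff_rec l hl n j hj _ (fun _ => rfl)) _
    (fun x t => rfl)
end

section
/- Let b > 0 and let l ≥ -1/2 be real. Define U₀(x,t) = C₀²·x^{l+1}·t^{l+1} with C₀ = Γ(1/2)Γ(l+1)/(2^{l+3/2}Γ(l+3/2)²), and for n ≥ 1 let U_{4n-1}(x,t) = Σ_{k even, 0 ≤ k ≤ 2n} C(2n,k) · [Γ(n+(1-k)/2)·Γ((k+1)/2)·Γ(l+1)² / (2^{2l+3}·Γ(l+3/2)²·Γ(n+l+(3-k)/2)·Γ(l+(k+3)/2))] · x^{2n-k+l+1}·t^{k+l+1}. Let g ∈ C¹([0,b], ℂ) satisfy g(0) = g'(0) = 0. Then for every ε > 0 there exist N ∈ ℕ and coefficients a₀, a₁, …, a_N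 ∈ ℂ such that for all x ∈ [0,b], |g'(x) - d/dx[a₀·U₀(x,x) + Σ_{κ=1}^N a_κ·U_{4κ-1}(x,x)]| ≤ ε. -/
lemma aux_dense (b α : ℝ) (hb : 0 < b) (hα : 0 ≤ α) (G : ℝ → ℝ)
    (hG : ContinuousOn G (Set.Icc 0 b)) (hG0 : G 0 = 0) (ε : ℝ) (hε : 0 < ε) :
    ∃ p : Polynomial ℝ, ∀ x ∈ Set.Icc (0:ℝ) b, |G x - x ^ α * p.eval (x ^ 2)| ≤ ε := by
  have huc := isCompact_Icc.uniformContinuousOn_of_continuous hG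
  obtain ⟨δ, hδ, hd⟩ := Metric.uniformContinuousOn_iff.1 huc (ε / 2) (by positivity)
  set d := δ / 2 with hd_def
  have hdpos : 0 < d := by positivity
  have hbα : 0 < b ^ α := Real.rpow_pos_of_pos hb α
  have hcont : ContinuousOn (fun s : ℝ => G (max 0 (Real.sqrt s - d)) / (max d (Real.sqrt s)) ^ α)
      (Set.Icc 0 (b ^ 2)) := by
    apply ContinuousOn.div
    · apply hG.comp (by fun_prop)
      intro s hs
      have h1 : Real.sqrt s ≤ b := Real.sqrt_le_iff.2 ⟨hb.le, hs.2⟩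
      exact ⟨le_max_left _ _, max_le hb.le (by linarith)⟩
    · apply ContinuousOn.rpow_const (by fun_prop)
      intro s hs
      exact Or.inr hα
    · intro s hs
      exact (Real.rpow_pos_of_pos (lt_of_lt_of_le hdpos (le_max_left _ _)) α).ne'
  obtain ⟨p, hp⟩ := exists_polynomial_near_of_continuousOn 0 (b ^ 2) _ hcont (ε / 2 / b ^ α)
    (by positivity)
  refine ⟨p, fun x hx => ?_⟩
  have hx0 := hx.1
  have hxb := hx.2
  have h1 := hp (x ^ 2) ⟨by positivity, by gcongr⟩
  rw [Real.sqrt_sq hx0] at h1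
  have hmem : max 0 (x - d) ∈ Set.Icc (0:ℝ) b := ⟨le_max_left _ _, max_le hb.le (by linarith)⟩
  have h2 : |G x - G (max 0 (x - d))| < ε / 2 := by
    have := hd x hx _ hmem (by
      rw [Real.dist_eq, abs_lt]
      rcases max_cases 0 (x - d) with h | h <;> constructor <;> linarith)
    rwa [Real.dist_eq] at this
  have h3 : x ^ α * (G (max 0 (x - d)) / (max d x) ^ α) = G (max 0 (x - d)) := by
    rcases le_total x d with h | h
    · rw [max_eq_left (by linarith : x - d ≤ 0), hG0]; simp
    · rw [max_eq_right h]
      have : 0 < x ^ α := Real.rpow_pos_of_pos (by linarith) α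
      field_simp
  have hxα : 0 ≤ x ^ α := Real.rpow_nonneg hx0 α
  have hxbα : x ^ α ≤ b ^ α := Real.rpow_le_rpow hx0 hxb hα
  have h4 : |G (max 0 (x - d)) - x ^ α * p.eval (x ^ 2)| ≤ ε / 2 := by
    rw [← h3, ← mul_sub, abs_mul, abs_of_nonneg hxα, abs_sub_comm]
    calc _ ≤ b ^ α * (ε / 2 / b ^ α) := by gcongr
      _ = ε / 2 := by field_simp
  calc |G x - x ^ α * p.eval (x ^ 2)|
      ≤ |G x - G (max 0 (x - d))| + |G (max 0 (x - d)) - x ^ α * p.eval (x ^ 2)| :=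
        abs_sub_le _ _ _
    _ ≤ ε := by linarith

lemma aux_U0 (l : ℝ) (hl : -(1/2) ≤ l) : ∃ c : ℝ, 0 < c ∧ ∀ y : ℝ, 0 ≤ y →
    genWaveU0 l y y = c * y ^ (2 * l + 2) := by
  refine ⟨(Real.Gamma (1/2) * Real.Gamma (l + 1) /
    (2 ^ (l + 3/2) * Real.Gamma (l + 3/2) ^ 2)) ^ 2, ?_, fun y hy => ?_⟩
  · have h1 := Real.Gamma_pos_of_pos (show (0:ℝ) < 1/2 by norm_num)
    have h2 := Real.Gamma_pos_of_pos (show (0:ℝ) < l + 1 by linarith)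
    have h3 := Real.Gamma_pos_of_pos (show (0:ℝ) < l + 3/2 by linarith)
    positivity
  · unfold genWaveU0
    rw [mul_assoc, ← Real.rpow_add_of_nonneg hy (by linarith) (by linarith)]
    congr 2; ring

lemma aux_U4 (l : ℝ) (hl : -(1/2) ≤ l) (n : ℕ) : ∃ c : ℝ, 0 < c ∧ ∀ y : ℝ, 0 ≤ y →
    genWaveU4 l n y y = c * y ^ (2 * n + 2 * l + 2) := by
  refine ⟨∑ j ∈ Finset.range (n + 1),
    (Nat.choose (2 * n) (2 * j) : ℝ) *
      (Real.Gamma ((n : ℝ) + (1 - 2 * (j : ℝ)) / 2) * Real.Gamma ((2 * (j : ℝ) + 1) / 2) *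
          Real.Gamma (l + 1) ^ 2 /
        (2 ^ (2 * l + 3) * Real.Gamma (l + 3/2) ^ 2 *
          Real.Gamma ((n : ℝ) + l + (3 - 2 * (j : ℝ)) / 2) *
          Real.Gamma (l + (2 * (j : ℝ) + 3) / 2))), ?_, fun y hy => ?_⟩
  · apply Finset.sum_pos _ ⟨0, by simp⟩
    intro j hj
    have hjn : j ≤ n := by simpa [Nat.lt_succ_iff] using hj
    have hjr : (j : ℝ) ≤ n := by exact_mod_cast hjn
    have hj0 : (0 : ℝ) ≤ j := by positivity
    have h0 : (0 : ℝ) < (Nat.choose (2 * n) (2 * j) : ℝ) := by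
      exact_mod_cast Nat.choose_pos (by omega)
    have h1 := Real.Gamma_pos_of_pos (show (0:ℝ) < (n : ℝ) + (1 - 2 * (j : ℝ)) / 2 by linarith)
    have h2 := Real.Gamma_pos_of_pos (show (0:ℝ) < (2 * (j : ℝ) + 1) / 2 by linarith)
    have h3 := Real.Gamma_pos_of_pos (show (0:ℝ) < l + 3/2 by linarith)
    have h4 := Real.Gamma_pos_of_pos (show (0:ℝ) < l + 1 by linarith)
    have h5 := Real.Gamma_pos_of_pos
      (show (0:ℝ) < (n : ℝ) + l + (3 - 2 * (j : ℝ)) / 2 by linarith)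
    have h6 := Real.Gamma_pos_of_pos (show (0:ℝ) < l + (2 * (j : ℝ) + 3) / 2 by linarith)
    positivity
  · unfold genWaveU4
    rw [Finset.sum_mul]
    apply Finset.sum_congr rfl
    intro j hj
    have hjn : j ≤ n := by simpa [Nat.lt_succ_iff] using hj
    have hjr : (j : ℝ) ≤ n := by exact_mod_cast hjn
    have hj0 : (0 : ℝ) ≤ j := by positivity
    rw [mul_assoc _ (y ^ _) (y ^ _), ← Real.rpow_add_of_nonneg hy (by linarith) (by linarith)]
    congr 2; ring

/-- Any `g ∈ C¹([0,b],ℂ)` with `g(0) = g'(0) = 0` admits, for each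
`ε > 0`, an approximation of `g'` uniform on `[0,b]` by the derivative of the diagonal
trace of a linear combination `a₀U₀ + Σ_{κ=1}^N a_κ U_{4κ-1}`. -/
theorem stmt_14 (b l : ℝ) (hb : 0 < b) (hl : -(1/2) ≤ l)
    (g g' : ℝ → ℂ)
    (hg1 : ∀ x ∈ Set.Icc (0:ℝ) b, HasDerivWithinAt g (g' x) (Set.Icc 0 b) x)
    (hg'c : ContinuousOn g' (Set.Icc 0 b))
    (hg0 : g 0 = 0) (hg'0 : g' 0 = 0) :
    ∀ ε : ℝ, 0 < ε → ∃ (N : ℕ) (a : ℕ → ℂ),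
      ∀ x ∈ Set.Icc (0:ℝ) b,
        ‖g' x - derivWithin (fun y : ℝ =>
            a 0 * (genWaveU0 l y y : ℂ) +
              ∑ κ ∈ Finset.Icc 1 N, a κ * (genWaveU4 l κ y y : ℂ))
          (Set.Icc 0 b) x‖ ≤ ε := by
  intro ε hε
  obtain ⟨c0, hc0, hU0⟩ := aux_U0 l hl
  choose c hc hU4 using aux_U4 l hl
  have hα : (0:ℝ) ≤ 2 * l + 1 := by linarith
  obtain ⟨p, hp⟩ := aux_dense b (2 * l + 1) hb hα (fun x => (g' x).re)
    (Complex.continuous_re.comp_continuousOn hg'c) (by simp [hg'0]) (ε / 2) (by positivity)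
  obtain ⟨q, hq⟩ := aux_dense b (2 * l + 1) hb hα (fun x => (g' x).im)
    (Complex.continuous_im.comp_continuousOn hg'c) (by simp [hg'0]) (ε / 2) (by positivity)
  let C : ℕ → ℝ := fun n => if n = 0 then c0 else c n
  have hC : ∀ n, 0 < C n := by
    intro n
    by_cases h : n = 0
    · simpa [C, h] using hc0
    · simpa [C, h] using hc n
  let N := max p.natDegree q.natDegree
  let a : ℕ → ℂ := fun n => ((p.coeff n : ℂ) + (q.coeff n : ℂ) * Complex.I) /
    ((C n * (2 * n + 2 * l + 2) : ℝ) : ℂ)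
  refine ⟨N, a, fun x hx => ?_⟩
  have hfun : ∀ y ∈ Set.Icc (0:ℝ) b, a 0 * (genWaveU0 l y y : ℂ) +
      ∑ κ ∈ Finset.Icc 1 N, a κ * (genWaveU4 l κ y y : ℂ) =
      ∑ n ∈ Finset.range (N + 1), a n * ((C n * y ^ (2 * (n:ℝ) + 2 * l + 2) : ℝ) : ℂ) := by
    intro y hy
    rw [Finset.sum_range_succ', add_comm, hU0 y hy.1]
    congr 1
    · rw [Finset.range_eq_Ico, Finset.sum_Ico_add' (fun n : ℕ =>
        a n * ((C n * y ^ (2 * (n:ℝ) + 2 * l + 2) : ℝ) : ℂ)) 0 N 1]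
      have : Finset.Ico (0 + 1) (N + 1) = Finset.Icc 1 N := by ext; simp
      rw [this]
      apply Finset.sum_congr rfl
      intro n hn
      have hn0 : n ≠ 0 := by have := (Finset.mem_Icc.1 hn).1; omega
      rw [hU4 n y hy.1]
      simp [C, hn0]
    · simp [C]
  have hx0 := hx.1
  have hder : HasDerivWithinAt (fun y : ℝ =>
      ∑ n ∈ Finset.range (N + 1), a n * ((C n * y ^ (2 * (n:ℝ) + 2 * l + 2) : ℝ) : ℂ))
      (∑ n ∈ Finset.range (N + 1), a n *
        ((C n * ((2 * (n:ℝ) + 2 * l + 2) * x ^ (2 * (n:ℝ) + 2 * l + 2 - 1)) : ℝ) : ℂ))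
      (Set.Icc 0 b) x := by
    apply HasDerivWithinAt.fun_sum
    intro n hn
    have hn0 : (0 : ℝ) ≤ n := by positivity
    apply HasDerivWithinAt.const_mul
    apply HasDerivAt.hasDerivWithinAt
    apply HasDerivAt.ofReal_comp
    apply HasDerivAt.const_mul
    exact Real.hasDerivAt_rpow_const (Or.inr (by linarith))
  rw [derivWithin_congr hfun (hfun x hx), hder.derivWithin (uniqueDiffOn_Icc hb x hx)]
  have hval : (∑ n ∈ Finset.range (N + 1), a n *
        ((C n * ((2 * (n:ℝ) + 2 * l + 2) * x ^ (2 * (n:ℝ) + 2 * l + 2 - 1)) : ℝ) : ℂ)) =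
      ((x ^ (2 * l + 1) * p.eval (x ^ 2) : ℝ) : ℂ) +
        ((x ^ (2 * l + 1) * q.eval (x ^ 2) : ℝ) : ℂ) * Complex.I := by
    rw [Polynomial.eval_eq_sum_range' (lt_of_le_of_lt (le_max_left _ _) (Nat.lt_succ_self N)),
      Polynomial.eval_eq_sum_range' (lt_of_le_of_lt (le_max_right _ _) (Nat.lt_succ_self N)),
      Finset.mul_sum, Finset.mul_sum, Complex.ofReal_sum, Complex.ofReal_sum, Finset.sum_mul,
      ← Finset.sum_add_distrib]
    apply Finset.sum_congr rfl
    intro n hn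
    have hn0 : (0 : ℝ) ≤ n := by positivity
    have hpow : x ^ (2 * (n:ℝ) + 2 * l + 2 - 1) = x ^ (2 * l + 1) * (x ^ 2) ^ n := by
      rw [← pow_mul, ← Real.rpow_natCast, ← Real.rpow_add_of_nonneg hx0 hα (by positivity)]
      congr 1; push_cast; ring
    have hne : ((C n * (2 * n + 2 * l + 2) : ℝ) : ℂ) ≠ 0 := by
      have h1 := hC n
      have h2 : 0 < 2 * (n:ℝ) + 2 * l + 2 := by linarith
      exact_mod_cast (mul_pos h1 h2).ne'
    rw [hpow, ← mul_assoc (C n), Complex.ofReal_mul (C n * _), ← mul_assoc, div_mul_cancel₀ _ hne]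
    push_cast
    ring
  rw [hval]
  have h1 := hp x hx
  have h2 := hq x hx
  refine (Complex.norm_le_abs_re_add_abs_im _).trans ?_
  simp only [Complex.sub_re, Complex.sub_im, Complex.add_re, Complex.add_im, Complex.ofReal_re,
    Complex.ofReal_im, Complex.re_ofReal_mul, Complex.im_ofReal_mul, Complex.I_re, Complex.I_im,
    mul_zero, mul_one, add_zero, zero_add]
  linarith
end
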